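/- Let K = GF(q) be a finite field with q ≡ 3 (mod 4) and (V, f) a finite-dimensional nondegenerate symmetric bilinear space over K. Let φ ∈ Ω(V) be reversible in Ω(V). Then φ is bireflectional in Ω(V) if and only if the image of φ in PΩ(V) = Ω(V)/(Ω(V) ∩ {id, −id}) is bireflectional in PΩ(V). -/

import Mathlib

open Polynomial Module

namespace Biref

variable {K V : Type*} [Field K] [AddCommGroup V] [Module K V]

/-- The orthogonal group of a bilinear form: all linear automorphisms preserving `f`. -/
def orthGroup (f : LinearMap.BilinForm K V) : Subgroup (V ≃ₗ[K] V) where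
  carrier := {φ | ∀ x y : V, f (φ x) (φ y) = f x y}
  one_mem' := fun _ _ => rfl
  mul_mem' := by
    intro a b ha hb x y
    simpa using (ha (b x) (b y)).trans (hb x y)
  inv_mem' := by
    intro a ha x y
    show f (a.symm x) (a.symm y) = f x y
    conv_rhs => rw [← a.apply_symm_apply x, ← a.apply_symm_apply y]
    exact (ha _ _).symm

/-- The special orthogonal group: isometries of determinant 1. -/
def specialOrthGroup (f : LinearMap.BilinForm K V) : Subgroup (V ≃ₗ[K] V) where
  carrier := {φ | (∀ x y : V, f (φ x) (φ y) = f x y) ∧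
      LinearMap.det (φ : V →ₗ[K] V) = 1}
  one_mem' := ⟨fun _ _ => rfl, by simp⟩
  mul_mem' := by
    rintro a b ⟨ha, ha'⟩ ⟨hb, hb'⟩
    refine ⟨fun x y => by simpa using (ha (b x) (b y)).trans (hb x y), ?_⟩
    rw [LinearEquiv.coe_toLinearMap_mul, map_mul, ha', hb', one_mul]
  inv_mem' := by
    rintro a ⟨ha, ha'⟩
    refine ⟨fun x y => ?_, ?_⟩
    · show f (a.symm x) (a.symm y) = f x y
      conv_rhs => rw [← a.apply_symm_apply x, ← a.apply_symm_apply y]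
      exact (ha _ _).symm
    · have h1 : LinearMap.det ((a⁻¹ * a : V ≃ₗ[K] V) : V →ₗ[K] V) = 1 := by
        rw [inv_mul_cancel, LinearEquiv.coe_toLinearMap_one, LinearMap.det_id]
      rw [LinearEquiv.coe_toLinearMap_mul, map_mul, ha', mul_one] at h1
      exact h1

/-- The commutator subgroup `Ω(V)` of the orthogonal group. -/
def omegaGroup (f : LinearMap.BilinForm K V) : Subgroup (V ≃ₗ[K] V) :=
  ⁅orthGroup f, orthGroup f⁆

/-- `g` is a product of two involutions lying in the subgroup `H`. -/
def IsBireflectionalIn {G : Type*} [Group G] (H : Subgroup G) (g : G) : Prop :=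
  ∃ σ τ : G, σ ∈ H ∧ τ ∈ H ∧ σ ^ 2 = 1 ∧ τ ^ 2 = 1 ∧ g = σ * τ

/-- `g` is bireflectional in the group `G`. -/
def IsBireflectional {G : Type*} [Group G] (g : G) : Prop :=
  ∃ σ τ : G, σ ^ 2 = 1 ∧ τ ^ 2 = 1 ∧ g = σ * τ

/-- `g` is reversed by some element of `H`. -/
def IsReversibleIn {G : Type*} [Group G] (H : Subgroup G) (g : G) : Prop :=
  ∃ α : G, α ∈ H ∧ α * g * α⁻¹ = g⁻¹

/-- A subspace is invariant under an endomorphism. -/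
def Invt (ψ : V →ₗ[K] V) (U : Submodule K V) : Prop :=
  ∀ x ∈ U, ψ x ∈ U

/-- The discriminant of a (finite-dimensional, nondegenerate) bilinear space is the class
of `d` in `K*/(K*)²`: some Gram determinant equals `d` times a nonzero square. -/
def HasDisc (f : LinearMap.BilinForm K V) (d : K) : Prop :=
  ∃ (b : Basis (Fin (Module.finrank K V)) K V) (c : Kˣ),
    (Matrix.of fun i j => f (b i) (b j)).det = d * (c : K) ^ 2

/-- A nondegenerate symmetric bilinear space is hyperbolic iff its Witt index is half its
dimension, i.e. there is a totally isotropic subspace of half the dimension. -/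
def IsHyperbolicSpace (f : LinearMap.BilinForm K V) : Prop :=
  ∃ W : Submodule K V, (∀ x ∈ W, ∀ y ∈ W, f x y = 0) ∧
    2 * Module.finrank K W = Module.finrank K V

/-- The multiplicity of `p ^ d` as an elementary divisor of `φ`. -/
noncomputable def edMult (φ : Module.End K V) (p : K[X]) (d : ℕ) : ℕ :=
  (2 * Module.finrank K (LinearMap.ker (Polynomial.aeval φ p ^ d))
    - Module.finrank K (LinearMap.ker (Polynomial.aeval φ p ^ (d + 1)))
    - Module.finrank K (LinearMap.ker (Polynomial.aeval φ p ^ (d - 1)))) / p.natDegree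

/-- `n_j(φ)`: the number of elementary divisors `(x ± 1) ^ d` of `φ` with `d ≡ j mod 8`,
counted with multiplicity. -/
noncomputable def nPM [FiniteDimensional K V] (φ : Module.End K V) (j : ℕ) : ℕ :=
  ∑ d ∈ Finset.range (Module.finrank K V + 1),
    if d % 8 = j % 8 then edMult φ (X - 1) d + edMult φ (X + 1) d else 0

/-- The Fitting one space `Bahn^∞(ψ) = ⋂ⱼ im (ψ - 1)^j`. -/
noncomputable def bahnInf (ψ : Module.End K V) : Submodule K V :=
  ⨅ j : ℕ, LinearMap.range ((ψ - 1) ^ j)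

/-- The `K[x]`-submodule generated by `v` (`x` acting as `ψ`). -/
def cycSub (ψ : Module.End K V) (v : V) : Submodule K V :=
  Submodule.span K (Set.range fun n : ℕ => (ψ ^ n) v)

/-- `V` is a cyclic `K[x]`-module, `x` acting as `ψ`. -/
def IsCyclicEnd (ψ : Module.End K V) : Prop :=
  ∃ v : V, cycSub ψ v = ⊤

/-- `V` is a direct sum of two cyclic `K[x]`-submodules, `x` acting as `ψ`. -/
def IsBicyclicEnd (ψ : Module.End K V) : Prop :=
  ∃ v w : V, cycSub ψ v ⊓ cycSub ψ w = ⊥ ∧ cycSub ψ v ⊔ cycSub ψ w = ⊤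

/-- `V` is an indecomposable `K[x]`-module, `x` acting as `ψ`. -/
def ModIndec (ψ : Module.End K V) : Prop :=
  (⊥ : Submodule K V) ≠ ⊤ ∧
    ¬∃ A B : Submodule K V, Invt ψ A ∧ Invt ψ B ∧ A ≠ ⊥ ∧ B ≠ ⊥ ∧ A ⊓ B = ⊥ ∧ A ⊔ B = ⊤

/-- `ψ` is orthogonally indecomposable w.r.t. `f`: `V ≠ 0` and the only nondegenerate
invariant subspaces are `0` and `V`. -/
def OrthIndec (f : LinearMap.BilinForm K V) (ψ : Module.End K V) : Prop :=
  (⊥ : Submodule K V) ≠ ⊤ ∧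
    ∀ U : Submodule K V, Invt ψ U → (f.restrict U).Nondegenerate → U = ⊥ ∨ U = ⊤

/-- The Witt index: the dimension of a maximal totally isotropic subspace. -/
noncomputable def wittIndex (f : LinearMap.BilinForm K V) : ℕ :=
  sSup {n | ∃ W : Submodule K V, (∀ x ∈ W, ∀ y ∈ W, f x y = 0) ∧ Module.finrank K W = n}


/-- The subgroup `Ω(V) ∩ {id, -id}` of `Ω(V)`. -/
def pmOne (f : LinearMap.BilinForm K V) : Subgroup ↥(omegaGroup f) where
  carrier := {x | (∀ v : V, (x : V ≃ₗ[K] V) v = v) ∨ (∀ v : V, (x : V ≃ₗ[K] V) v = -v)}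
  one_mem' := Or.inl fun _ => rfl
  mul_mem' := by
    rintro a b (ha | ha) (hb | hb)
    · refine Or.inl fun v => ?_
      show (a : V ≃ₗ[K] V) ((b : V ≃ₗ[K] V) v) = v
      rw [hb, ha]
    · refine Or.inr fun v => ?_
      show (a : V ≃ₗ[K] V) ((b : V ≃ₗ[K] V) v) = -v
      rw [hb, map_neg, ha]
    · refine Or.inr fun v => ?_
      show (a : V ≃ₗ[K] V) ((b : V ≃ₗ[K] V) v) = -v
      rw [hb, ha]
    · refine Or.inl fun v => ?_
      show (a : V ≃ₗ[K] V) ((b : V ≃ₗ[K] V) v) = v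
      rw [hb, map_neg, ha, neg_neg]
  inv_mem' := by
    rintro a (ha | ha)
    · refine Or.inl fun v => ?_
      show ((a : V ≃ₗ[K] V)).symm v = v
      rw [LinearEquiv.symm_apply_eq, ha]
    · refine Or.inr fun v => ?_
      show ((a : V ≃ₗ[K] V)).symm v = -v
      rw [LinearEquiv.symm_apply_eq, map_neg, ha, neg_neg]

instance pmOne_normal (f : LinearMap.BilinForm K V) : (pmOne f).Normal := by
  constructor
  rintro x (hx | hx) g
  · refine Or.inl fun v => ?_
    show (g : V ≃ₗ[K] V) ((x : V ≃ₗ[K] V) (((g : V ≃ₗ[K] V)).symm v)) = v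
    rw [hx]
    exact (g : V ≃ₗ[K] V).apply_symm_apply v
  · refine Or.inr fun v => ?_
    show (g : V ≃ₗ[K] V) ((x : V ≃ₗ[K] V) (((g : V ≃ₗ[K] V)).symm v)) = -v
    rw [hx, map_neg, (g : V ≃ₗ[K] V).apply_symm_apply v]

end Biref

/-!
Put `c = φ + φ⁻¹` and `N = φ - φ⁻¹`. Being bireflectional in `Ω(V)` means having a *reverser* in
`Ω(V)`: an isometric involution which commutes with `c` and anticommutes with `N`. If `φ` is
bireflectional in `PΩ(V)`, then `φ = ± s t` with `s, t ∈ Ω(V)` and `s² = ± 1`, `t² = ± 1`.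

* If `s² = t² = 1`, then `s` is a reverser.
* If `s² = t² = -1`, then `s` commutes with `c`, anticommutes with `N` and is skew. As `-1` is not a
  square, each indecomposable summand has generators which are orthogonal to their images under
  `s`, so it splits into two orthogonal halves exchanged by `s`. A reverser is obtained as a
  commutator of `s` with an isometry supported on one half.
* Otherwise one of `s`, `t`, say `s`, is an involution which anticommutes with `c` and commutes
  with `N`. On an indecomposable summand `N` is nilpotent or invertible, and `c` likewise.
  - If `N` is nilpotent, the generalized eigenspaces of `c` for `2` and `-2` are exchanged by `s`,
    and a commutator works again.
  - If `N` and `c` are invertible, a solution of `h(c) h(-c) = -1`, which exists because `K` is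
    finite, turns `s` into a skew operator as in the previous case.
  - If `c` is nilpotent with `c ^ (n + 1) = 0 ≠ c ^ n`, there is a reverser in `Ω(V)` for `n` odd,
    while for `n` even there are reversers in both cosets of `Ω(V)` containing reflections.

  Two cosets of reflections cancel, so at worst the part of `V` where `N` is invertible has
  reversers only in these cosets. All isometries of that part which reverse `φ` then have
  determinant `-1`, so a reversing isometry of determinant `1` has determinant `-1` on the part
  where `N` is nilpotent. This forces a summand of odd dimension there, and changing the sign of a
  reverser on it yields one in a coset of reflections to cancel the first.
-/

namespace Biref

universe u v

variable {K : Type u} [Field K] {V A B : Type v} [AddCommGroup V] [Module K V]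
  [AddCommGroup A] [Module K A] [AddCommGroup B] [Module K B]

/-! ### Adjoint pairs and isometries -/

/-- A nondegenerate symmetric bilinear form. -/
structure IsQuadSpace (f : LinearMap.BilinForm K V) : Prop where
  isSymm : f.IsSymm
  nondegenerate : f.Nondegenerate

/-- `t` is the adjoint of `s` with respect to `f`. -/
abbrev AdjPair (f : LinearMap.BilinForm K V) (s t : End K V) : Prop :=
  LinearMap.IsAdjointPair f f s t

/-- `g` is an isometry of `f` with inverse `g'`. Carrying the inverse along lets isometries be
added to and multiplied with arbitrary endomorphisms. -/
structure IsometryPair (f : LinearMap.BilinForm K V) (g g' : End K V) : Prop where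
  adj : AdjPair f g g'
  mul_inv : g * g' = 1
  inv_mul : g' * g = 1

/-- The endomorphism `g` is (the linear map underlying) an element of `Ω(V)`. -/
def InOmega (f : LinearMap.BilinForm K V) (g : End K V) : Prop :=
  ∃ e ∈ omegaGroup f, (e : V →ₗ[K] V) = g

section Adjoint

variable {f : LinearMap.BilinForm K V} {s t g g' h h' : End K V}

lemma IsQuadSpace.symm (hf : IsQuadSpace f) (x y : V) : f x y = f y x := hf.isSymm.eq x y

lemma IsQuadSpace.eq_zero (hf : IsQuadSpace f) {x : V} (hx : ∀ y, f x y = 0) : x = 0 :=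
  hf.nondegenerate.1 x hx

lemma IsQuadSpace.ext (hf : IsQuadSpace f) {x x' : V} (h : ∀ y, f x y = f x' y) : x = x' :=
  sub_eq_zero.mp (hf.eq_zero fun y => by rw [map_sub, LinearMap.sub_apply, h, sub_self])

lemma AdjPair.neg (hst : AdjPair f s t) : AdjPair f (-s) (-t) := fun x y => by
  simpa using hst x y

lemma AdjPair.pow (hst : AdjPair f s t) (n : ℕ) : AdjPair f (s ^ n) (t ^ n) := by
  induction n with
  | zero => exact LinearMap.isAdjointPair_one
  | succ n ih => rw [pow_succ, pow_succ']; exact ih.mul hst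

lemma AdjPair.aeval (hst : AdjPair f s t) (p : K[X]) : AdjPair f (aeval s p) (aeval t p) := by
  induction p using Polynomial.induction_on' with
  | add p p' hp hp' => simp only [map_add]; exact hp.add hp'
  | monomial n a =>
    simp only [aeval_monomial, ← Algebra.smul_def]
    exact (hst.pow n).smul a

lemma AdjPair.symm (hf : IsQuadSpace f) (hst : AdjPair f s t) : AdjPair f t s := fun x y => by
  rw [hf.symm, ← hst, hf.symm]

lemma AdjPair.exists [FiniteDimensional K V] (hf : IsQuadSpace f) (s : End K V) :
    ∃ t, AdjPair f s t :=
  ⟨_, AdjPair.symm hf (f.isAdjointPairLeftAdjointOfNondegenerate hf.nondegenerate s)⟩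

namespace IsometryPair

lemma one : IsometryPair f 1 1 := ⟨LinearMap.isAdjointPair_one, one_mul 1, one_mul 1⟩

lemma mul (hg : IsometryPair f g g') (hh : IsometryPair f h h') :
    IsometryPair f (g * h) (h' * g') where
  adj := hg.adj.mul hh.adj
  mul_inv := by rw [mul_assoc, ← mul_assoc h, hh.mul_inv, one_mul, hg.mul_inv]
  inv_mul := by rw [mul_assoc, ← mul_assoc g', hg.inv_mul, one_mul, hh.inv_mul]

lemma map_map (hg : IsometryPair f g g') (x y : V) : f (g x) (g y) = f x y := by
  rw [hg.adj, ← End.mul_apply, hg.inv_mul, End.one_apply]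

lemma symm (hg : IsometryPair f g g') : IsometryPair f g' g where
  adj x y := by rw [← hg.map_map, ← End.mul_apply, hg.mul_inv, End.one_apply]
  mul_inv := hg.inv_mul
  inv_mul := hg.mul_inv

lemma of_map_map [FiniteDimensional K V] (hf : IsQuadSpace f)
    (hg : ∀ x y, f (g x) (g y) = f x y) : ∃ g', IsometryPair f g g' := by
  obtain ⟨t, ht⟩ := AdjPair.exists hf g
  have htg : t * g = 1 := LinearMap.ext fun x => hf.ext fun y => by
    rw [hf.symm, End.mul_apply, ← ht, hg, hf.symm, End.one_apply]
  exact ⟨t, ht, mul_eq_one_comm.mp htg, htg⟩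

lemma of_mem_orthGroup {e : V ≃ₗ[K] V} (he : e ∈ orthGroup f) :
    IsometryPair f (e : End K V) ((e⁻¹ : V ≃ₗ[K] V) : End K V) where
  adj x y := by
    rw [← he x]
    exact congrArg _ (e.apply_symm_apply y).symm
  mul_inv := LinearMap.ext e.apply_symm_apply
  inv_mul := LinearMap.ext e.symm_apply_apply

lemma det_mul_det (hg : IsometryPair f g g') : LinearMap.det g * LinearMap.det g' = 1 := by
  rw [← map_mul, hg.mul_inv, map_one]

/-- The element of `V ≃ₗ[K] V` given by an isometry and its inverse. -/
def toEquiv (hg : IsometryPair f g g') : V ≃ₗ[K] V :=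
  LinearEquiv.ofLinearMap g g' hg.mul_inv hg.inv_mul

lemma toEquiv_mem (hg : IsometryPair f g g') : hg.toEquiv ∈ orthGroup f := hg.map_map

end IsometryPair

end Adjoint

/-! ### Membership in `Ω(V)` -/

namespace InOmega

variable {f : LinearMap.BilinForm K V} {g g' h h' : End K V}

lemma one : InOmega f 1 := ⟨1, one_mem _, rfl⟩

lemma mul (hg : InOmega f g) (hh : InOmega f h) : InOmega f (g * h) := by
  obtain ⟨e, he, rfl⟩ := hg
  obtain ⟨e', he', rfl⟩ := hh
  exact ⟨e * e', mul_mem he he', rfl⟩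

lemma commutator (hg : IsometryPair f g g') (hh : IsometryPair f h h') :
    InOmega f (g * h * g' * h') :=
  ⟨_, Subgroup.commutator_mem_commutator hg.toEquiv_mem hh.toEquiv_mem, rfl⟩

lemma exists_isometryPair (hg : InOmega f g) : ∃ g', IsometryPair f g g' := by
  obtain ⟨e, he, rfl⟩ := hg
  exact ⟨_, .of_mem_orthGroup (Subgroup.commutator_le_self _ he)⟩

lemma det (hg : InOmega f g) : LinearMap.det g = 1 := by
  obtain ⟨e, he, rfl⟩ := hg
  have hle : omegaGroup f ≤ (LinearEquiv.det (R := K) (M := V)).ker :=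
    (Subgroup.commutator_mono le_top le_top).trans
      (Abelianization.commutator_subset_ker _)
  simpa using congrArg Units.val (MonoidHom.mem_ker.mp (hle he))

lemma map {f' : LinearMap.BilinForm K A} (F : End K V →* End K A)
    (hF : ∀ g g', IsometryPair f g g' → IsometryPair f' (F g) (F g')) (hg : InOmega f g) :
    InOmega f' (F g) := by
  obtain ⟨e, he, rfl⟩ := hg
  let Φ : (V ≃ₗ[K] V) →* (A ≃ₗ[K] A) :=
    (LinearMap.GeneralLinearGroup.generalLinearEquiv K A).toMonoidHom.comp <|
      (Units.map F).comp (LinearMap.GeneralLinearGroup.generalLinearEquiv K V).symm.toMonoidHom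
  have hΦ : (orthGroup f).map Φ ≤ orthGroup f' := by
    rintro _ ⟨a, ha, rfl⟩
    exact (hF _ _ (.of_mem_orthGroup ha)).map_map
  have hmem : Φ e ∈ (omegaGroup f).map Φ := Subgroup.mem_map_of_mem _ he
  rw [omegaGroup, Subgroup.map_commutator] at hmem
  exact ⟨Φ e, Subgroup.commutator_mono hΦ hΦ hmem, rfl⟩

end InOmega

/-! ### Orthogonal decompositions -/

/-- An orthogonal decomposition of `(V, f)` into `(A, fA)` and `(B, fB)`. -/
structure OrthSum (f : LinearMap.BilinForm K V) (fA : LinearMap.BilinForm K A)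
    (fB : LinearMap.BilinForm K B) where
  equiv : (A × B) ≃ₗ[K] V
  form_apply : ∀ x y, f (equiv x) (equiv y) = fA x.1 y.1 + fB x.2 y.2

namespace OrthSum

variable {f : LinearMap.BilinForm K V} {fA : LinearMap.BilinForm K A}
  {fB : LinearMap.BilinForm K B} (D : OrthSum f fA fB)

/-- The endomorphism of `V` acting as `x.1` on `A` and as `x.2` on `B`. -/
def glue : End K A × End K B →ₐ[K] End K V :=
  (D.equiv.conjAlgEquiv K).toAlgHom.comp (LinearMap.prodMapAlgHom K A B)

lemma glue_apply (x : End K A × End K B) (v : A × B) :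
    D.glue x (D.equiv v) = D.equiv (x.1 v.1, x.2 v.2) := by
  simp [glue, LinearEquiv.conjAlgEquiv_apply]

lemma glue_injective : Function.Injective D.glue := fun x y hxy => by
  have hv (v : A × B) : (x.1 v.1, x.2 v.2) = (y.1 v.1, y.2 v.2) := D.equiv.injective <| by
    rw [← glue_apply, ← glue_apply, hxy]
  exact Prod.ext (LinearMap.ext fun a => congrArg Prod.fst (hv (a, 0)))
    (LinearMap.ext fun b => congrArg Prod.snd (hv (0, b)))

lemma adjPair_glue_iff {x y : End K A × End K B} :
    AdjPair f (D.glue x) (D.glue y) ↔ AdjPair fA x.1 y.1 ∧ AdjPair fB x.2 y.2 := by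
  refine ⟨fun h => ⟨fun a a' => ?_, fun b b' => ?_⟩, fun ⟨hA, hB⟩ => ?_⟩
  · simpa [glue_apply, form_apply] using h (D.equiv (a, 0)) (D.equiv (a', 0))
  · simpa [glue_apply, form_apply] using h (D.equiv (0, b)) (D.equiv (0, b'))
  · refine D.equiv.surjective.forall₂.mpr fun v w => ?_
    rw [glue_apply, glue_apply, form_apply, form_apply, hA, hB]

lemma isometryPair_glue {g g' : End K A} {h h' : End K B} (hg : IsometryPair fA g g')
    (hh : IsometryPair fB h h') : IsometryPair f (D.glue (g, h)) (D.glue (g', h')) where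
  adj := D.adjPair_glue_iff.mpr ⟨hg.adj, hh.adj⟩
  mul_inv := by rw [← map_mul, Prod.mk_mul_mk, hg.mul_inv, hh.mul_inv]; exact map_one _
  inv_mul := by rw [← map_mul, Prod.mk_mul_mk, hg.inv_mul, hh.inv_mul]; exact map_one _

lemma inOmega_glue {g : End K A} {h : End K B} (hg : InOmega fA g) (hh : InOmega fB h) :
    InOmega f (D.glue (g, h)) := by
  have hA : InOmega f (D.glue (g, 1)) :=
    hg.map ((D.glue : End K A × End K B →* End K V).comp (MonoidHom.inl _ _))
      fun _ _ hi => D.isometryPair_glue hi .one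
  have hB : InOmega f (D.glue (1, h)) :=
    hh.map ((D.glue : End K A × End K B →* End K V).comp (MonoidHom.inr _ _))
      fun _ _ hi => D.isometryPair_glue .one hi
  simpa [← map_mul] using hA.mul hB

lemma isQuadSpace_left (D : OrthSum f fA fB) (hf : IsQuadSpace f) : IsQuadSpace fA := by
  have hsymm (a a' : A) : fA a a' = fA a' a := by
    simpa [form_apply] using hf.symm (D.equiv (a, 0)) (D.equiv (a', 0))
  have hker (a : A) (ha : ∀ a', fA a a' = 0) : a = 0 := by
    have h0 : D.equiv (a, 0) = 0 := hf.eq_zero <| D.equiv.surjective.forall.mpr fun v => by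
      simp [form_apply, ha]
    exact congrArg Prod.fst (D.equiv.map_eq_zero_iff.mp h0)
  exact ⟨⟨hsymm⟩, hker, fun a ha => hker a fun a' => by rw [hsymm, ha]⟩

/-- The same decomposition with the summands exchanged. -/
def swap : OrthSum f fB fA where
  equiv := (LinearEquiv.prodComm K B A).trans D.equiv
  form_apply x y := by simp [form_apply, add_comm]

lemma swap_glue (x : End K A × End K B) : D.swap.glue x.swap = D.glue x := by
  refine LinearMap.ext (D.swap.equiv.surjective.forall.mpr fun v => ?_)
  rw [glue_apply]
  simp [swap, glue_apply]

lemma isQuadSpace_right (D : OrthSum f fA fB) (hf : IsQuadSpace f) : IsQuadSpace fB :=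
  D.swap.isQuadSpace_left hf

lemma det_glue [FiniteDimensional K A] [FiniteDimensional K B] (x : End K A × End K B) :
    LinearMap.det (D.glue x) = LinearMap.det x.1 * LinearMap.det x.2 :=
  (LinearMap.det_conj (x.1.prodMap x.2) D.equiv).trans (LinearMap.det_prodMap ..)

lemma finrank_eq [FiniteDimensional K A] [FiniteDimensional K B] (D : OrthSum f fA fB) :
    finrank K V = finrank K A + finrank K B := by
  rw [← D.equiv.finrank_eq, finrank_prod]

end OrthSum

section Internal

variable {f : LinearMap.BilinForm K V} {U W : Submodule K V}

/-- The restriction of the symmetric form `f` to `U` is nondegenerate. -/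
def NondegOn (f : LinearMap.BilinForm K V) (U : Submodule K V) : Prop :=
  ∀ x ∈ U, (∀ y ∈ U, f x y = 0) → x = 0

lemma NondegOn.isCompl_orthogonal [FiniteDimensional K V] (hf : IsQuadSpace f)
    (hU : NondegOn f U) : IsCompl U (f.orthogonal U) := by
  rw [LinearMap.BilinForm.isCompl_orthogonal_iff_disjoint hf.isSymm.isRefl,
    Submodule.disjoint_def]
  exact fun x hx hx' => hU x hx fun y hy => by rw [hf.symm]; exact hx' y hy

/-- The orthogonal decomposition given by complementary orthogonal subspaces. -/
noncomputable def OrthSum.ofIsCompl (hf : IsQuadSpace f) (hUW : IsCompl U W)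
    (ho : ∀ u ∈ U, ∀ w ∈ W, f u w = 0) : OrthSum f (f.restrict U) (f.restrict W) where
  equiv := U.prodEquivOfIsCompl W hUW
  form_apply x y := by
    have hWU : f x.2 y.1 = 0 := by rw [hf.symm]; exact ho _ y.1.2 _ x.2.2
    simp [ho _ x.1.2 _ y.2.2, hWU]

lemma OrthSum.exists_glue_ofIsCompl (hf : IsQuadSpace f) (hUW : IsCompl U W)
    (ho : ∀ u ∈ U, ∀ w ∈ W, f u w = 0) {X : End K V} (hU : ∀ x ∈ U, X x ∈ U)
    (hW : ∀ x ∈ W, X x ∈ W) : ∃ x, (OrthSum.ofIsCompl hf hUW ho).glue x = X :=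
  ⟨(X.restrict hU, X.restrict hW), LinearMap.ext <|
    (OrthSum.ofIsCompl hf hUW ho).equiv.surjective.forall.mpr fun v => by
      rw [OrthSum.glue_apply]
      simp [OrthSum.ofIsCompl]⟩

/-- The decomposition of `V` into a nondegenerate subspace and its orthogonal complement. -/
noncomputable def OrthSum.ofNondegOn [FiniteDimensional K V] (hf : IsQuadSpace f)
    (hU : NondegOn f U) : OrthSum f (f.restrict U) (f.restrict (f.orthogonal U)) :=
  OrthSum.ofIsCompl hf (hU.isCompl_orthogonal hf) fun u hu _ hw => hw u hu

lemma OrthSum.exists_glue_ofNondegOn [FiniteDimensional K V] (hf : IsQuadSpace f)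
    (hU : NondegOn f U) {X : End K V} {δ : K} (hX : AdjPair f X (δ • X))
    (hXU : ∀ x ∈ U, X x ∈ U) : ∃ x, (OrthSum.ofNondegOn hf hU).glue x = X :=
  OrthSum.exists_glue_ofIsCompl _ _ _ hXU fun x hx y hy => by
    change f y (X x) = 0
    rw [hf.symm, hX, LinearMap.smul_apply, map_smul, hf.symm, hx _ (hXU y hy), smul_zero]

end Internal

/-! ### Reversing systems and indecomposability -/

/-- The relations between `c = φ + φ⁻¹`, `N = φ - φ⁻¹` and an operator `s` with `s² = ε₃` and
`s* = ε₃ s` which commutes with `c` and `N` up to the signs `ε₁` and `ε₂`. -/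
structure RevSystem (f : LinearMap.BilinForm K V) (c N s : End K V) (ε₁ ε₂ ε₃ : K) : Prop where
  quad : IsQuadSpace f
  adj_c : AdjPair f c c
  adj_N : AdjPair f N (-N)
  adj_s : AdjPair f s (ε₃ • s)
  comm : c * N = N * c
  N_mul_N : N * N = c * c - (4 : K) • 1
  s_mul_c : s * c = ε₁ • (c * s)
  s_mul_N : s * N = ε₂ • (N * s)
  s_mul_s : s * s = ε₃ • 1

/-- No proper nonzero subspace stable under `c`, `N` and `s` is nondegenerate. -/
def IsIndecomposable (f : LinearMap.BilinForm K V) (c N s : End K V) : Prop :=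
  ∀ U : Submodule K V, (∀ x ∈ U, c x ∈ U) → (∀ x ∈ U, N x ∈ U) → (∀ x ∈ U, s x ∈ U) →
    NondegOn f U → U = ⊥ ∨ U = ⊤

section System

variable {f : LinearMap.BilinForm K V} {fA : LinearMap.BilinForm K A}
  {fB : LinearMap.BilinForm K B} {ε₁ ε₂ ε₃ : K}

lemma RevSystem.left (D : OrthSum f fA fB) {c N s : End K A × End K B}
    (S : RevSystem f (D.glue c) (D.glue N) (D.glue s) ε₁ ε₂ ε₃) :
    RevSystem fA c.1 N.1 s.1 ε₁ ε₂ ε₃ := by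
  obtain ⟨quad, adj_c, adj_N, adj_s, comm, hNN, hsc, hsN, hss⟩ := S
  rw [← map_neg] at adj_N
  rw [← map_smul] at adj_s
  rw [← map_one D.glue] at hNN hss
  simp only [← map_mul, ← map_smul, ← map_sub] at comm hNN hsc hsN hss
  have fst_eq {x y : End K A × End K B} (h : D.glue x = D.glue y) : x.1 = y.1 :=
    congrArg Prod.fst (D.glue_injective h)
  exact ⟨D.isQuadSpace_left quad, (D.adjPair_glue_iff.mp adj_c).1,
    (D.adjPair_glue_iff.mp adj_N).1, (D.adjPair_glue_iff.mp adj_s).1, fst_eq comm, fst_eq hNN,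
    fst_eq hsc, fst_eq hsN, fst_eq hss⟩

lemma RevSystem.right (D : OrthSum f fA fB) {c N s : End K A × End K B}
    (S : RevSystem f (D.glue c) (D.glue N) (D.glue s) ε₁ ε₂ ε₃) :
    RevSystem fB c.2 N.2 s.2 ε₁ ε₂ ε₃ := by
  rw [← D.swap_glue, ← D.swap_glue N, ← D.swap_glue s] at S
  exact S.left

lemma RevSystem.exists_glue [FiniteDimensional K V] {c N s : End K V} {U : Submodule K V}
    (S : RevSystem f c N s ε₁ ε₂ ε₃) (hf : IsQuadSpace f) (hc : ∀ x ∈ U, c x ∈ U)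
    (hN : ∀ x ∈ U, N x ∈ U) (hs : ∀ x ∈ U, s x ∈ U) (hU : NondegOn f U) :
    ∃ c' N' s', (OrthSum.ofNondegOn hf hU).glue c' = c ∧
      (OrthSum.ofNondegOn hf hU).glue N' = N ∧ (OrthSum.ofNondegOn hf hU).glue s' = s := by
  have adj_c : AdjPair f c ((1 : K) • c) := by rw [one_smul]; exact S.adj_c
  have adj_N : AdjPair f N ((-1 : K) • N) := by rw [neg_one_smul]; exact S.adj_N
  obtain ⟨c', hc'⟩ := OrthSum.exists_glue_ofNondegOn hf hU adj_c hc
  obtain ⟨N', hN'⟩ := OrthSum.exists_glue_ofNondegOn hf hU adj_N hN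
  obtain ⟨s', hs'⟩ := OrthSum.exists_glue_ofNondegOn hf hU S.adj_s hs
  exact ⟨c', N', s', hc', hN', hs'⟩

theorem RevSystem.induction
    {P : ∀ (V : Type v) [AddCommGroup V] [Module K V],
      LinearMap.BilinForm K V → End K V → End K V → End K V → Prop}
    (glue : ∀ (V A B : Type v) [AddCommGroup V] [Module K V] [AddCommGroup A] [Module K A]
      [AddCommGroup B] [Module K B] [FiniteDimensional K A] [FiniteDimensional K B]
      (f : LinearMap.BilinForm K V) (fA : LinearMap.BilinForm K A)
      (fB : LinearMap.BilinForm K B) (D : OrthSum f fA fB) (c N s : End K A × End K B),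
      IsQuadSpace f → P A fA c.1 N.1 s.1 → P B fB c.2 N.2 s.2 →
      P V f (D.glue c) (D.glue N) (D.glue s))
    (zero : ∀ (V : Type v) [AddCommGroup V] [Module K V] [Subsingleton V]
      (f : LinearMap.BilinForm K V) (c N s : End K V), P V f c N s)
    (indec : ∀ (V : Type v) [AddCommGroup V] [Module K V] [FiniteDimensional K V]
      [Nontrivial V] (f : LinearMap.BilinForm K V) (c N s : End K V),
      RevSystem f c N s ε₁ ε₂ ε₃ → IsIndecomposable f c N s → P V f c N s)
    (V : Type v) [AddCommGroup V] [Module K V] [FiniteDimensional K V]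
    (f : LinearMap.BilinForm K V) (c N s : End K V) (S : RevSystem f c N s ε₁ ε₂ ε₃) :
    P V f c N s := by
  induction hn : finrank K V using Nat.strong_induction_on generalizing V with
  | _ n ih =>
    subst hn
    rcases subsingleton_or_nontrivial V with _ | _
    · exact zero V f c N s
    by_cases hI : IsIndecomposable f c N s
    · exact indec V f c N s S hI
    simp only [IsIndecomposable] at hI
    push Not at hI
    obtain ⟨U, hc, hN, hs, hU, hbot, htop⟩ := hI
    have hf := S.quad
    obtain ⟨c, N, s, rfl, rfl, rfl⟩ := S.exists_glue hf hc hN hs hU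
    have hUpos : finrank K U ≠ 0 := fun h0 => hbot (Submodule.finrank_eq_zero.mp h0)
    have hUlt : finrank K U < finrank K V := Submodule.finrank_lt htop
    have hadd := (OrthSum.ofNondegOn hf hU).finrank_eq
    exact glue _ _ _ _ _ _ _ c N s hf (ih _ hUlt U _ _ _ _ S.left rfl)
      (ih _ (by omega) _ _ _ _ _ S.right rfl)

end System

section Fitting

variable {f : LinearMap.BilinForm K V} {t X : End K V}

lemma pow_mul_of_mul_eq_smul {a : K} (h : t * X = a • (X * t)) (n : ℕ) :
    t ^ n * X = a ^ n • (X * t ^ n) := by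
  induction n with
  | zero => simp
  | succ n ih =>
    rw [pow_succ, mul_assoc, h, mul_smul_comm, ← mul_assoc, ih, smul_mul_assoc, smul_smul,
      mul_assoc, pow_succ, mul_comm a]

lemma mul_pow_of_mul_eq_smul {a : K} (h : X * t = a • (t * X)) (n : ℕ) :
    X * t ^ n = a ^ n • (t ^ n * X) := by
  induction n with
  | zero => simp
  | succ n ih =>
    rw [pow_succ, ← mul_assoc, ih, smul_mul_assoc, mul_assoc, h, mul_smul_comm, smul_smul,
      mul_assoc, pow_succ a]

lemma map_mem_ker_pow {a : K} (h : t * X = a • (X * t)) (n : ℕ) {x : V}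
    (hx : x ∈ LinearMap.ker (t ^ n)) : X x ∈ LinearMap.ker (t ^ n) := by
  rw [LinearMap.mem_ker] at hx ⊢
  rw [← End.mul_apply, pow_mul_of_mul_eq_smul h, LinearMap.smul_apply, End.mul_apply, hx,
    map_zero, smul_zero]

lemma exists_nondegOn_ker_pow [FiniteDimensional K V] (hf : IsQuadSpace f) {δ : K}
    (ht : AdjPair f t (δ • t)) :
    ∃ n ≠ 0, NondegOn f (LinearMap.ker (t ^ n)) ∧
      IsCompl (LinearMap.ker (t ^ n)) (LinearMap.range (t ^ n)) := by
  obtain ⟨k, hk⟩ := Filter.eventually_atTop.mp (LinearMap.eventually_isCompl_ker_pow_range_pow t)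
  have hcompl := hk (k + 1) k.le_succ
  refine ⟨k + 1, k.succ_ne_zero, fun x hx hxker => hf.eq_zero fun z => ?_, hcompl⟩
  obtain ⟨y, hy, _, ⟨w, rfl⟩, rfl⟩ :=
    Submodule.mem_sup.mp (hcompl.sup_eq_top.symm ▸ Submodule.mem_top (x := z))
  rw [map_add, hxker y hy, zero_add, hf.symm, AdjPair.pow ht, _root_.smul_pow,
    LinearMap.smul_apply, LinearMap.mem_ker.mp hx, smul_zero, map_zero]

lemma IsIndecomposable.isNilpotent_or_isUnit [FiniteDimensional K V] {c N s : End K V}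
    (hI : IsIndecomposable f c N s) (hf : IsQuadSpace f) {δ a₁ a₂ a₃ : K}
    (ht : AdjPair f t (δ • t)) (hc : t * c = a₁ • (c * t)) (hN : t * N = a₂ • (N * t))
    (hs : t * s = a₃ • (s * t)) : IsNilpotent t ∨ IsUnit t := by
  obtain ⟨n, hn, hnd, -⟩ := exists_nondegOn_ker_pow hf ht
  rcases hI _ (fun _ => map_mem_ker_pow hc n) (fun _ => map_mem_ker_pow hN n)
    (fun _ => map_mem_ker_pow hs n) hnd with h | h
  · exact .inr <| (isUnit_pow_iff hn).mp ((LinearMap.isUnit_iff_ker_eq_bot _).mpr h)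
  · exact Or.inl ⟨n, LinearMap.ker_eq_top.mp h⟩

end Fitting

/-! ### The algebra generated by one operator -/

section OneOperator

variable {f : LinearMap.BilinForm K V} {c T Z : End K V}

lemma pow_apply_mem {U : Submodule K V} (hU : ∀ x ∈ U, c x ∈ U) (n : ℕ) :
    ∀ x ∈ U, (c ^ n) x ∈ U := by
  induction n with
  | zero => simp
  | succ n ih => exact fun x hx => by rw [pow_succ]; exact ih _ (hU x hx)

lemma commute_aeval (h : Commute T c) (g : K[X]) : Commute T (aeval c g) :=
  Algebra.commute_of_mem_adjoin_singleton_of_commute (aeval_mem_adjoin_singleton K c) h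

lemma aeval_apply_mem {U : Submodule K V} (hU : ∀ x ∈ U, c x ∈ U) (g : K[X]) :
    ∀ x ∈ U, aeval c g x ∈ U := by
  intro x hx
  induction g using Polynomial.induction_on' with
  | add p q hp hq => rw [map_add]; exact add_mem hp hq
  | monomial n a =>
    simp only [aeval_monomial, ← Algebra.smul_def]
    exact U.smul_mem _ (pow_apply_mem hU n x hx)

lemma exists_form_apply_self_ne_zero (h2 : (2 : K) ≠ 0) (hf : IsQuadSpace f)
    (hZ : AdjPair f Z Z) (hZ0 : Z ≠ 0) : ∃ x, f (Z x) x ≠ 0 := by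
  contrapose! hZ0
  refine LinearMap.ext fun x => hf.eq_zero fun y => ?_
  have hxy := hZ0 (x + y)
  have hsymm : f (Z y) x = f (Z x) y := by rw [hZ, hf.symm]
  simp only [map_add, LinearMap.add_apply, hZ0, hsymm, zero_add, add_zero, ← two_mul] at hxy
  exact (mul_eq_zero.mp hxy).resolve_left h2

lemma form_apply_self_of_skew (h2 : (2 : K) ≠ 0) (hf : IsQuadSpace f) (hT : AdjPair f T (-T))
    (x : V) : f (T x) x = 0 := by
  have hxx := hT x x
  rw [LinearMap.neg_apply, map_neg, hf.symm x] at hxx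
  have h2x : 2 * f (T x) x = 0 := by linear_combination hxx
  exact (mul_eq_zero.mp h2x).resolve_left h2

lemma aeval_add_aeval_neg_mem_adjoin (c : End K V) (g : K[X]) :
    aeval c g + aeval (-c) g ∈ Algebra.adjoin K {c * c} := by
  induction g using Polynomial.induction_on' with
  | add p q hp hq =>
    rw [map_add, map_add, add_add_add_comm]
    exact add_mem hp hq
  | monomial n a =>
    simp only [aeval_monomial, ← Algebra.smul_def, ← smul_add]
    refine Subalgebra.smul_mem _ ?_ a
    rcases Nat.even_or_odd n with hn | hn
    · have hpow : c ^ n ∈ Algebra.adjoin K {c * c} := by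
        obtain ⟨m, rfl⟩ := hn
        rw [← two_mul, pow_mul, pow_two]
        exact pow_mem (Algebra.self_mem_adjoin_singleton K _) m
      rw [hn.neg_pow]
      exact add_mem hpow hpow
    · rw [hn.neg_pow, add_neg_cancel]
      exact zero_mem _

-- If `h(c) = c` and `h(-c) = 0`, then `c = h(c) + h(-c)` is even in `c`.
theorem mem_adjoin_mul_self {ε : K} (hε : 2 * ε ≠ 0) (hc : IsNilpotent (c - ε • 1)) :
    c ∈ Algebra.adjoin K {c * c} := by
  obtain ⟨k, hk⟩ := hc
  have hcop : IsCoprime ((X - C ε) ^ k) ((X - C (-ε)) ^ k) := by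
    refine (isCoprime_X_sub_C_of_isUnit_sub ?_).pow
    rw [sub_neg_eq_add, ← two_mul]
    exact hε.isUnit
  obtain ⟨u, v, huv⟩ := hcop
  have hpos : aeval c ((X - C ε) ^ k) = 0 := by
    simpa [Algebra.algebraMap_eq_smul_one] using hk
  have hneg : aeval (-c) ((X - C (-ε)) ^ k) = 0 := by
    have hc' : -c + ε • 1 = -(c - ε • 1) := by abel
    simp only [map_pow, map_add, map_neg, aeval_X, aeval_C, Algebra.algebraMap_eq_smul_one,
      sub_neg_eq_add, hc', neg_pow (c - ε • 1), hk, mul_zero]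
  have hone : aeval c (v * (X - C (-ε)) ^ k) = 1 := by
    simpa [hpos] using congrArg (aeval c) huv
  have hmem := aeval_add_aeval_neg_mem_adjoin c (X * (v * (X - C (-ε)) ^ k))
  rwa [map_mul, hone, aeval_X, mul_one, map_mul, map_mul, hneg, mul_zero, mul_zero,
    add_zero] at hmem

lemma exists_irreducible_isNilpotent_aeval [FiniteDimensional K V] [Nontrivial V]
    (hloc : ∀ g : K[X], IsNilpotent (aeval c g) ∨ IsUnit (aeval c g)) :
    ∃ P : K[X], Irreducible P ∧ IsNilpotent (aeval c P) := by
  have hint : IsIntegral K c := Algebra.IsIntegral.isIntegral c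
  obtain ⟨P, hP, r, hr⟩ :=
    WfDvdMonoid.exists_irreducible_factor (minpoly.not_isUnit K c) (minpoly.ne_zero hint)
  refine ⟨P, hP, (hloc P).resolve_right fun hu => hP.not_isUnit ?_⟩
  have hPr : aeval c P * aeval c r = 0 := by rw [← map_mul, ← hr, minpoly.aeval]
  have hdvd : P * r ∣ r := hr ▸ minpoly.dvd K c (hu.mul_right_eq_zero.mp hPr)
  have hr0 : r ≠ 0 := by rintro rfl; exact minpoly.ne_zero hint (hr.trans (mul_zero P))
  exact isUnit_of_dvd_one ((mul_dvd_mul_iff_right hr0).mp (by rwa [one_mul]))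

lemma exists_aeval_mul_eq_aeval_pow {P : K[X]} (hP : Irreducible P) {k : ℕ}
    (hk : aeval c P ^ (k + 1) = 0) {g : K[X]} (hg : aeval c g ≠ 0) :
    ∃ h : K[X], aeval c (h * g) = aeval c (P ^ k) := by
  obtain ⟨j, g, hPg, rfl⟩ :=
    WfDvdMonoid.max_power_factor (fun h0 : g = 0 => hg (by rw [h0, map_zero])) hP
  have hj : j ≤ k := by
    contrapose! hg
    rw [map_mul, map_pow, pow_eq_zero_of_le hg hk, zero_mul]
  obtain ⟨a, b, hab⟩ : IsCoprime (P ^ (k + 1)) g := (hP.coprime_iff_not_dvd.mpr hPg).pow_left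
  have hbg : aeval c (b * g) = 1 := by simpa [hk] using congrArg (aeval c) hab
  refine ⟨b * P ^ (k - j), ?_⟩
  have hfactor : b * P ^ (k - j) * (P ^ j * g) = P ^ k * (b * g) := by
    rw [← Nat.sub_add_cancel hj, Nat.add_sub_cancel, pow_add]
    ring
  rw [hfactor, map_mul, hbg, mul_one]

theorem exists_socle_generator [FiniteDimensional K V] [Nontrivial V]
    (hloc : ∀ g : K[X], IsNilpotent (aeval c g) ∨ IsUnit (aeval c g)) :
    ∃ Z : K[X], aeval c Z ≠ 0 ∧
      ∀ g : K[X], aeval c g ≠ 0 → ∃ h : K[X], aeval c (h * g) = aeval c Z := by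
  obtain ⟨P, hP, hnil⟩ := exists_irreducible_isNilpotent_aeval hloc
  refine ⟨P ^ (nilpotencyClass (aeval c P) - 1), by simpa using pow_pred_nilpotencyClass hnil,
    fun _ => exists_aeval_mul_eq_aeval_pow hP ?_⟩
  rw [Nat.sub_add_cancel (pos_nilpotencyClass_iff.mpr hnil), pow_nilpotencyClass hnil]

end OneOperator

/-! ### Isometries prescribed on generators -/

section Generators

variable {f : LinearMap.BilinForm K V} {D T Y : End K V} {ι : Type*} {z : ι → V} {δ η : K}
  {k : ℕ}

lemma exists_isometry_of_gram_eq [FiniteDimensional K V] (hf : IsQuadSpace f) {u w : ι → V}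
    (hu : Submodule.span K (Set.range u) = ⊤) (huw : ∀ i j, f (w i) (w j) = f (u i) (u j)) :
    ∃ b : End K V, (∀ i, b (u i) = w i) ∧ ∀ x y, f (b x) (b y) = f x y := by
  let P := Finsupp.linearCombination K u
  let Q := Finsupp.linearCombination K w
  have hPQ : f.compl₁₂ Q Q = f.compl₁₂ P P :=
    Finsupp.lhom_ext' fun i => LinearMap.ext_ring <| Finsupp.lhom_ext' fun j =>
      LinearMap.ext_ring <| by simp [P, Q, huw]
  have hform (m m' : ι →₀ K) : f (Q m) (Q m') = f (P m) (P m') :=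
    LinearMap.congr_fun₂ hPQ m m'
  obtain ⟨R, hR⟩ := P.exists_rightInverse_of_surjective
    (by rw [Finsupp.range_linearCombination, hu])
  have hPR (x : V) : P (R x) = x := LinearMap.congr_fun hR x
  have hiso (x y : V) : f (Q (R x)) (Q (R y)) = f x y := by rw [hform, hPR, hPR]
  obtain ⟨b', hb⟩ := IsometryPair.of_map_map (g := Q ∘ₗ R) hf hiso
  have hbP (m : ι →₀ K) : (Q ∘ₗ R) (P m) = Q m := hf.ext fun y => by
    obtain ⟨y, rfl⟩ : ∃ y', (Q ∘ₗ R) y' = y := ⟨b' y, LinearMap.congr_fun hb.mul_inv y⟩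
    simp only [LinearMap.comp_apply, hform, hPR]
  exact ⟨Q ∘ₗ R, fun i => by simpa [P, Q] using hbP (Finsupp.single i 1), hiso⟩

lemma apply_pow_right_of_adjPair (hD : AdjPair f D (δ • D)) (hδ : δ * δ = 1) (n : ℕ) (x y : V) :
    f x ((D ^ n) y) = δ ^ n * f ((D ^ n) x) y := by
  have hn := AdjPair.pow hD n x y
  rw [_root_.smul_pow, LinearMap.smul_apply, map_smul, smul_eq_mul] at hn
  rw [hn, ← mul_assoc, ← mul_pow, hδ, one_pow, one_mul]

lemma form_monomial_monomial {c N : End K V} (hc : AdjPair f c c) (hN : AdjPair f N (-N))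
    (hcN : Commute c N) (l m l' m' : ℕ) (x y : V) :
    f ((c ^ l * N ^ m) x) ((c ^ l' * N ^ m') y) =
      (-1) ^ m' * f ((c ^ (l' + l) * N ^ (m' + m)) x) y := by
  rw [End.mul_apply (c ^ l'), ← hc.pow l', apply_pow_right_of_adjPair (δ := -1)
    (by simpa using hN) (by ring), ← End.mul_apply, ← End.mul_apply, mul_assoc (N ^ m'),
    ← mul_assoc (c ^ l'), ← pow_add, ← mul_assoc, ← (hcN.pow_pow _ _).eq, mul_assoc, ← pow_add]

lemma apply_monomial_of_mul_eq_smul {c N : End K V} {a₁ a₂ : K} (hc : T * c = a₁ • (c * T))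
    (hN : T * N = a₂ • (N * T)) (l m : ℕ) (x : V) :
    T ((c ^ l * N ^ m) x) = (a₁ ^ l * a₂ ^ m) • (c ^ l * N ^ m) (T x) := by
  simp only [← End.mul_apply]
  rw [← mul_assoc, mul_pow_of_mul_eq_smul hc, smul_mul_assoc, mul_assoc,
    mul_pow_of_mul_eq_smul hN, mul_smul_comm, smul_smul, LinearMap.smul_apply, mul_assoc]

/-- The `K[c, N]`-submodule generated by the family `z`, for commuting operators `c` and `N`. -/
def moduleSpan (c N : End K V) (z : ι → V) : Submodule K V :=
  Submodule.span K (Set.range fun x : ℕ × ℕ × ι => (c ^ x.1 * N ^ x.2.1) (z x.2.2))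

section ModuleSpan

variable {c N : End K V}

lemma mem_moduleSpan (c N : End K V) (z : ι → V) (i : ι) : z i ∈ moduleSpan c N z :=
  Submodule.subset_span ⟨(0, 0, i), by simp⟩

lemma moduleSpan_le {U : Submodule K V} (hc : ∀ x ∈ U, c x ∈ U) (hN : ∀ x ∈ U, N x ∈ U)
    (hz : ∀ i, z i ∈ U) : moduleSpan c N z ≤ U := by
  refine Submodule.span_le.mpr ?_
  rintro _ ⟨⟨l, m, i⟩, rfl⟩
  exact pow_apply_mem hc l _ (pow_apply_mem hN m _ (hz i))

lemma map_mem_of_mem_moduleSpan {a₁ a₂ : K} {U : Submodule K V} (hTc : T * c = a₁ • (c * T))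
    (hTN : T * N = a₂ • (N * T)) (hz : ∀ l m i, (c ^ l * N ^ m) (T (z i)) ∈ U) :
    ∀ v ∈ moduleSpan c N z, T v ∈ U := by
  intro v hv
  refine (Submodule.span_le (p := U.comap T)).mpr ?_ hv
  rintro _ ⟨⟨l, m, i⟩, rfl⟩
  change T ((c ^ l * N ^ m) (z i)) ∈ U
  rw [apply_monomial_of_mul_eq_smul hTc hTN]
  exact Submodule.smul_mem _ _ (hz l m i)

lemma c_mem_moduleSpan : ∀ v ∈ moduleSpan c N z, c v ∈ moduleSpan c N z := by
  intro v hv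
  refine (Submodule.span_le (p := (moduleSpan c N z).comap c)).mpr ?_ hv
  rintro _ ⟨⟨l, m, i⟩, rfl⟩
  refine Submodule.subset_span ⟨(l + 1, m, i), ?_⟩
  simp [pow_succ']

lemma N_mem_moduleSpan (hcN : Commute c N) : ∀ v ∈ moduleSpan c N z, N v ∈ moduleSpan c N z := by
  intro v hv
  refine (Submodule.span_le (p := (moduleSpan c N z).comap N)).mpr ?_ hv
  rintro _ ⟨⟨l, m, i⟩, rfl⟩
  refine Submodule.subset_span ⟨(l, m + 1, i), ?_⟩
  simp only [pow_succ', ← mul_assoc, (hcN.pow_left l).eq, End.mul_apply]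

lemma ext_of_moduleSpan_eq_top {a₁ a₂ : K} (hz : moduleSpan c N z = ⊤)
    (hTc : T * c = a₁ • (c * T)) (hTN : T * N = a₂ • (N * T)) (hYc : Y * c = a₁ • (c * Y))
    (hYN : Y * N = a₂ • (N * Y)) (hTY : ∀ i, T (z i) = Y (z i)) : T = Y :=
  LinearMap.ext_on_range hz fun ⟨l, m, i⟩ => by
    rw [apply_monomial_of_mul_eq_smul hTc hTN, apply_monomial_of_mul_eq_smul hYc hYN, hTY]

theorem exists_involution_of_moduleSpan_eq_top [FiniteDimensional K V]
    (hz : moduleSpan c N z = ⊤) (hf : IsQuadSpace f) (hc : AdjPair f c c)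
    (hN : AdjPair f N (-N)) (hcN : Commute c N) (hη : η * η = 1)
    {π : ι → ι} (hπ : ∀ i, π (π i) = i) {σ : ι → K} (hσ : ∀ i, σ i * σ (π i) = 1)
    (hgram : ∀ l m i j, σ i * σ j * f ((c ^ l * N ^ m) (z (π i))) (z (π j)) =
      η ^ m * f ((c ^ l * N ^ m) (z i)) (z j)) :
    ∃ b : End K V, AdjPair f b b ∧ b * b = 1 ∧ b * c = c * b ∧ b * N = η • (N * b) ∧
      ∀ i, b (z i) = σ i • z (π i) := by
  obtain ⟨b, hb, hiso⟩ := exists_isometry_of_gram_eq hf hz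
    (w := fun x => (η ^ x.2.1 * σ x.2.2) • (c ^ x.1 * N ^ x.2.1) (z (π x.2.2)))
    fun ⟨l, m, i⟩ ⟨l', m', j⟩ => by
      have hηη : η ^ m * η ^ m * (η ^ m' * η ^ m') = 1 := by
        simp only [← mul_pow, hη, one_pow, mul_one]
      have hg := hgram (l' + l) (m' + m) i j
      simp only [map_smul, LinearMap.smul_apply, smul_eq_mul,
        form_monomial_monomial hc hN hcN]
      rw [pow_add η] at hg
      linear_combination (-1) ^ m' * η ^ m * η ^ m' * hg +
        (-1) ^ m' * f ((c ^ (l' + l) * N ^ (m' + m)) (z i)) (z j) * hηη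
  have hbz (i : ι) : b (z i) = σ i • z (π i) := by simpa using hb (0, 0, i)
  have hbc : b * c = c * b := LinearMap.ext_on_range hz fun ⟨l, m, i⟩ => by
    have hsucc := hb (l + 1, m, i)
    simp only [pow_succ', mul_assoc, End.mul_apply] at hsucc hb ⊢
    rw [hsucc, hb (l, m, i), map_smul]
  have hbN : b * N = η • (N * b) := LinearMap.ext_on_range hz fun ⟨l, m, i⟩ => by
    have hsucc := hb (l, m + 1, i)
    simp only [pow_succ', ← mul_assoc, (hcN.pow_left l).eq] at hsucc
    rw [End.mul_apply, ← End.mul_apply N, ← mul_assoc, hsucc, LinearMap.smul_apply,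
      End.mul_apply N, hb (l, m, i), map_smul, smul_smul, mul_assoc, mul_assoc, End.mul_apply N]
  have hbb : b * b = 1 := ext_of_moduleSpan_eq_top hz (a₁ := 1) (a₂ := 1)
    (by rw [mul_assoc, hbc, ← mul_assoc, hbc, mul_assoc, one_smul])
    (by rw [mul_assoc, hbN, mul_smul_comm, ← mul_assoc, hbN, smul_mul_assoc, smul_smul, hη,
      mul_assoc])
    (by simp) (by simp) fun i => by
      rw [End.mul_apply, hbz, map_smul, hbz, hπ, smul_smul, hσ, one_smul, End.one_apply]
  refine ⟨b, fun x y => ?_, hbb, hbc, hbN, hbz⟩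
  rw [← hiso, ← End.mul_apply, hbb, End.one_apply]

end ModuleSpan

/-- The smallest `D`-stable subspace containing the family `z`. -/
def genSpan (D : End K V) (z : ι → V) : Submodule K V :=
  Submodule.span K (Set.range fun x : ℕ × ι => (D ^ x.1) (z x.2))

lemma pow_apply_mem_genSpan (D : End K V) (z : ι → V) (m : ℕ) (i : ι) :
    (D ^ m) (z i) ∈ genSpan D z :=
  Submodule.subset_span ⟨(m, i), rfl⟩

lemma mem_genSpan (D : End K V) (z : ι → V) (i : ι) : z i ∈ genSpan D z :=
  pow_apply_mem_genSpan D z 0 i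

lemma self_apply_mem_genSpan {v : V} (hv : v ∈ genSpan D z) : D v ∈ genSpan D z := by
  refine (Submodule.span_le (p := (genSpan D z).comap D)).mpr ?_ hv
  rintro _ ⟨⟨m, i⟩, rfl⟩
  change D ((D ^ m) (z i)) ∈ genSpan D z
  rw [← End.mul_apply, ← pow_succ']
  exact pow_apply_mem_genSpan D z _ i

lemma genSpan_le {U : Submodule K V} (hD : ∀ x ∈ U, D x ∈ U) (hz : ∀ i, z i ∈ U) :
    genSpan D z ≤ U := by
  refine Submodule.span_le.mpr ?_
  rintro _ ⟨⟨m, i⟩, rfl⟩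
  exact pow_apply_mem hD m _ (hz i)

lemma map_mem_genSpan {a : K} (hT : T * D = a • (D * T)) (hz : ∀ i, T (z i) ∈ genSpan D z) :
    ∀ v ∈ genSpan D z, T v ∈ genSpan D z := by
  intro v hv
  refine (Submodule.span_le (p := (genSpan D z).comap T)).mpr ?_ hv
  rintro _ ⟨⟨m, i⟩, rfl⟩
  change T ((D ^ m) (z i)) ∈ genSpan D z
  rw [← End.mul_apply, mul_pow_of_mul_eq_smul hT]
  exact Submodule.smul_mem _ _ (pow_apply_mem (fun _ => self_apply_mem_genSpan) m _ (hz i))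

lemma exists_aeval_sum_of_mem_genSpan [Fintype ι] {v : V} (hv : v ∈ genSpan D z) :
    ∃ p : ι → K[X], v = ∑ i, aeval D (p i) (z i) := by
  classical
  induction hv using Submodule.span_induction with
  | mem x hx =>
    obtain ⟨⟨m, i⟩, rfl⟩ := hx
    refine ⟨Pi.single i (X ^ m), ?_⟩
    rw [Fintype.sum_eq_single i fun j hj => by simp [hj]]
    simp
  | zero => exact ⟨0, by simp⟩
  | add x y _ _ hx hy =>
    obtain ⟨p, rfl⟩ := hx
    obtain ⟨q, rfl⟩ := hy
    exact ⟨p + q, by simp [Finset.sum_add_distrib]⟩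
  | smul r x _ hx =>
    obtain ⟨p, rfl⟩ := hx
    exact ⟨fun i => r • p i, by simp [Finset.smul_sum]⟩

lemma exists_sum_add_of_mem_genSpan [Fintype ι] {v : V} (hv : v ∈ genSpan D z) :
    ∃ a : ι → K, ∃ v' ∈ genSpan D z, v = ∑ i, a i • z i + D v' := by
  obtain ⟨p, rfl⟩ := exists_aeval_sum_of_mem_genSpan hv
  refine ⟨fun i => (p i).coeff 0, ∑ i, aeval D (p i).divX (z i), Submodule.sum_mem _ fun i _ =>
    aeval_apply_mem (fun _ => self_apply_mem_genSpan) _ _ (mem_genSpan D z i), ?_⟩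
  rw [map_sum, ← Finset.sum_add_distrib]
  refine Finset.sum_congr rfl fun i _ => ?_
  conv_lhs => rw [← X_mul_divX_add (p i)]
  rw [map_add, aeval_C, map_mul, aeval_X, add_comm, LinearMap.add_apply,
    Module.algebraMap_end_apply, End.mul_apply]

-- A vector of the radical lies in `D ^ j U` for every `j`.
theorem nondegOn_genSpan [Fintype ι] (hD : AdjPair f D (δ • D)) (hδ : δ * δ = 1)
    (hk : D ^ (k + 1) = 0)
    (hgram : ∀ a : ι → K, (∀ j, ∑ i, a i * f ((D ^ k) (z i)) (z j) = 0) → a = 0) :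
    NondegOn f (genSpan D z) := by
  intro x _ hx
  have hpow (j : ℕ) (hj : j ≤ k + 1) : ∃ y ∈ genSpan D z, x = (D ^ j) y := by
    induction j with
    | zero => exact ⟨x, ‹_›, by simp⟩
    | succ j ih =>
      obtain ⟨y, hy, rfl⟩ := ih (by omega)
      obtain ⟨a, y', hy', rfl⟩ := exists_sum_add_of_mem_genSpan hy
      have ha : a = 0 := hgram a fun m => by
        have h0 := hx _ (pow_apply_mem_genSpan D z (k - j) m)
        have hDy' : (D ^ k) (D y') = 0 := by rw [← End.mul_apply, ← pow_succ, hk]; rfl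
        rw [apply_pow_right_of_adjPair hD hδ, ← End.mul_apply, ← pow_add,
          Nat.sub_add_cancel (by omega), map_add, hDy', add_zero] at h0
        have hδ0 : δ ^ (k - j) ≠ 0 := pow_ne_zero _ (left_ne_zero_of_mul_eq_one hδ)
        simpa [LinearMap.sum_apply] using (mul_eq_zero.mp h0).resolve_left hδ0
      exact ⟨y', hy', by simp [ha, pow_succ]⟩
  obtain ⟨y, -, rfl⟩ := hpow (k + 1) le_rfl
  rw [hk, LinearMap.zero_apply]

lemma linearIndependent_pow_apply [Finite ι] (hk : D ^ (k + 1) = 0)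
    (hz : LinearIndependent K fun i => (D ^ k) (z i)) :
    LinearIndependent K fun x : Fin (k + 1) × ι => (D ^ (x.1 : ℕ)) (z x.2) := by
  have := Fintype.ofFinite ι
  rw [Fintype.linearIndependent_iff] at hz ⊢
  intro g hg
  suffices hl : ∀ l (hl : l < k + 1) i, g (⟨l, hl⟩, i) = 0 from fun x => hl x.1 x.1.2 x.2
  intro l
  induction l using Nat.strong_induction_on with
  | _ l ih =>
    refine fun hl => hz (fun i => g (⟨l, hl⟩, i)) ?_
    have hDg := congrArg (D ^ (k - l)) hg
    rw [map_sum, Fintype.sum_prod_type, Fintype.sum_eq_single ⟨l, hl⟩, map_zero] at hDg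
    · simpa [← End.mul_apply, ← pow_add, Nat.sub_add_cancel (Nat.lt_succ_iff.mp hl)] using hDg
    · intro m hm
      refine Finset.sum_eq_zero fun i _ => ?_
      rcases lt_or_gt_of_ne fun h => hm (Fin.ext h) with hlt | hgt
      · rw [ih m hlt m.2, zero_smul, map_zero]
      · have hlm : k + 1 ≤ k - l + m := by simp only at hgt; omega
        rw [map_smul, ← End.mul_apply, ← pow_add, pow_eq_zero_of_le hlm hk,
          LinearMap.zero_apply, smul_zero]

lemma exists_form_eq_of_linearIndependent [FiniteDimensional K V] (hf : IsQuadSpace f)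
    {u : ι → V} (hu : LinearIndependent K u) (τ : ι → K) : ∃ y, ∀ i, f (u i) y = τ i := by
  obtain ⟨g, hg⟩ := (Finsupp.linearCombination K u).exists_leftInverse_of_injective
    (LinearMap.ker_eq_bot.mpr hu)
  refine ⟨(f.toDual hf.nondegenerate).symm (Finsupp.linearCombination K τ ∘ₗ g), fun i => ?_⟩
  have hgu : g (u i) = Finsupp.single i 1 := by
    simpa using LinearMap.congr_fun hg (Finsupp.single i 1)
  rw [hf.symm, ← LinearMap.BilinForm.toDual_def hf.nondegenerate]
  simp [hgu]

lemma exists_dual_chain [FiniteDimensional K V] [Finite ι] [DecidableEq ι] (hf : IsQuadSpace f)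
    (hk : D ^ (k + 1) = 0) (hz : LinearIndependent K fun i => (D ^ k) (z i)) (i₀ : ι) :
    ∃ y, ∀ l i, f ((D ^ l) (z i)) y = if l = k ∧ i = i₀ then 1 else 0 := by
  obtain ⟨y, hy⟩ := exists_form_eq_of_linearIndependent hf (linearIndependent_pow_apply hk hz)
    fun x => if (x.1 : ℕ) = k ∧ x.2 = i₀ then 1 else 0
  refine ⟨y, fun l i => ?_⟩
  rcases lt_or_ge l (k + 1) with hl | hl
  · exact hy (⟨l, hl⟩, i)
  · rw [pow_eq_zero_of_le hl hk, LinearMap.zero_apply, map_zero, LinearMap.zero_apply,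
      if_neg (by omega)]

end Generators

/-! ### Reversers -/

/-- `b` is a selfadjoint involution which commutes with `c` and anticommutes with `N`. For
`c = φ + φ⁻¹` and `N = φ - φ⁻¹` it is an isometric involution conjugating `φ` to `φ⁻¹`. -/
structure IsReverser (f : LinearMap.BilinForm K V) (c N b : End K V) : Prop where
  adj : AdjPair f b b
  mul_self : b * b = 1
  mul_c : b * c = c * b
  mul_N : b * N = -(N * b)

/-- There is a reverser in `Ω(V)`. -/
def HasOmegaReverser (f : LinearMap.BilinForm K V) (c N : End K V) : Prop :=
  ∃ b, IsReverser f c N b ∧ InOmega f b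

section Reverser

variable {f : LinearMap.BilinForm K V} {fA : LinearMap.BilinForm K A}
  {fB : LinearMap.BilinForm K B}

lemma IsometryPair.of_involution {b : End K V} (hb : AdjPair f b b) (hbb : b * b = 1) :
    IsometryPair f b b :=
  ⟨hb, hbb, hbb⟩

lemma IsReverser.isometryPair {c N b : End K V} (hb : IsReverser f c N b) :
    IsometryPair f b b :=
  .of_involution hb.adj hb.mul_self

lemma IsReverser.glue (D : OrthSum f fA fB) {c N b : End K A × End K B}
    (hA : IsReverser fA c.1 N.1 b.1) (hB : IsReverser fB c.2 N.2 b.2) :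
    IsReverser f (D.glue c) (D.glue N) (D.glue b) where
  adj := D.adjPair_glue_iff.mpr ⟨hA.adj, hB.adj⟩
  mul_self := by
    rw [← map_mul, ← map_one D.glue]
    exact congrArg _ (Prod.ext hA.mul_self hB.mul_self)
  mul_c := by
    rw [← map_mul, ← map_mul]
    exact congrArg _ (Prod.ext hA.mul_c hB.mul_c)
  mul_N := by
    rw [← map_mul, ← map_mul, ← map_neg]
    exact congrArg _ (Prod.ext hA.mul_N hB.mul_N)

lemma HasOmegaReverser.glue (D : OrthSum f fA fB) {c N : End K A × End K B}
    (hA : HasOmegaReverser fA c.1 N.1) (hB : HasOmegaReverser fB c.2 N.2) :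
    HasOmegaReverser f (D.glue c) (D.glue N) := by
  obtain ⟨bA, hbA, hΩA⟩ := hA
  obtain ⟨bB, hbB, hΩB⟩ := hB
  exact ⟨_, IsReverser.glue D (b := (bA, bB)) hbA hbB, D.inOmega_glue hΩA hΩB⟩

lemma isReverser_of_subsingleton [Subsingleton V] (f : LinearMap.BilinForm K V)
    (c N : End K V) : IsReverser f c N 1 :=
  ⟨LinearMap.isAdjointPair_one, one_mul 1, Subsingleton.elim _ _, Subsingleton.elim _ _⟩

end Reverser

/-! ### Reversing frames -/

/-- The `K[c, N]`-module generated by `z` is nondegenerate, and `z i ↦ σ i • z i` extends to a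
reverser of it. -/
structure IsReversingFrame {ι : Type*} (f : LinearMap.BilinForm K V) (c N : End K V) (z : ι → V)
    (σ : ι → K) : Prop where
  nondegOn : NondegOn f (moduleSpan c N z)
  sign_mul_self : ∀ i, σ i * σ i = 1
  gram : ∀ l m i j, σ i * σ j * f ((c ^ l * N ^ m) (z i)) (z j) =
    (-1) ^ m * f ((c ^ l * N ^ m) (z i)) (z j)

section Frame

variable {ι : Type*} {f : LinearMap.BilinForm K V} {c N : End K V} {z : ι → V} {σ : ι → K}
  {x y : V} {k : ℕ}

lemma IsReversingFrame.exists_isReverser [FiniteDimensional K V]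
    (hz : IsReversingFrame f c N z σ) (htop : moduleSpan c N z = ⊤) (hf : IsQuadSpace f)
    (hc : AdjPair f c c) (hN : AdjPair f N (-N)) (hcN : Commute c N) :
    ∃ b, IsReverser f c N b ∧ ∀ i, b (z i) = σ i • z i := by
  obtain ⟨b, hb, hbb, hbc, hbN, hbz⟩ := exists_involution_of_moduleSpan_eq_top htop hf hc hN hcN
    (η := -1) (by ring) (π := id) (fun _ => rfl) hz.sign_mul_self hz.gram
  exact ⟨b, ⟨hb, hbb, hbc, by rw [hbN, neg_one_smul]⟩, hbz⟩

lemma adjPair_monomial (hc : AdjPair f c c) (hN : AdjPair f N (-N)) (hcN : Commute c N)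
    (l m : ℕ) : AdjPair f (c ^ l * N ^ m) ((-1 : K) ^ m • (c ^ l * N ^ m)) := by
  have hadj := (hc.pow l).mul (hN.pow m)
  rwa [← neg_one_smul K N, _root_.smul_pow, smul_mul_assoc, ← (hcN.pow_pow l m).eq] at hadj

lemma form_monomial_self_of_odd (h2 : (2 : K) ≠ 0) (hf : IsQuadSpace f) (hc : AdjPair f c c)
    (hN : AdjPair f N (-N)) (hcN : Commute c N) (l : ℕ) {m : ℕ} (hm : Odd m) (x : V) :
    f ((c ^ l * N ^ m) x) x = 0 := by
  have hadj := adjPair_monomial hc hN hcN l m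
  rw [hm.neg_one_pow, neg_one_smul] at hadj
  exact form_apply_self_of_skew h2 hf hadj x

lemma isReversingFrame_single (h2 : (2 : K) ≠ 0) (hf : IsQuadSpace f) (hc : AdjPair f c c)
    (hN : AdjPair f N (-N)) (hcN : Commute c N)
    (hx : NondegOn f (moduleSpan c N fun _ : Unit => x)) :
    IsReversingFrame f c N (fun _ : Unit => x) 1 where
  nondegOn := hx
  sign_mul_self _ := by simp
  gram l m _ _ := by
    rcases Nat.even_or_odd m with hm | hm
    · simp [hm.neg_one_pow]
    · rw [form_monomial_self_of_odd h2 hf hc hN hcN l hm, mul_zero, mul_zero]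

lemma mul_self_eq_aeval (hNN : N * N = c * c - (4 : K) • 1) :
    N * N = aeval c (X * X - C 4 : K[X]) := by
  simp [hNN, Algebra.algebraMap_eq_smul_one]

lemma moduleSpan_le_genSpan (hcN : Commute c N) (hNN : N * N = c * c - (4 : K) • 1) (x : V) :
    moduleSpan c N (fun _ : Unit => x) ≤ genSpan c ![x, N x] := by
  refine moduleSpan_le (fun _ => self_apply_mem_genSpan)
    (map_mem_genSpan (a := 1) (by rw [one_smul, hcN.eq]) fun i => ?_)
    fun _ => mem_genSpan c ![x, N x] 0
  fin_cases i
  · exact mem_genSpan c ![x, N x] 1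
  · change N (N x) ∈ _
    rw [← End.mul_apply, mul_self_eq_aeval hNN]
    exact aeval_apply_mem (fun _ => self_apply_mem_genSpan) _ _ (mem_genSpan c ![x, N x] 0)

lemma nondegOn_moduleSpan_of_isUnit (h2 : (2 : K) ≠ 0) (hf : IsQuadSpace f)
    (hc : AdjPair f c c) (hN : AdjPair f N (-N)) (hcN : Commute c N)
    (hNN : N * N = c * c - (4 : K) • 1) (hu : IsUnit N) {Z : K[X]}
    (hZ : ∀ g : K[X], aeval c g ≠ 0 → ∃ h : K[X], aeval c (h * g) = aeval c Z)
    (hx : f (aeval c Z x) x ≠ 0) : NondegOn f (moduleSpan c N fun _ : Unit => x) := by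
  have hNNg := mul_self_eq_aeval hNN
  have hmem (h : K[X]) : aeval c h x ∈ moduleSpan c N fun _ : Unit => x :=
    aeval_apply_mem c_mem_moduleSpan h x (mem_moduleSpan c N _ ())
  have hzero (p : K[X]) (hp : ∀ h : K[X], f (aeval c (h * p) x) x = 0) : aeval c p = 0 := by
    by_contra h0
    obtain ⟨h, hh⟩ := hZ p h0
    exact hx (hh ▸ hp h)
  have hskew (p : K[X]) : f (aeval c p (N x)) x = 0 := by
    refine form_apply_self_of_skew h2 hf (T := aeval c p * N) ?_ x
    rw [← mul_neg, (commute_aeval hcN.symm p).symm.neg_right.eq]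
    exact (hc.aeval p).mul hN
  intro v hv hperp
  obtain ⟨p, rfl⟩ := exists_aeval_sum_of_mem_genSpan (moduleSpan_le_genSpan hcN hNN x hv)
  simp only [Fin.sum_univ_two, Matrix.cons_val_zero, Matrix.cons_val_one] at hperp ⊢
  have hp0 : aeval c (p 0) = 0 := hzero _ fun h => by
    have := hperp _ (hmem h)
    rwa [← hc.aeval h, map_add, map_add, ← End.mul_apply, ← End.mul_apply, ← map_mul, ← map_mul,
      LinearMap.add_apply, hskew, add_zero] at this
  have hp1 : aeval c ((X * X - C 4) * p 1) = 0 := hzero _ fun h => by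
    have hNh := hperp _ (N_mem_moduleSpan hcN _ (hmem h))
    rw [hp0, LinearMap.zero_apply, zero_add, ← neg_eq_zero, ← map_neg, ← LinearMap.neg_apply,
      ← hN, ← hc.aeval h] at hNh
    rw [map_mul, map_mul, ← hNNg]
    convert hNh using 2
    simp only [← End.mul_apply]
    rw [← (commute_aeval hcN.symm (p 1)).eq, mul_assoc N]
  rw [map_mul, ← hNNg, (hu.mul hu).mul_right_eq_zero] at hp1
  simp [hp0, hp1]

lemma moduleSpan_eq_genSpan (hc : c ∈ Algebra.adjoin K {N * N}) (z : ι → V) :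
    moduleSpan c N z = genSpan N z := by
  have hcN : Commute c N := (Algebra.commute_of_mem_adjoin_singleton_of_commute hc
    ((Commute.refl N).mul_right (Commute.refl N))).symm
  rw [Algebra.adjoin_singleton_eq_range_aeval] at hc
  obtain ⟨g, rfl⟩ := hc
  have hNN : ∀ v ∈ genSpan N z, (N * N) v ∈ genSpan N z := fun _ hv =>
    self_apply_mem_genSpan (self_apply_mem_genSpan hv)
  exact le_antisymm
    (moduleSpan_le (aeval_apply_mem hNN g) (fun _ => self_apply_mem_genSpan) (mem_genSpan N z))
    (genSpan_le (N_mem_moduleSpan hcN) (mem_moduleSpan _ _ z))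

lemma nondegOn_moduleSpan_of_pow_succ_eq_zero (hN : AdjPair f N (-N))
    (hc : c ∈ Algebra.adjoin K {N * N}) (hk : N ^ (k + 1) = 0)
    (hx : f ((N ^ k) x) x ≠ 0) : NondegOn f (moduleSpan c N fun _ : Unit => x) := by
  rw [moduleSpan_eq_genSpan hc]
  refine nondegOn_genSpan (δ := -1) (by simpa using hN) (by ring) hk fun a ha => ?_
  exact funext fun _ => by simpa [hx] using ha ()

lemma form_apply_of_mem_adjoin_of_odd {T : End K V} (hT : T ∈ Algebra.adjoin K {N * N})
    (hk : Odd k) (hxy : ∀ l, f ((N ^ l) x) y = if l = k then 1 else 0) : f (T x) y = 0 := by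
  rw [Algebra.adjoin_singleton_eq_range_aeval] at hT
  obtain ⟨g, rfl⟩ := hT
  change f (aeval (N * N) g x) y = 0
  induction g using Polynomial.induction_on' with
  | add p q hp hq => rw [map_add, LinearMap.add_apply, map_add, LinearMap.add_apply, hp, hq,
      add_zero]
  | monomial n a =>
    rw [aeval_monomial, ← Algebra.smul_def, ← pow_two, ← pow_mul, LinearMap.smul_apply, map_smul,
      LinearMap.smul_apply, hxy, if_neg fun hn => ?_, smul_zero]
    exact Nat.not_odd_iff_even.mpr (even_two_mul n) (hn ▸ hk)

lemma isReversingFrame_pair (h2 : (2 : K) ≠ 0) (hf : IsQuadSpace f) (hc : AdjPair f c c)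
    (hN : AdjPair f N (-N)) (hcN : Commute c N) (hcmem : c ∈ Algebra.adjoin K {N * N})
    (hk : N ^ (k + 1) = 0) (hodd : Odd k)
    (hxy : ∀ l, f ((N ^ l) x) y = if l = k then 1 else 0) :
    IsReversingFrame f c N ![x, y] ![1, -1] where
  nondegOn := by
    have hself (w : V) : f ((N ^ k) w) w = 0 := by
      simpa using form_monomial_self_of_odd h2 hf hc hN hcN 0 hodd w
    have hyx : f ((N ^ k) y) x = -1 := by
      rw [hf.symm, apply_pow_right_of_adjPair (δ := -1) (by simpa using hN) (by ring), hxy,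
        hodd.neg_one_pow]
      simp
    rw [moduleSpan_eq_genSpan hcmem]
    refine nondegOn_genSpan (δ := -1) (by simpa using hN) (by ring) hk fun a ha => ?_
    have h0 := ha 0
    have h1 := ha 1
    simp only [Fin.sum_univ_two, Matrix.cons_val_zero, Matrix.cons_val_one, hself, hxy, hyx,
      if_true, mul_zero, mul_one, zero_add, add_zero, mul_neg, neg_eq_zero] at h0 h1
    ext i
    fin_cases i
    · exact h1
    · exact h0
  sign_mul_self i := by fin_cases i <;> simp
  gram l m i j := by
    have hadj := adjPair_monomial hc hN hcN l m y x
    rw [hf.symm y, LinearMap.smul_apply, map_smul, LinearMap.smul_apply, smul_eq_mul] at hadj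
    rcases Nat.even_or_odd m with hm | hm
    · have hmem : c ^ l * N ^ m ∈ Algebra.adjoin K {N * N} := by
        obtain ⟨j, rfl⟩ := hm
        rw [← two_mul, pow_mul, pow_two]
        exact mul_mem (pow_mem hcmem l) (pow_mem (Algebra.self_mem_adjoin_singleton K _) j)
      have h0 := form_apply_of_mem_adjoin_of_odd hmem hodd hxy
      fin_cases i <;> fin_cases j <;> simp [-End.mul_apply, hm.neg_one_pow, h0, hadj]
    · have hself := form_monomial_self_of_odd h2 hf hc hN hcN l hm
      fin_cases i <;> fin_cases j <;> simp [-End.mul_apply, hm.neg_one_pow, hself]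

end Frame

/-! ### Existence of reversers -/

section Local

variable {f : LinearMap.BilinForm K V} {c N s : End K V} {ε₂ ε₃ : K}

lemma IsIndecomposable.isNilpotent_or_isUnit_aeval [FiniteDimensional K V]
    (hI : IsIndecomposable f c N s) (S : RevSystem f c N s 1 ε₂ ε₃) (g : K[X]) :
    IsNilpotent (aeval c g) ∨ IsUnit (aeval c g) := by
  have hsc : Commute s c := S.s_mul_c.trans (one_smul K _)
  refine hI.isNilpotent_or_isUnit S.quad (δ := 1) (a₁ := 1) (a₂ := 1) (a₃ := 1) ?_ ?_ ?_ ?_ <;>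
    rw [one_smul]
  · exact S.adj_c.aeval g
  · exact (commute_aeval (Commute.refl c) g).symm.eq
  · exact (commute_aeval (Commute.symm S.comm) g).symm.eq
  · exact (commute_aeval hsc g).symm.eq

lemma mem_adjoin_N_mul_N (h2 : (2 : K) ≠ 0) (hNN : N * N = c * c - (4 : K) • 1)
    (hloc : ∀ g : K[X], IsNilpotent (aeval c g) ∨ IsUnit (aeval c g)) (hN : IsNilpotent N) :
    c ∈ Algebra.adjoin K {N * N} := by
  have hprod : (c - (2 : K) • 1) * (c - (-2 : K) • 1) = N * N := by
    rw [hNN]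
    simp only [sub_mul, mul_sub, smul_mul_assoc, mul_smul_comm, one_mul, mul_one]
    module
  have hcomm : Commute (c - (2 : K) • 1) (c - (-2 : K) • 1) :=
    ((Commute.refl c).sub_right (.smul_right (Commute.one_right c) _)).sub_left
      (.smul_left (Commute.one_left _) _)
  have hlin (ε : K) : aeval c (X - C ε) = c - ε • 1 := by simp [Algebra.algebraMap_eq_smul_one]
  have hcc : c ∈ Algebra.adjoin K {c * c} := by
    rcases hloc (X - C 2) with h | h
    · exact mem_adjoin_mul_self (mul_ne_zero h2 h2) (hlin 2 ▸ h)
    · refine mem_adjoin_mul_self (ε := -2) (mul_ne_zero h2 (neg_ne_zero.mpr h2)) ?_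
      rw [hlin] at h
      obtain ⟨k, hk⟩ := (Commute.refl N).isNilpotent_mul_left hN
      rw [← hprod, hcomm.mul_pow, (h.pow k).mul_right_eq_zero] at hk
      exact ⟨k, hk⟩
  refine Algebra.adjoin_le ?_ hcc
  rintro _ rfl
  rw [show c * c = N * N + (4 : K) • 1 by rw [hNN, sub_add_cancel]]
  exact add_mem (Algebra.self_mem_adjoin_singleton K _) (Subalgebra.smul_mem _ (one_mem _) _)

lemma IsIndecomposable.isUnit_or_isNilpotent_N [FiniteDimensional K V] (h2 : (2 : K) ≠ 0)
    (hε : ε₂ * ε₂ = 1) (hI : IsIndecomposable f c N s) (S : RevSystem f c N s 1 ε₂ ε₃) :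
    IsUnit N ∨ IsNilpotent N ∧ c ∈ Algebra.adjoin K {N * N} := by
  have hNs : N * s = ε₂ • (s * N) := by rw [S.s_mul_N, smul_smul, hε, one_smul]
  rcases hI.isNilpotent_or_isUnit S.quad (δ := -1) (a₁ := 1) (a₂ := 1)
    (by simpa using S.adj_N) (by rw [one_smul, S.comm]) (by rw [one_smul]) hNs with h | h
  · exact .inr ⟨h, mem_adjoin_N_mul_N h2 S.N_mul_N (hI.isNilpotent_or_isUnit_aeval S) h⟩
  · exact .inl h

lemma exists_nondegOn_moduleSpan_or_odd [FiniteDimensional K V] [Nontrivial V]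
    (h2 : (2 : K) ≠ 0) (hε : ε₂ * ε₂ = 1) (hI : IsIndecomposable f c N s)
    (S : RevSystem f c N s 1 ε₂ ε₃) :
    (∃ x ≠ 0, NondegOn f (moduleSpan c N fun _ : Unit => x)) ∨
      ∃ k, Odd k ∧ N ^ (k + 1) = 0 ∧ N ^ k ≠ 0 ∧ c ∈ Algebra.adjoin K {N * N} := by
  have ne_zero {Z : End K V} {x : V} (hx : f (Z x) x ≠ 0) : x ≠ 0 := by
    rintro rfl
    simp at hx
  rcases hI.isUnit_or_isNilpotent_N h2 hε S with hu | ⟨hnil, hc⟩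
  · obtain ⟨Z, hZ0, hZ⟩ := exists_socle_generator (hI.isNilpotent_or_isUnit_aeval S)
    obtain ⟨x, hx⟩ := exists_form_apply_self_ne_zero h2 S.quad (S.adj_c.aeval Z) hZ0
    exact .inl ⟨x, ne_zero hx,
      nondegOn_moduleSpan_of_isUnit h2 S.quad S.adj_c S.adj_N S.comm S.N_mul_N hu hZ hx⟩
  · obtain ⟨k, hk⟩ := Nat.exists_eq_succ_of_ne_zero (pos_nilpotencyClass_iff.mpr hnil).ne'
    have hNk : N ^ (k + 1) = 0 := Nat.succ_eq_add_one k ▸ hk ▸ pow_nilpotencyClass hnil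
    have hNk0 : N ^ k ≠ 0 := by simpa [hk] using pow_pred_nilpotencyClass hnil
    rcases Nat.even_or_odd k with heven | hodd
    · have hadj : AdjPair f (N ^ k) (N ^ k) := heven.neg_pow N ▸ S.adj_N.pow k
      obtain ⟨x, hx⟩ := exists_form_apply_self_ne_zero h2 S.quad hadj hNk0
      exact .inl ⟨x, ne_zero hx, nondegOn_moduleSpan_of_pow_succ_eq_zero S.adj_N hc hNk hx⟩
    · exact .inr ⟨k, hodd, hNk, hNk0, hc⟩

lemma exists_reversingFrame [FiniteDimensional K V] [Nontrivial V] (h2 : (2 : K) ≠ 0)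
    (hε : ε₂ * ε₂ = 1) (hI : IsIndecomposable f c N s) (S : RevSystem f c N s 1 ε₂ ε₃) :
    ∃ (ι : Type) (z : ι → V) (σ : ι → K), IsReversingFrame f c N z σ ∧ ∃ i, z i ≠ 0 := by
  rcases exists_nondegOn_moduleSpan_or_odd h2 hε hI S with ⟨x, hx, hnd⟩ | ⟨k, hodd, hk, hk0, hc⟩
  · exact ⟨Unit, _, 1, isReversingFrame_single h2 S.quad S.adj_c S.adj_N S.comm hnd, (), hx⟩
  · obtain ⟨x, hx⟩ := DFunLike.ne_iff.mp hk0
    obtain ⟨y, hy⟩ := exists_dual_chain S.quad hk (z := fun _ : Unit => x)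
      (LinearIndependent.of_subsingleton () hx) ()
    refine ⟨Fin 2, ![x, y], ![1, -1], isReversingFrame_pair h2 S.quad S.adj_c S.adj_N S.comm hc
      hk hodd fun l => by simpa using hy l (), 0, ?_⟩
    rintro (rfl : x = 0)
    simp at hx

theorem RevSystem.exists_isReverser [FiniteDimensional K V] (h2 : (2 : K) ≠ 0)
    (S : RevSystem f c N 1 1 1 1) : ∃ b, IsReverser f c N b := by
  refine RevSystem.induction (P := fun _ _ _ f c N s => s = 1 → ∃ b, IsReverser f c N b)
    ?_ ?_ ?_ V f c N 1 S rfl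
  · intro V A B _ _ _ _ _ _ _ _ f fA fB D c N s _ hA hB hs
    obtain rfl : s = 1 := D.glue_injective (hs.trans (map_one _).symm)
    obtain ⟨bA, hbA⟩ := hA rfl
    obtain ⟨bB, hbB⟩ := hB rfl
    exact ⟨_, IsReverser.glue D (b := (bA, bB)) hbA hbB⟩
  · exact fun V _ _ _ f c N _ _ => ⟨1, isReverser_of_subsingleton f c N⟩
  · rintro V _ _ _ _ f c N s S hI rfl
    obtain ⟨ι, z, σ, hz, i, hi⟩ := exists_reversingFrame h2 (one_mul 1) hI S
    have htop : moduleSpan c N z = ⊤ :=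
      (hI _ c_mem_moduleSpan (N_mem_moduleSpan S.comm) (fun _ => id) hz.nondegOn).resolve_left
        fun hbot => hi ((Submodule.mem_bot K).mp (hbot ▸ mem_moduleSpan c N z i))
    obtain ⟨b, hb, -⟩ := hz.exists_isReverser htop S.quad S.adj_c S.adj_N S.comm
    exact ⟨b, hb⟩

end Local

/-! ### Splitting along an involution -/

section Involution

variable {f : LinearMap.BilinForm K V} {c N s e b J : End K V} {ε₁ ε₂ ε₃ : K}

lemma mem_ker_of_commute {X : End K V} (hX : Commute X e) {v : V}
    (hv : v ∈ LinearMap.ker e) : X v ∈ LinearMap.ker e := by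
  rw [LinearMap.mem_ker, ← End.mul_apply, ← hX.eq, End.mul_apply, LinearMap.mem_ker.mp hv,
    map_zero]

lemma isCompl_ker_sub_one_ker_add_one (h2 : (2 : K) ≠ 0) (hee : e * e = 1) :
    IsCompl (LinearMap.ker (e - 1)) (LinearMap.ker (e + 1)) := by
  have heev (v : V) : e (e v) = v := LinearMap.congr_fun hee v
  refine IsCompl.of_le (fun v ⟨hv, hv'⟩ => ?_) fun v _ => ?_
  · have h2v : (2 : K) • v = (e + 1) v - (e - 1) v := by
      rw [LinearMap.add_apply, LinearMap.sub_apply, End.one_apply]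
      module
    rw [LinearMap.mem_ker.mp hv, LinearMap.mem_ker.mp hv', sub_zero] at h2v
    exact (smul_eq_zero.mp h2v).resolve_left h2
  · have hv : v = (2⁻¹ : K) • (v + e v) + (2⁻¹ : K) • (v - e v) := by
      rw [← smul_add, add_add_sub_cancel, ← two_smul K v, smul_smul, inv_mul_cancel₀ h2, one_smul]
    rw [hv]
    refine Submodule.add_mem_sup (Submodule.smul_mem _ _ ?_) (Submodule.smul_mem _ _ ?_) <;>
      simp [heev, add_comm]

-- The summands are the eigenspaces of `e` for the eigenvalues `1` and `-1`.
theorem exists_orthSum_of_involution (h2 : (2 : K) ≠ 0) (hf : IsQuadSpace f)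
    (he : AdjPair f e e) (hee : e * e = 1) :
    ∃ (U W : Submodule K V) (D : OrthSum f (f.restrict U) (f.restrict W)),
      D.glue (1, -1) = e ∧ ∀ X, Commute X e → ∃ x, D.glue x = X := by
  have horth : ∀ u ∈ LinearMap.ker (e - 1), ∀ w ∈ LinearMap.ker (e + 1), f u w = 0 := by
    intro u hu w hw
    have hadj := he u w
    rw [sub_eq_zero.mp hu, eq_neg_of_add_eq_zero_left hw, End.one_apply, End.one_apply,
      map_neg] at hadj
    have h2f : 2 * f u w = 0 := by linear_combination hadj
    exact (mul_eq_zero.mp h2f).resolve_left h2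
  have hcompl := isCompl_ker_sub_one_ker_add_one h2 hee
  refine ⟨_, _, OrthSum.ofIsCompl hf hcompl horth, LinearMap.ext <|
    (OrthSum.ofIsCompl hf hcompl horth).equiv.surjective.forall.mpr fun v => ?_, fun X hX =>
    OrthSum.exists_glue_ofIsCompl hf hcompl horth
      (fun _ => mem_ker_of_commute (hX.sub_right (.one_right X)))
      (fun _ => mem_ker_of_commute (hX.add_right (.one_right X)))⟩
  have h1 : e v.1 = v.1 := sub_eq_zero.mp v.1.2
  have h2 : e v.2 = -v.2 := eq_neg_of_add_eq_zero_left v.2.2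
  rw [OrthSum.glue_apply]
  simp [OrthSum.ofIsCompl, h1, h2]

lemma inOmega_neg_one_of_skew [FiniteDimensional K V] (h2 : (2 : K) ≠ 0) (hf : IsQuadSpace f)
    (hJ : AdjPair f J (-J)) (hJJ : J * J = -1) : InOmega f (-1) := by
  have hNN : ((2 : K) • J) * ((2 : K) • J) = 0 * 0 - (4 : K) • 1 := by
    rw [smul_mul_smul_comm, hJJ, mul_zero, zero_sub]
    module
  obtain ⟨r, hr⟩ := RevSystem.exists_isReverser h2 (f := f) (c := 0) (N := (2 : K) • J)
    ⟨hf, fun _ _ => by simp, by rw [← smul_neg]; exact hJ.smul 2,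
      by rw [one_smul]; exact LinearMap.isAdjointPair_one, by simp, hNN, by simp, by simp, by simp⟩
  have hrJ : r * J = -(J * r) := by
    have := hr.mul_N
    rwa [mul_smul_comm, smul_mul_assoc, ← smul_neg, smul_right_inj h2] at this
  have hJJ' : J * -J = 1 := by rw [mul_neg, hJJ, neg_neg]
  have hcomm := InOmega.commutator hr.isometryPair
    (⟨hJ, hJJ', by rw [neg_mul, hJJ, neg_neg]⟩ : IsometryPair f J (-J))
  rwa [hrJ, neg_mul, mul_assoc J, hr.mul_self, mul_one, neg_mul, hJJ'] at hcomm

theorem inOmega_of_commute_skew [FiniteDimensional K V] (h2 : (2 : K) ≠ 0) (hf : IsQuadSpace f)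
    (hJ : AdjPair f J (-J)) (hJJ : J * J = -1) (hb : AdjPair f b b) (hbb : b * b = 1)
    (hbJ : Commute J b) : InOmega f b := by
  obtain ⟨U, W, D, rfl, hD⟩ := exists_orthSum_of_involution h2 hf hb hbb
  obtain ⟨J, rfl⟩ := hD J hbJ
  rw [← map_neg, D.adjPair_glue_iff] at hJ
  rw [← map_mul, ← map_one D.glue, ← map_neg] at hJJ
  exact D.inOmega_glue .one (inOmega_neg_one_of_skew h2 (D.isQuadSpace_right hf) hJ.2
    (congrArg Prod.snd (D.glue_injective hJJ)))

lemma RevSystem.isometryPair (hε : ε₃ * ε₃ = 1) (S : RevSystem f c N s ε₁ ε₂ ε₃) :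
    IsometryPair f s (ε₃ • s) where
  adj := S.adj_s
  mul_inv := by rw [mul_smul_comm, S.s_mul_s, smul_smul, hε, one_smul]
  inv_mul := by rw [smul_mul_assoc, S.s_mul_s, smul_smul, hε, one_smul]

lemma RevSystem.forget_s (S : RevSystem f c N s ε₁ ε₂ ε₃) : RevSystem f c N 1 1 1 1 :=
  ⟨S.quad, S.adj_c, S.adj_N, by rw [one_smul]; exact LinearMap.isAdjointPair_one, S.comm,
    S.N_mul_N, by simp, by simp, by simp⟩

end Involution

section Swap

variable {f : LinearMap.BilinForm K V} {fA : LinearMap.BilinForm K A}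
  {fB : LinearMap.BilinForm K B} {s s' : End K V}

lemma OrthSum.exists_conj_glue_left (D : OrthSum f fA fB) (h2 : (2 : K) ≠ 0)
    (hs : IsometryPair f s s') (hsD : s * D.glue (1, -1) = -(D.glue (1, -1) * s))
    (hD : ∀ X, Commute X (D.glue (1, -1)) → ∃ x, D.glue x = X) (a : End K A) :
    ∃ b : End K B, s * D.glue (a, 0) * s' = D.glue (0, b) := by
  set e := D.glue (1, -1)
  set Y := s * D.glue (a, 0) * s'
  have hes : e * s = -(s * e) := by rw [hsD, neg_neg]
  have hes' : s' * e = -(e * s') :=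
    calc s' * e = s' * (e * s) * s' := by rw [mul_assoc, mul_assoc, hs.mul_inv, mul_one]
      _ = -(e * s') := by
        rw [hes, mul_neg, neg_mul, ← mul_assoc, hs.inv_mul, one_mul]
  have heY : e * Y = -Y := by
    rw [← mul_assoc, ← mul_assoc, hes, neg_mul, neg_mul, mul_assoc s e, ← map_mul]
    simp [Y]
  have hYe : Y * e = -Y := by
    rw [mul_assoc, hes', mul_neg, ← mul_assoc, mul_assoc s, ← map_mul]
    simp [Y]
  obtain ⟨⟨x, y⟩, hxy⟩ := hD Y (hYe.trans heY.symm)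
  have hx : x = -x := by
    rw [← hxy, ← map_mul, ← map_neg] at heY
    simpa using congrArg Prod.fst (D.glue_injective heY)
  have h2x : (2 : K) • x = 0 := by rw [two_smul, ← eq_neg_iff_add_eq_zero]; exact hx
  exact ⟨y, by rw [← hxy, (smul_eq_zero.mp h2x).resolve_left h2]⟩

lemma OrthSum.conj_glue_one_zero (D : OrthSum f fA fB) (h2 : (2 : K) ≠ 0)
    (hs : IsometryPair f s s') (hsD : s * D.glue (1, -1) = -(D.glue (1, -1) * s)) :
    s * D.glue (1, 0) * s' = D.glue (0, 1) := by
  have hleft : D.glue (1, 0) = (2⁻¹ : K) • (1 + D.glue (1, -1)) := by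
    rw [← map_one D.glue, ← map_add, ← map_smul]
    congr 1
    ext <;> simp [← two_smul K, smul_smul, h2]
  have hright : D.glue (0, 1) = (2⁻¹ : K) • (1 - D.glue (1, -1)) := by
    rw [← map_one D.glue, ← map_sub, ← map_smul]
    congr 1
    ext <;> simp [← two_smul K, smul_smul, h2]
  rw [hleft, hright, mul_smul_comm, smul_mul_assoc, mul_add, add_mul, mul_one, hs.mul_inv, hsD,
    neg_mul, mul_assoc, hs.mul_inv, mul_one, sub_eq_add_neg]

lemma OrthSum.exists_conj_algHom (D : OrthSum f fA fB) (h2 : (2 : K) ≠ 0)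
    (hs : IsometryPair f s s') (hsD : s * D.glue (1, -1) = -(D.glue (1, -1) * s))
    (hD : ∀ X, Commute X (D.glue (1, -1)) → ∃ x, D.glue x = X) :
    ∃ τ : End K A →ₐ[K] End K B, ∀ a, s * D.glue (a, 0) * s' = D.glue (0, τ a) := by
  choose τ hτ using D.exists_conj_glue_left h2 hs hsD hD
  have eq_of_glue {b b' : End K B} (h : D.glue (0, b) = D.glue (0, b')) : b = b' :=
    congrArg Prod.snd (D.glue_injective h)
  let τ' : End K A →ₗ[K] End K B :=
    { toFun := τ
      map_add' := fun a a' => eq_of_glue <| by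
        rw [← hτ, ← add_zero (0 : End K A), ← Prod.mk_add_mk, map_add, ← hτ, ← hτ, ← add_mul,
          ← mul_add, ← map_add, Prod.mk_add_mk, add_zero]
      map_smul' := fun r a => eq_of_glue <| by
        rw [← hτ, RingHom.id_apply, ← smul_zero r, ← Prod.smul_mk, map_smul, mul_smul_comm,
          smul_mul_assoc, hτ, ← map_smul, Prod.smul_mk, smul_zero] }
  refine ⟨AlgHom.ofLinearMap τ' (eq_of_glue ?_) fun a a' => eq_of_glue ?_, hτ⟩
  · exact (hτ 1).symm.trans (D.conj_glue_one_zero h2 hs hsD)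
  · change D.glue (0, τ (a * a')) = D.glue (0, τ a * τ a')
    calc D.glue (0, τ (a * a')) = s * (D.glue (a, 0) * D.glue (a', 0)) * s' := by
          rw [← hτ, ← map_mul, Prod.mk_mul_mk, mul_zero]
      _ = s * D.glue (a, 0) * (s' * s) * D.glue (a', 0) * s' := by
          simp only [hs.inv_mul, mul_one, mul_assoc]
      _ = D.glue (0, τ a) * D.glue (0, τ a') := by simp only [← hτ, mul_assoc]
      _ = D.glue (0, τ a * τ a') := by rw [← map_mul, Prod.mk_mul_mk, mul_zero]

lemma OrthSum.adjPair_conj (D : OrthSum f fA fB) (hs : IsometryPair f s s') {a : End K A}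
    {b : End K B} (hab : s * D.glue (a, 0) * s' = D.glue (0, b)) (ha : AdjPair fA a a) :
    AdjPair fB b b := by
  have hadj : AdjPair f (D.glue (a, 0)) (D.glue (a, 0)) :=
    D.adjPair_glue_iff.mpr ⟨ha, LinearMap.isAdjointPair_zero⟩
  have hconj := (hs.adj.mul hadj).mul hs.symm.adj
  rw [← mul_assoc, hab] at hconj
  exact (D.adjPair_glue_iff.mp hconj).2

-- The reverser is the commutator of `s` with the isometry which is a reverser on the
-- `1`-eigenspace of `e` and the identity on the `-1`-eigenspace.
theorem RevSystem.hasOmegaReverser_of_swap [FiniteDimensional K V] {c N e : End K V}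
    {ε₁ ε₂ ε₃ : K} (h2 : (2 : K) ≠ 0) (hε₁ : ε₁ * ε₁ = 1) (hε₂ : ε₂ * ε₂ = 1)
    (hε₃ : ε₃ * ε₃ = 1) (S : RevSystem f c N s ε₁ ε₂ ε₃) (he : AdjPair f e e)
    (hee : e * e = 1) (hc : Commute c e) (hN : Commute N e) (hse : s * e = -(e * s)) :
    HasOmegaReverser f c N := by
  have hs := S.isometryPair hε₃
  obtain ⟨U, W, D, rfl, hD⟩ := exists_orthSum_of_involution h2 S.quad he hee
  obtain ⟨c, rfl⟩ := hD c hc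
  obtain ⟨N, rfl⟩ := hD N hN
  have S' := S.forget_s
  rw [← map_one D.glue] at S'
  obtain ⟨b, hb⟩ := RevSystem.exists_isReverser h2 (S'.left D)
  obtain ⟨τ, hτ⟩ := D.exists_conj_algHom h2 hs hse hD
  have hone := D.conj_glue_one_zero h2 hs hse
  have hτ_eq {x : End K U × End K W} {ε : K} (hε : ε * ε = 1)
      (hx : s * D.glue x = ε • (D.glue x * s)) : x.2 = τ (ε • x.1) := by
    have hconj : D.glue (0, τ x.1) = D.glue (0, ε • x.2) := by
      rw [← hτ, show (x.1, 0) = x * (1, 0) by ext <;> simp, map_mul, ← mul_assoc, hx,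
        smul_mul_assoc, smul_mul_assoc, mul_assoc, mul_assoc, ← mul_assoc s, hone, ← map_mul,
        ← map_smul]
      congr 1
      ext <;> simp
    have hsnd : τ x.1 = ε • x.2 := congrArg Prod.snd (D.glue_injective hconj)
    rw [map_smul, hsnd, smul_smul, hε, one_smul]
  have hbW : IsReverser (f.restrict W) c.2 N.2 (τ b) := by
    refine ⟨D.adjPair_conj hs (hτ b) hb.adj, ?_, ?_, ?_⟩
    · rw [← map_mul, hb.mul_self, map_one]
    · rw [hτ_eq hε₁ S.s_mul_c, ← map_mul, ← map_mul, mul_smul_comm, hb.mul_c, smul_mul_assoc]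
    · rw [hτ_eq hε₂ S.s_mul_N, ← map_mul, ← map_mul, ← map_neg, mul_smul_comm, hb.mul_N,
        smul_mul_assoc, smul_neg]
  have hcomm := InOmega.commutator (D.isometryPair_glue hb.isometryPair .one) hs
  have hconj : s * D.glue (b, 1) * (ε₃ • s) = D.glue (1, τ b) := by
    have hsub : (b, (1 : End K W)) = 1 - (1, 0) + (b, 0) := by ext <;> simp
    rw [hsub, map_add, map_sub, map_one, mul_add, add_mul, hτ, mul_sub, sub_mul, hone, mul_one,
      hs.mul_inv, ← map_one D.glue, ← map_sub, ← map_add]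
    congr 1
    ext <;> simp
  rw [mul_assoc, mul_assoc, ← mul_assoc s, hconj, ← map_mul, Prod.mk_mul_mk, mul_one,
    one_mul] at hcomm
  exact ⟨_, IsReverser.glue D (b := (b, τ b)) hb hbW, hcomm⟩

end Swap

/-! ### Skew reversing factors -/

section Skew

variable {f : LinearMap.BilinForm K V} {c N s : End K V} {ε₁ ε₂ ε₃ : K} {U W : Submodule K V}

lemma NondegOn.sup (hf : IsQuadSpace f) (hU : NondegOn f U) (hW : NondegOn f W)
    (hUW : ∀ u ∈ U, ∀ w ∈ W, f u w = 0) : NondegOn f (U ⊔ W) := by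
  intro y hy hperp
  obtain ⟨u, hu, w, hw, rfl⟩ := Submodule.mem_sup.mp hy
  have hu0 : u = 0 := hU u hu fun t ht => by
    have h := hperp t (Submodule.mem_sup_left ht)
    rwa [map_add, LinearMap.add_apply, hf.symm w, hUW t ht w hw, add_zero] at h
  have hw0 : w = 0 := hW w hw fun t ht => by
    have h := hperp t (Submodule.mem_sup_right ht)
    rwa [map_add, LinearMap.add_apply, hUW u hu t ht, zero_add] at h
  rw [hu0, hw0, add_zero]

lemma NondegOn.map {s' : End K V} (hs : IsometryPair f s s') (hU : NondegOn f U) :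
    NondegOn f (U.map s) := by
  rintro _ ⟨u, hu, rfl⟩ hperp
  rw [hU u hu fun t ht => by rw [← hs.map_map]; exact hperp _ ⟨t, ht, rfl⟩, map_zero]

lemma exists_involution_of_isCompl (hf : IsQuadSpace f) (hUW : IsCompl U W)
    (horth : ∀ u ∈ U, ∀ w ∈ W, f u w = 0) :
    ∃ e, AdjPair f e e ∧ e * e = 1 ∧
      (∀ X : End K V, (∀ u ∈ U, X u ∈ U) → (∀ w ∈ W, X w ∈ W) → Commute X e) ∧
      ∀ X : End K V, (∀ u ∈ U, X u ∈ W) → (∀ w ∈ W, X w ∈ U) → X * e = -(e * X) := by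
  let D := OrthSum.ofIsCompl hf hUW horth
  let e := D.glue (1, -1)
  have heU : ∀ u ∈ U, e u = u := fun u hu => by
    have h := OrthSum.glue_apply D (1, -1) (⟨u, hu⟩, 0)
    rw [show D.equiv (⟨u, hu⟩, 0) = u by simp [D, OrthSum.ofIsCompl]] at h
    rw [h]
    simp [D, OrthSum.ofIsCompl]
  have heW : ∀ w ∈ W, e w = -w := fun w hw => by
    have h := OrthSum.glue_apply D (1, -1) (0, ⟨w, hw⟩)
    rw [show D.equiv (0, ⟨w, hw⟩) = w by simp [D, OrthSum.ofIsCompl]] at h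
    rw [h]
    simp [D, OrthSum.ofIsCompl]
  have hext {X Y : End K V} (hU : ∀ u ∈ U, X u = Y u) (hW : ∀ w ∈ W, X w = Y w) : X = Y := by
    refine LinearMap.ext fun v => ?_
    obtain ⟨u, hu, w, hw, rfl⟩ := Submodule.mem_sup.mp
      (hUW.sup_eq_top ▸ Submodule.mem_top : v ∈ U ⊔ W)
    rw [map_add, map_add, hU u hu, hW w hw]
  refine ⟨e, D.adjPair_glue_iff.mpr
    ⟨LinearMap.isAdjointPair_one, AdjPair.neg LinearMap.isAdjointPair_one⟩, ?_,
    fun X hU hW => ?_, fun X hU hW => ?_⟩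
  · exact hext (fun u hu => by simp [heU u hu]) fun w hw => by simp [heW w hw]
  · exact hext (fun u hu => by simp [heU u hu, heU _ (hU u hu)])
      fun w hw => by simp [heW w hw, heW _ (hW w hw)]
  · exact hext (fun u hu => by simp [heU u hu, heW _ (hU u hu)])
      fun w hw => by simp [heW w hw, heU _ (hW w hw)]

lemma map_mem_map_of_mul_eq_smul {X : End K V} {a : K} (ha : a * a = 1)
    (hX : s * X = a • (X * s)) (hU : ∀ x ∈ U, X x ∈ U) : ∀ x ∈ U.map s, X x ∈ U.map s := by
  rintro _ ⟨u, hu, rfl⟩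
  refine ⟨a • X u, U.smul_mem a (hU u hu), ?_⟩
  rw [map_smul, ← End.mul_apply, hX, LinearMap.smul_apply, smul_smul, ha, one_smul,
    End.mul_apply]

lemma form_eq_zero_of_mem_moduleSpan {ι κ : Type*} {z : ι → V} {w : κ → V}
    (hc : AdjPair f c c) (hN : AdjPair f N (-N)) (hcN : Commute c N)
    (hzw : ∀ l m i j, f ((c ^ l * N ^ m) (z i)) (w j) = 0) {x y : V}
    (hx : x ∈ moduleSpan c N z) (hy : y ∈ moduleSpan c N w) : f x y = 0 := by
  induction hx, hy using Submodule.span_induction₂ with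
  | mem_mem x y hx hy =>
    obtain ⟨⟨l, m, i⟩, rfl⟩ := hx
    obtain ⟨⟨l', m', j⟩, rfl⟩ := hy
    rw [form_monomial_monomial hc hN hcN, hzw, mul_zero]
  | zero_left => simp
  | zero_right => simp
  | add_left _ _ _ _ _ _ h h' => rw [map_add, LinearMap.add_apply, h, h', add_zero]
  | add_right _ _ _ _ _ _ h h' => rw [map_add, h, h', add_zero]
  | smul_left _ _ _ _ _ h => rw [map_smul, LinearMap.smul_apply, h, smul_zero]
  | smul_right _ _ _ _ _ h => rw [map_smul, h, smul_zero]

theorem RevSystem.hasOmegaReverser_of_orthogonal_image [FiniteDimensional K V]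
    (h2 : (2 : K) ≠ 0) (hε₁ : ε₁ * ε₁ = 1) (hε₂ : ε₂ * ε₂ = 1) (hε₃ : ε₃ * ε₃ = 1)
    (S : RevSystem f c N s ε₁ ε₂ ε₃) (hI : IsIndecomposable f c N s) (hU0 : U ≠ ⊥)
    (hU : NondegOn f U) (hc : ∀ x ∈ U, c x ∈ U) (hN : ∀ x ∈ U, N x ∈ U)
    (hUs : ∀ u ∈ U, ∀ w ∈ U, f u (s w) = 0) : HasOmegaReverser f c N := by
  have hs := S.isometryPair hε₃
  have horth : ∀ u ∈ U, ∀ w ∈ U.map s, f u w = 0 := by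
    rintro u hu _ ⟨w, hw, rfl⟩
    exact hUs u hu w hw
  have hss (v : V) : s (s v) = ε₃ • v := LinearMap.congr_fun S.s_mul_s v
  have hsW : ∀ w ∈ U.map s, s w ∈ U := by
    rintro _ ⟨w, hw, rfl⟩
    exact hss w ▸ U.smul_mem ε₃ hw
  have hcW := map_mem_map_of_mul_eq_smul hε₁ S.s_mul_c hc
  have hNW := map_mem_map_of_mul_eq_smul hε₂ S.s_mul_N hN
  have hsup {X : End K V} (h : ∀ u ∈ U, X u ∈ U ⊔ U.map s)
      (h' : ∀ u ∈ U.map s, X u ∈ U ⊔ U.map s) : ∀ v ∈ U ⊔ U.map s, X v ∈ U ⊔ U.map s :=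
    sup_le (c := (U ⊔ U.map s).comap X) h h'
  have htop : U ⊔ U.map s = ⊤ :=
    (hI _ (hsup (fun u hu => Submodule.mem_sup_left (hc u hu))
        fun u hu => Submodule.mem_sup_right (hcW u hu))
      (hsup (fun u hu => Submodule.mem_sup_left (hN u hu))
        fun u hu => Submodule.mem_sup_right (hNW u hu))
      (hsup (fun u hu => Submodule.mem_sup_right ⟨u, hu, rfl⟩)
        fun u hu => Submodule.mem_sup_left (hsW u hu))
      (hU.sup S.quad (hU.map hs) horth)).resolve_left fun h => hU0 (sup_eq_bot_iff.mp h).1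
  have hdisj : Disjoint U (U.map s) := Submodule.disjoint_def.mpr fun y hyU hyW =>
    hU y hyU fun t ht => by rw [S.quad.symm]; exact horth t ht y hyW
  obtain ⟨e, he, hee, hcomm, hswap⟩ :=
    exists_involution_of_isCompl S.quad ⟨hdisj, codisjoint_iff.mpr htop⟩ horth
  exact S.hasOmegaReverser_of_swap h2 hε₁ hε₂ hε₃ he hee (hcomm c hc hcW) (hcomm N hN hNW)
    (hswap s (fun u hu => ⟨u, hu, rfl⟩) hsW)

lemma RevSystem.hasOmegaReverser_of_orthogonal_generators [FiniteDimensional K V]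
    (h2 : (2 : K) ≠ 0) (hε₁ : ε₁ * ε₁ = 1) (hε₂ : ε₂ * ε₂ = 1) (hε₃ : ε₃ * ε₃ = 1)
    (S : RevSystem f c N s ε₁ ε₂ ε₃) (hI : IsIndecomposable f c N s) {ι : Type*} {z : ι → V}
    {i₀ : ι} (hz0 : z i₀ ≠ 0) (hnd : NondegOn f (moduleSpan c N z))
    (hz : ∀ l m i j, f ((c ^ l * N ^ m) (s (z i))) (z j) = 0) : HasOmegaReverser f c N := by
  refine S.hasOmegaReverser_of_orthogonal_image h2 hε₁ hε₂ hε₃ hI (U := moduleSpan c N z) ?_ hnd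
    c_mem_moduleSpan (N_mem_moduleSpan S.comm) fun u hu w hw => ?_
  · exact fun hbot => hz0 ((Submodule.mem_bot K).mp (hbot ▸ mem_moduleSpan c N z i₀))
  · have hsw : s w ∈ moduleSpan c N fun i => s (z i) :=
      map_mem_of_mem_moduleSpan S.s_mul_c S.s_mul_N (U := moduleSpan c N fun i => s (z i))
        (fun l m i => Submodule.subset_span ⟨(l, m, i), rfl⟩) w hw
    rw [S.quad.symm]
    exact form_eq_zero_of_mem_moduleSpan S.adj_c S.adj_N S.comm hz hsw hu

lemma RevSystem.adjPair_monomial_mul_s (S : RevSystem f c N s ε₁ ε₂ ε₃) (l m : ℕ) :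
    AdjPair f (c ^ l * N ^ m * s) ((ε₃ * (ε₁ ^ l * (-ε₂) ^ m)) • (c ^ l * N ^ m * s)) := by
  have hadj := (adjPair_monomial S.adj_c S.adj_N S.comm l m).mul S.adj_s
  have hcomm : s * (c ^ l * N ^ m) = (ε₁ ^ l * ε₂ ^ m) • (c ^ l * N ^ m * s) :=
    LinearMap.ext fun x => apply_monomial_of_mul_eq_smul S.s_mul_c S.s_mul_N l m x
  rw [smul_mul_smul_comm, hcomm, smul_smul] at hadj
  convert hadj using 2
  rw [← neg_one_mul ε₂, mul_pow]
  ring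

end Skew

section CaseA

variable {f : LinearMap.BilinForm K V} {c N s : End K V}

lemma linearIndependent_pair_of_mul_self (hm1 : ∀ a b : K, a * a + b * b = 0 → a = 0)
    (hss : s * s = -1) {v : V} (hv : v ≠ 0) : LinearIndependent K ![v, s v] := by
  rw [LinearIndependent.pair_iff]
  intro a b hab
  have hssv : s (s v) = -v := LinearMap.congr_fun hss v
  have hsab : a • s v - b • v = 0 := by
    simpa [hssv, ← sub_eq_add_neg] using congrArg s hab
  have hsum : (a * a + b * b) • v = 0 :=
    calc (a * a + b * b) • v = a • (a • v + b • s v) - b • (a • s v - b • v) := by module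
      _ = 0 := by rw [hab, hsab, smul_zero, smul_zero, sub_zero]
  have hsq := (smul_eq_zero.mp hsum).resolve_right hv
  exact ⟨hm1 a b hsq, hm1 b a (by rw [add_comm, hsq])⟩

lemma RevSystem.adjPair_monomial_mul_s_of_skew (S : RevSystem f c N s 1 (-1) (-1)) (l m : ℕ) :
    AdjPair f (c ^ l * N ^ m * s) (-(c ^ l * N ^ m * s)) := by
  simpa using S.adjPair_monomial_mul_s l m

lemma exists_orthogonal_image_of_odd [FiniteDimensional K V] (h2 : (2 : K) ≠ 0)
    (hm1 : ∀ a b : K, a * a + b * b = 0 → a = 0) (S : RevSystem f c N s 1 (-1) (-1)) {k : ℕ}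
    (hodd : Odd k) (hk : N ^ (k + 1) = 0) (hk0 : N ^ k ≠ 0)
    (hc : c ∈ Algebra.adjoin K {N * N}) :
    ∃ z : Fin 2 → V, z 0 ≠ 0 ∧ NondegOn f (moduleSpan c N z) ∧
      ∀ l m i j, f ((c ^ l * N ^ m) (s (z i))) (z j) = 0 := by
  obtain ⟨x, hx⟩ := DFunLike.ne_iff.mp hk0
  have hNs : (N ^ k) (s x) = -s ((N ^ k) x) := by
    have h := mul_pow_of_mul_eq_smul S.s_mul_N k
    rw [hodd.neg_one_pow, neg_one_smul] at h
    rw [← End.mul_apply s, h, LinearMap.neg_apply, neg_neg, End.mul_apply]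
  have hli : LinearIndependent K fun i => (N ^ k) (![x, s x] i) := by
    have hss : -s * -s = -1 := by rw [neg_mul_neg, S.s_mul_s, neg_one_smul]
    convert linearIndependent_pair_of_mul_self hm1 hss hx with i
    fin_cases i <;> simp [hNs]
  obtain ⟨y, hy⟩ := exists_dual_chain S.quad hk hli 0
  have hxy (l : ℕ) : f ((N ^ l) x) y = if l = k then 1 else 0 := by simpa using hy l 0
  have hsxy (l m : ℕ) : f ((c ^ l * N ^ m) (s x)) y = 0 := by
    have hmem : (c ^ l * N ^ m) (s x) ∈ genSpan N fun _ : Unit => s x := by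
      rw [← moduleSpan_eq_genSpan hc]
      exact Submodule.subset_span ⟨(l, m, ()), rfl⟩
    refine (Submodule.span_le (p := LinearMap.ker (f.flip y))).mpr ?_ hmem
    rintro _ ⟨⟨l, i⟩, rfl⟩
    simpa using hy l 1
  refine ⟨![x, y], ?_,
    (isReversingFrame_pair h2 S.quad S.adj_c S.adj_N S.comm hc hk hodd hxy).nondegOn, ?_⟩
  · rintro (rfl : x = 0)
    simp at hx
  · intro l m i j
    have hskew := S.adjPair_monomial_mul_s_of_skew l m
    have hself := form_apply_self_of_skew h2 S.quad hskew
    have hsyx : f ((c ^ l * N ^ m) (s y)) x = 0 := by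
      rw [← End.mul_apply, hskew, LinearMap.neg_apply, map_neg, S.quad.symm, End.mul_apply, hsxy,
        neg_zero]
    fin_cases i <;> fin_cases j
    · exact hself x
    · exact hsxy l m
    · exact hsyx
    · exact hself y

lemma exists_orthogonal_image [FiniteDimensional K V] [Nontrivial V] (h2 : (2 : K) ≠ 0)
    (hm1 : ∀ a b : K, a * a + b * b = 0 → a = 0) (S : RevSystem f c N s 1 (-1) (-1))
    (hI : IsIndecomposable f c N s) :
    ∃ (ι : Type) (z : ι → V) (i₀ : ι), z i₀ ≠ 0 ∧ NondegOn f (moduleSpan c N z) ∧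
      ∀ l m i j, f ((c ^ l * N ^ m) (s (z i))) (z j) = 0 := by
  rcases exists_nondegOn_moduleSpan_or_odd h2 (by ring) hI S with
    ⟨x, hx, hnd⟩ | ⟨k, hodd, hk, hk0, hc⟩
  · exact ⟨Unit, _, (), hx, hnd, fun l m _ _ =>
      form_apply_self_of_skew h2 S.quad (S.adjPair_monomial_mul_s_of_skew l m) x⟩
  · obtain ⟨z, hz⟩ := exists_orthogonal_image_of_odd h2 hm1 S hodd hk hk0 hc
    exact ⟨Fin 2, z, 0, hz⟩

theorem RevSystem.hasOmegaReverser_of_skew [FiniteDimensional K V] (h2 : (2 : K) ≠ 0)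
    (hm1 : ∀ a b : K, a * a + b * b = 0 → a = 0) (S : RevSystem f c N s 1 (-1) (-1)) :
    HasOmegaReverser f c N := by
  refine RevSystem.induction (P := fun _ _ _ f c N _ => HasOmegaReverser f c N) ?_ ?_ ?_ V f c N s S
  · exact fun V A B _ _ _ _ _ _ _ _ f fA fB D c N _ _ hA hB => hA.glue D hB
  · exact fun V _ _ _ f c N _ => ⟨1, isReverser_of_subsingleton f c N, .one⟩
  · intro V _ _ _ _ f c N s S hI
    obtain ⟨ι, z, i₀, hz0, hnd, hz⟩ := exists_orthogonal_image h2 hm1 S hI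
    exact S.hasOmegaReverser_of_orthogonal_generators h2 (by ring) (by ring) (by ring) hI hz0 hnd hz

end CaseA

/-! ### Reflections -/

/-- The reflection in the hyperplane orthogonal to `x` (the identity if `f x x = 0`). -/
noncomputable def hyperplaneReflection (f : LinearMap.BilinForm K V) (x : V) : End K V :=
  LinearMap.transvection ((-(2 / f x x)) • f x) x

/-- `g` lies in the coset of `Ω(V)` that contains the reflection in a vector of norm `d`. -/
def InReflectionCoset (f : LinearMap.BilinForm K V) (d : K) (g : End K V) : Prop :=
  ∃ x, f x x = d ∧ InOmega f (hyperplaneReflection f x * g)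

section Reflection

variable {f : LinearMap.BilinForm K V} {fA : LinearMap.BilinForm K A}
  {fB : LinearMap.BilinForm K B} {g g' h h' k b : End K V} {x y : V} {d : K}

local notation "ρ" => hyperplaneReflection

lemma hyperplaneReflection_apply (x v : V) : ρ f x v = v - (2 / f x x * f x v) • x := by
  rw [hyperplaneReflection, LinearMap.transvection.apply, LinearMap.smul_apply, smul_eq_mul,
    neg_mul, neg_smul, sub_eq_add_neg]

lemma hyperplaneReflection_apply_self (hx : f x x ≠ 0) : ρ f x x = -x := by
  rw [hyperplaneReflection_apply, div_mul_cancel₀ _ hx]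
  module

lemma hyperplaneReflection_apply_of_eq_zero (hxy : f x y = 0) : ρ f x y = y := by
  rw [hyperplaneReflection_apply, hxy, mul_zero, zero_smul, sub_zero]

lemma hyperplaneReflection_smul {a : K} (ha : a ≠ 0) (x : V) : ρ f (a • x) = ρ f x := by
  ext v
  have hcoeff : 2 / f (a • x) (a • x) * f (a • x) v * a = 2 / f x x * f x v := by
    by_cases hx : f x x = 0
    · simp [hx]
    · simp only [map_smul, LinearMap.smul_apply, smul_eq_mul]
      field_simp
  rw [hyperplaneReflection_apply, hyperplaneReflection_apply, smul_smul, hcoeff]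

lemma hyperplaneReflection_neg (x : V) : ρ f (-x) = ρ f x := by
  rw [← hyperplaneReflection_smul (neg_ne_zero.mpr one_ne_zero : (-1 : K) ≠ 0) x, neg_one_smul]

lemma hyperplaneReflection_mul_self (hx : f x x ≠ 0) : ρ f x * ρ f x = 1 := by
  ext v
  rw [End.mul_apply, hyperplaneReflection_apply x v, map_sub, map_smul,
    hyperplaneReflection_apply_self hx, hyperplaneReflection_apply, End.one_apply]
  module

lemma det_hyperplaneReflection [FiniteDimensional K V] (hx : f x x ≠ 0) :
    LinearMap.det (ρ f x) = -1 := by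
  rw [hyperplaneReflection, LinearMap.transvection.det, LinearMap.smul_apply, smul_eq_mul,
    neg_mul, div_mul_cancel₀ _ hx]
  ring

lemma adjPair_hyperplaneReflection (hf : IsQuadSpace f) (x : V) :
    AdjPair f (ρ f x) (ρ f x) := fun v w => by
  simp only [hyperplaneReflection_apply, map_sub, map_smul, LinearMap.sub_apply,
    LinearMap.smul_apply, smul_eq_mul]
  rw [hf.symm v x]
  ring

lemma isometryPair_hyperplaneReflection (hf : IsQuadSpace f) (hx : f x x ≠ 0) :
    IsometryPair f (ρ f x) (ρ f x) :=
  .of_involution (adjPair_hyperplaneReflection hf x) (hyperplaneReflection_mul_self hx)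

lemma conj_hyperplaneReflection (hg : IsometryPair f g g') (x : V) :
    g * ρ f x * g' = ρ f (g x) := by
  ext v
  simp only [End.mul_apply, hyperplaneReflection_apply, map_sub, map_smul]
  rw [hg.map_map, ← End.mul_apply g g', hg.mul_inv, hg.adj x v, End.one_apply]

lemma exists_isometry_apply_eq_or_neg (h2 : (2 : K) ≠ 0) (hf : IsQuadSpace f)
    (hx : f x x ≠ 0) (hxy : f x x = f y y) :
    ∃ g, IsometryPair f g g ∧ (g y = x ∨ g y = -x) := by
  by_cases hsub : f (x - y) (x - y) = 0
  · have hadd : f (x + y) (x + y) ≠ 0 := by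
      intro hadd
      simp only [map_add, map_sub, LinearMap.add_apply, LinearMap.sub_apply] at hadd hsub
      have : (2 * 2) * f x x = 0 := by linear_combination hadd + hsub + 2 * hxy
      exact hx ((mul_eq_zero.mp this).resolve_left (mul_ne_zero h2 h2))
    refine ⟨ρ f (x + y), isometryPair_hyperplaneReflection hf hadd, .inr ?_⟩
    have hcoeff : 2 / f (x + y) (x + y) * f (x + y) y = 1 := by
      rw [div_mul_eq_mul_div, div_eq_one_iff_eq hadd]
      simp only [map_add, LinearMap.add_apply]
      rw [hf.symm y x]
      linear_combination -hxy
    rw [hyperplaneReflection_apply, hcoeff]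
    module
  · refine ⟨ρ f (x - y), isometryPair_hyperplaneReflection hf hsub, .inl ?_⟩
    have hcoeff : 2 / f (x - y) (x - y) * f (x - y) y = -1 := by
      rw [div_mul_eq_mul_div, div_eq_iff hsub]
      simp only [map_sub, LinearMap.sub_apply]
      rw [hf.symm y x]
      linear_combination hxy
    rw [hyperplaneReflection_apply, hcoeff]
    module

lemma inOmega_hyperplaneReflection_mul (h2 : (2 : K) ≠ 0) (hf : IsQuadSpace f)
    (hx : f x x ≠ 0) (hxy : f x x = f y y) : InOmega f (ρ f x * ρ f y) := by
  obtain ⟨g, hg, hgy⟩ := exists_isometry_apply_eq_or_neg h2 hf hx hxy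
  have hconj : g * ρ f y * g = ρ f x := by
    rw [conj_hyperplaneReflection hg]
    rcases hgy with hgy | hgy <;> rw [hgy]
    exact hyperplaneReflection_neg x
  rw [← hconj]
  exact InOmega.commutator hg (isometryPair_hyperplaneReflection hf (hxy ▸ hx))

lemma InOmega.mul_left_comm (hg : IsometryPair f g g') (hh : IsometryPair f h h')
    (hk : InOmega f (g * (h * k))) : InOmega f (h * (g * k)) := by
  convert (InOmega.commutator hh hg).mul hk using 1
  calc h * (g * k) = h * g * (h' * (g' * g) * h) * k := by
        rw [hg.inv_mul, mul_one, hh.inv_mul, mul_one, mul_assoc]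
    _ = h * g * h' * g' * (g * (h * k)) := by simp only [mul_assoc]

lemma InOmega.of_hyperplaneReflection_mul (h2 : (2 : K) ≠ 0) (hf : IsQuadSpace f)
    (hx : f x x ≠ 0) (hxy : f x x = f y y) (hk : InOmega f (ρ f x * (ρ f y * k))) :
    InOmega f k := by
  have hy : f y y ≠ 0 := hxy ▸ hx
  convert (inOmega_hyperplaneReflection_mul h2 hf hy hxy.symm).mul hk using 1
  rw [mul_assoc, ← mul_assoc (ρ f x), hyperplaneReflection_mul_self hx, one_mul, ← mul_assoc,
    hyperplaneReflection_mul_self hy, one_mul]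

namespace InReflectionCoset

lemma mul (h2 : (2 : K) ≠ 0) (hf : IsQuadSpace f) (hd : d ≠ 0)
    (hg : InReflectionCoset f d g) (hh : InReflectionCoset f d h) : InOmega f (g * h) := by
  obtain ⟨x, rfl, hxg⟩ := hg
  obtain ⟨y, hy, hyh⟩ := hh
  obtain ⟨_, hiso⟩ := hxg.exists_isometryPair
  have hprod := InOmega.mul_left_comm hiso
    (isometryPair_hyperplaneReflection hf (hy.trans_ne hd)) (hxg.mul hyh)
  rw [mul_assoc] at hprod
  exact hprod.of_hyperplaneReflection_mul h2 hf (hy.trans_ne hd) hy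

lemma glue_left (D : OrthSum f fA fB) {g : End K A} {h : End K B}
    (hg : InReflectionCoset fA d g) (hh : InOmega fB h) :
    InReflectionCoset f d (D.glue (g, h)) := by
  obtain ⟨x, rfl, hxg⟩ := hg
  have hρ : ρ f (D.equiv (x, 0)) = D.glue (ρ fA x, 1) :=
    LinearMap.ext <| D.equiv.surjective.forall.mpr fun v => by
      rw [D.glue_apply, hyperplaneReflection_apply, hyperplaneReflection_apply, D.form_apply,
        D.form_apply, ← map_smul, ← map_sub]
      simp [Prod.sub_def]
  refine ⟨D.equiv (x, 0), by simp [D.form_apply], ?_⟩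
  rw [hρ, ← map_mul, Prod.mk_mul_mk, one_mul]
  exact D.inOmega_glue hxg hh

lemma glue_right (D : OrthSum f fA fB) {g : End K A} {h : End K B} (hg : InOmega fA g)
    (hh : InReflectionCoset fB d h) : InReflectionCoset f d (D.glue (g, h)) := by
  rw [← D.swap_glue]
  exact hh.glue_left D.swap hg

lemma inOmega_glue (h2 : (2 : K) ≠ 0) (hf : IsQuadSpace f) (D : OrthSum f fA fB) (hd : d ≠ 0)
    {g : End K A} {h : End K B} (hg : InReflectionCoset fA d g)
    (hh : InReflectionCoset fB d h) : InOmega f (D.glue (g, h)) := by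
  have hprod := mul h2 hf hd (hg.glue_left D .one) (hh.glue_right D .one)
  rwa [← map_mul, Prod.mk_mul_mk, mul_one, one_mul] at hprod

end InReflectionCoset

lemma exists_hyperplaneReflection_eq_norm_one_or_neg_one
    (hsq : ∀ d : K, ∃ a, d = a * a ∨ d = -(a * a)) (hx : f x x ≠ 0) :
    ∃ y, (f y y = 1 ∨ f y y = -1) ∧ ρ f y = ρ f x := by
  obtain ⟨a, ha⟩ := hsq (f x x)
  have ha0 : a ≠ 0 := by
    rintro rfl
    simp [hx] at ha
  refine ⟨a⁻¹ • x, ?_, hyperplaneReflection_smul (inv_ne_zero ha0) x⟩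
  simp only [map_smul, LinearMap.smul_apply, smul_eq_mul]
  rcases ha with ha | ha <;> rw [ha]
  · left; field_simp
  · right; field_simp

lemma exists_apply_eq_neg_of_involution (h2 : (2 : K) ≠ 0) (hf : IsQuadSpace f)
    (hb : AdjPair f b b) (hbb : b * b = 1) (hb1 : b ≠ 1) : ∃ x, b x = -x ∧ f x x ≠ 0 := by
  obtain ⟨v, hv⟩ := exists_form_apply_self_ne_zero h2 hf
    (Z := 1 - b) (LinearMap.isAdjointPair_one.sub hb) (sub_ne_zero.mpr hb1.symm)
  have hbv : b (b v) = v := LinearMap.congr_fun hbb v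
  refine ⟨v - b v, by rw [map_sub, hbv, neg_sub], fun h0 => hv ?_⟩
  have h2v : 2 * f ((1 - b) v) v = f (v - b v) (v - b v) := by
    simp only [map_sub, LinearMap.sub_apply, End.one_apply, hb v (b v), hbv]
    rw [hb v v]
    ring
  rw [h0] at h2v
  exact (mul_eq_zero.mp h2v).resolve_left h2

lemma commute_hyperplaneReflection_of_apply_eq_neg (hb : IsometryPair f b b) (hx : b x = -x) :
    Commute (ρ f x) b := by
  have hconj := conj_hyperplaneReflection hb x
  rw [hx, hyperplaneReflection_neg] at hconj
  calc ρ f x * b = b * ρ f x * (b * b) := by rw [← mul_assoc, hconj]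
    _ = b * ρ f x := by rw [hb.mul_inv, mul_one]

lemma ker_hyperplaneReflection_mul_add_one_lt (h2 : (2 : K) ≠ 0) (hf : IsQuadSpace f)
    (hb : AdjPair f b b) (hx : b x = -x) (hxx : f x x ≠ 0) :
    LinearMap.ker (ρ f x * b + 1) < LinearMap.ker (b + 1) := by
  refine SetLike.lt_iff_le_and_exists.mpr ⟨fun v hv => ?_, x, by simp [hx], fun hx' => hxx ?_⟩
  · have hρbv : ρ f x (b v) = -v := eq_neg_of_add_eq_zero_left hv
    have hxv : f x v = 0 := by
      have hadj : -f x v = f x v := by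
        rw [← map_neg, ← hρbv, ← adjPair_hyperplaneReflection hf,
          hyperplaneReflection_apply_self hxx, map_neg, LinearMap.neg_apply, ← hb, hx, map_neg,
          LinearMap.neg_apply, neg_neg]
      have h2xv : 2 * f x v = 0 := by linear_combination -hadj
      exact (mul_eq_zero.mp h2xv).resolve_left h2
    have hbv : b v = -v := by
      rw [← End.one_apply (R := K) (b v), ← hyperplaneReflection_mul_self hxx, End.mul_apply,
        hρbv, map_neg, hyperplaneReflection_apply_of_eq_zero hxv]
    rw [LinearMap.mem_ker, LinearMap.add_apply, hbv, End.one_apply, neg_add_cancel]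
  · have h2x : (2 : K) • x = 0 := by
      rw [LinearMap.mem_ker, LinearMap.add_apply, End.mul_apply, hx, map_neg,
        hyperplaneReflection_apply_self hxx, neg_neg, End.one_apply, ← two_smul K] at hx'
      exact hx'
    rw [(smul_eq_zero.mp h2x).resolve_left h2, map_zero]

lemma exists_hyperplaneReflection_mul_involution (h2 : (2 : K) ≠ 0)
    (hsq : ∀ d : K, ∃ a, d = a * a ∨ d = -(a * a)) (hf : IsQuadSpace f)
    (hb : AdjPair f b b) (hbb : b * b = 1) (hb1 : b ≠ 1) :
    ∃ x, (f x x = 1 ∨ f x x = -1) ∧ AdjPair f (ρ f x * b) (ρ f x * b) ∧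
      ρ f x * b * (ρ f x * b) = 1 ∧
      LinearMap.ker (ρ f x * b + 1) < LinearMap.ker (b + 1) := by
  obtain ⟨x, hx, hxx⟩ := exists_apply_eq_neg_of_involution h2 hf hb hbb hb1
  have hcomm := commute_hyperplaneReflection_of_apply_eq_neg (.of_involution hb hbb) hx
  obtain ⟨y, hy, hyx⟩ := exists_hyperplaneReflection_eq_norm_one_or_neg_one hsq hxx
  refine ⟨y, hy, ?_, ?_, ?_⟩ <;> rw [hyx]
  · have hadj := (adjPair_hyperplaneReflection hf x).mul hb
    rwa [← hcomm.eq] at hadj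
  · rw [mul_assoc, ← mul_assoc b, ← hcomm.eq, mul_assoc, hbb, mul_one,
      hyperplaneReflection_mul_self hxx]
  · exact ker_hyperplaneReflection_mul_add_one_lt h2 hf hb hx hxx

lemma exists_inOmega_hyperplaneReflection_mul_of_three (h2 : (2 : K) ≠ 0) (hf : IsQuadSpace f)
    {x y z : V} (hx : f x x = 1 ∨ f x x = -1) (hy : f y y = 1 ∨ f y y = -1)
    (hz : f z z = 1 ∨ f z z = -1) (hk : InOmega f (ρ f x * (ρ f y * (ρ f z * k)))) :
    ∃ w, (f w w = 1 ∨ f w w = -1) ∧ InOmega f (ρ f w * k) := by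
  have ne_zero {v : V} (hv : f v v = 1 ∨ f v v = -1) : f v v ≠ 0 := by
    rcases hv with hv | hv <;> simp [hv]
  have hρ {v : V} (hv : f v v = 1 ∨ f v v = -1) :=
    isometryPair_hyperplaneReflection hf (ne_zero hv)
  have rotate {u v w : V} (hu : f u u = 1 ∨ f u u = -1) (hv : f v v = 1 ∨ f v v = -1)
      (hw : f w w = 1 ∨ f w w = -1) (h : InOmega f (ρ f u * (ρ f v * (ρ f w * k)))) :
      InOmega f (ρ f w * (ρ f u * (ρ f v * k))) := by
    rw [← mul_assoc (ρ f u)] at h ⊢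
    exact InOmega.mul_left_comm ((hρ hu).mul (hρ hv)) (hρ hw) h
  obtain hxy | hyz | hzx : f x x = f y y ∨ f y y = f z z ∨ f z z = f x x := by
    rcases hx with hx | hx <;> rcases hy with hy | hy <;> rcases hz with hz | hz <;>
      simp [hx, hy, hz]
  · exact ⟨z, hz, hk.of_hyperplaneReflection_mul h2 hf (ne_zero hx) hxy⟩
  · exact ⟨x, hx, (rotate hz hx hy (rotate hx hy hz hk)).of_hyperplaneReflection_mul h2 hf
      (ne_zero hy) hyz⟩
  · exact ⟨y, hy, (rotate hx hy hz hk).of_hyperplaneReflection_mul h2 hf (ne_zero hz) hzx⟩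

theorem inReflectionCoset_of_involution [FiniteDimensional K V] (h2 : (2 : K) ≠ 0)
    (hsq : ∀ d : K, ∃ a, d = a * a ∨ d = -(a * a)) (hf : IsQuadSpace f)
    (hb : AdjPair f b b) (hbb : b * b = 1) (hdet : LinearMap.det b = -1) :
    ∃ ε : K, (ε = 1 ∨ ε = -1) ∧ InReflectionCoset f ε b := by
  suffices h : ∃ x, (f x x = 1 ∨ f x x = -1) ∧ InOmega f (ρ f x * b) by
    obtain ⟨x, hx, hxb⟩ := h
    exact ⟨_, hx, x, rfl, hxb⟩
  have ne_zero {v : V} (hv : f v v = 1 ∨ f v v = -1) : f v v ≠ 0 := by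
    rcases hv with hv | hv <;> simp [hv]
  induction hU : LinearMap.ker (b + 1) using WellFoundedLT.induction generalizing b with
  | ind U ih =>
  subst hU
  have hb1 : b ≠ 1 := by
    rintro rfl
    rw [map_one] at hdet
    exact h2 (by linear_combination hdet)
  obtain ⟨x, hx, hadj₁, hmul₁, hlt₁⟩ :=
    exists_hyperplaneReflection_mul_involution h2 hsq hf hb hbb hb1
  by_cases hxb : ρ f x * b = 1
  · exact ⟨x, hx, hxb ▸ .one⟩
  obtain ⟨y, hy, hadj₂, hmul₂, hlt₂⟩ :=
    exists_hyperplaneReflection_mul_involution h2 hsq hf hadj₁ hmul₁ hxb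
  have hdet₂ : LinearMap.det (ρ f y * (ρ f x * b)) = -1 := by
    rw [map_mul, map_mul, hdet, det_hyperplaneReflection (ne_zero hx),
      det_hyperplaneReflection (ne_zero hy)]
    ring
  obtain ⟨z, hz, hzb⟩ := ih _ (hlt₂.trans hlt₁) hadj₂ hmul₂ hdet₂ rfl
  exact exists_inOmega_hyperplaneReflection_mul_of_three h2 hf hz hy hx hzb

end Reflection

/-! ### Norm equations over finite local rings -/

section NormEquation

variable {R : Type*} [CommRing R]

lemma exists_mul_self_eq_of_isNilpotent_sub_one (h2 : IsUnit (2 : R)) {m : R}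
    (hm : IsNilpotent (m - 1)) : ∃ a, a * a = m := by
  have hnil : IsNilpotent (aeval (1 : R) (X ^ 2 - C m : R[X])) := by
    rw [← isNilpotent_neg_iff]
    simpa using hm
  obtain ⟨a, ⟨-, ha⟩, -⟩ := existsUnique_nilpotent_sub_and_aeval_eq_zero hnil
    (by simpa [one_add_one_eq_two] using h2)
  refine ⟨a, ?_⟩
  rw [← sub_eq_zero, ← ha]
  simp [pow_two]

lemma exists_residue_mul_self_sub [IsLocalRing R] [Finite R] (h2 : IsUnit (2 : R)) {d : R}
    (hd : IsUnit d) (g : R) : ∃ a b : R, IsNilpotent (a * a - d * (b * b) - g) := by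
  let F := IsLocalRing.ResidueField R
  let π := IsLocalRing.residue R
  have : Finite F := Finite.of_surjective π IsLocalRing.residue_surjective
  let := Fintype.ofFinite F
  have hcard : Fintype.card F % 2 = 1 := FiniteField.odd_card_of_char_ne_two fun hchar => by
    refine (h2.map π).ne_zero ?_
    rw [map_ofNat]
    exact_mod_cast hchar ▸ CharP.cast_eq_zero F (ringChar F)
  obtain ⟨a, b, hab⟩ := FiniteField.exists_root_sum_quadratic
    (degree_X_pow_sub_C two_pos (π g))
    (degree_C_mul_X_pow 2 (neg_ne_zero.mpr (hd.map π).ne_zero)) hcard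
  obtain ⟨a, rfl⟩ := IsLocalRing.residue_surjective a
  obtain ⟨b, rfl⟩ := IsLocalRing.residue_surjective b
  have hmem : a * a - d * (b * b) - g ∈ IsLocalRing.maximalIdeal R := by
    rw [← IsLocalRing.residue_eq_zero_iff, ← hab]
    simp only [map_sub, map_mul, eval_sub, eval_mul, eval_pow, eval_X, eval_C]
    ring
  refine ⟨a, b, ?_⟩
  rwa [← mem_nilradical, ← Ring.jacobson_eq_nilradical_of_krullDimLE_zero,
    IsLocalRing.ringJacobson_eq_maximalIdeal]

theorem exists_mul_self_sub_mul_mul_self_eq [IsLocalRing R] [Finite R] (h2 : IsUnit (2 : R))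
    {d g : R} (hd : IsUnit d) (hg : IsUnit g) : ∃ a b : R, a * a - d * (b * b) = g := by
  obtain ⟨a, b, hab⟩ := exists_residue_mul_self_sub h2 hd g
  obtain ⟨u, hu⟩ : IsUnit (a * a - d * (b * b)) := by
    simpa using hab.isUnit_add_left_of_commute hg (Commute.all _ _)
  have hnil : IsNilpotent (↑u⁻¹ * g - 1) := by
    have hrw : ↑u⁻¹ * g - 1 = -↑u⁻¹ * (a * a - d * (b * b) - g) := by
      rw [← hu, mul_sub, neg_mul, u.inv_mul]
      ring
    exact hrw ▸ (Commute.all _ _).isNilpotent_mul_left hab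
  obtain ⟨r, hr⟩ := exists_mul_self_eq_of_isNilpotent_sub_one h2 hnil
  refine ⟨a * r, b * r, ?_⟩
  calc a * r * (a * r) - d * (b * r * (b * r))
      = (a * a - d * (b * b)) * (r * r) := by ring
    _ = g := by rw [hr, ← hu, u.mul_inv_cancel_left]

variable {c : End K V}

lemma exists_aeval_mul_aeval_eq_one [FiniteDimensional K V] {g : K[X]}
    (hg : IsUnit (aeval c g)) : ∃ h : K[X], aeval c g * aeval c h = 1 := by
  set x := aeval c g with hx
  have hx0 : (minpoly K x).coeff 0 ≠ 0 :=
    LinearMap.minpoly_coeff_zero_of_injective ((End.isUnit_iff x).mp hg).1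
  have hmin := minpoly.aeval K x
  rw [← divX_mul_X_add (minpoly K x), map_add, map_mul, aeval_X, aeval_C, add_eq_zero_iff_neg_eq]
    at hmin
  refine ⟨C (-((minpoly K x).coeff 0)⁻¹) * (minpoly K x).divX.comp g, ?_⟩
  rw [map_mul, aeval_comp, aeval_C, ← hx, ← Algebra.smul_def, mul_smul_comm, neg_smul,
    ← (commute_aeval (Commute.refl x) _).eq.symm, ← smul_neg, hmin, Algebra.algebraMap_eq_smul_one,
    smul_smul, inv_mul_cancel₀ hx0, one_smul]

lemma isUnit_mk_ker_aeval [FiniteDimensional K V] {g : K[X]} (hg : IsUnit (aeval c g)) :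
    IsUnit (Ideal.Quotient.mk (RingHom.ker (aeval (R := K) c)) g) := by
  obtain ⟨h, hgh⟩ := exists_aeval_mul_aeval_eq_one hg
  refine .of_mul_eq_one (Ideal.Quotient.mk _ h) ?_
  rw [← map_mul, ← map_one (Ideal.Quotient.mk _), Ideal.Quotient.eq, RingHom.mem_ker, map_sub,
    map_mul, hgh, map_one, sub_self]

theorem exists_aeval_mul_self_sub_eq [Finite K] [FiniteDimensional K V] [Nontrivial V]
    (h2 : (2 : K) ≠ 0) (hloc : ∀ g : K[X], IsNilpotent (aeval c g) ∨ IsUnit (aeval c g))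
    {d g : K[X]} (hd : IsUnit (aeval c d)) (hg : IsUnit (aeval c g)) :
    ∃ a b : K[X], aeval c (a * a - d * (b * b)) = aeval c g := by
  let π := Ideal.Quotient.mk (RingHom.ker (aeval (R := K) c))
  have : Finite V := Module.finite_of_finite K
  have : Finite (End K V) := DFunLike.finite _
  have : Finite (K[X] ⧸ RingHom.ker (aeval (R := K) c)) :=
    Finite.of_injective _ (RingHom.kerLift_injective (aeval (R := K) c).toRingHom)
  have : Nontrivial (K[X] ⧸ RingHom.ker (aeval (R := K) c)) :=
    Ideal.Quotient.nontrivial_iff.mpr (RingHom.ker_ne_top _)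
  have : IsLocalRing (K[X] ⧸ RingHom.ker (aeval (R := K) c)) :=
    IsLocalRing.of_isUnit_or_isUnit_one_sub_self fun a => by
      obtain ⟨p, rfl⟩ := Ideal.Quotient.mk_surjective a
      refine (hloc p).symm.imp isUnit_mk_ker_aeval fun hp => ?_
      rw [← map_one π, ← map_sub]
      exact isUnit_mk_ker_aeval (by simpa using hp.isUnit_one_sub)
  have hunit2 : IsUnit (2 : K[X] ⧸ RingHom.ker (aeval (R := K) c)) := by
    rw [← map_ofNat (algebraMap K (K[X] ⧸ RingHom.ker (aeval (R := K) c))) 2]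
    exact (IsUnit.mk0 _ h2).map _
  obtain ⟨a, b, hab⟩ := exists_mul_self_sub_mul_mul_self_eq hunit2 (isUnit_mk_ker_aeval hd)
    (isUnit_mk_ker_aeval hg)
  obtain ⟨a, rfl⟩ := Ideal.Quotient.mk_surjective a
  obtain ⟨b, rfl⟩ := Ideal.Quotient.mk_surjective b
  refine ⟨a, b, ?_⟩
  rwa [← sub_eq_zero, ← map_sub, ← RingHom.mem_ker, ← Ideal.Quotient.eq, map_sub, map_mul,
    map_mul, map_mul]

end NormEquation

section EvenPart

variable {f : LinearMap.BilinForm K V} {c N s : End K V}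

lemma mul_aeval_of_mul_eq_neg (h : s * c = -(c * s)) (g : K[X]) :
    s * aeval c g = aeval c (g.comp (-X)) * s := by
  have hsemi : SemiconjBy s c (-c) := by rw [SemiconjBy, h, neg_mul]
  rw [aeval_comp, map_neg, aeval_X]
  induction g using Polynomial.induction_on' with
  | add a b ha hb => rw [map_add, mul_add, ha, hb, map_add, add_mul]
  | monomial n a =>
    rw [aeval_monomial, aeval_monomial, ← Algebra.smul_def, ← Algebra.smul_def, mul_smul_comm,
      (hsemi.pow_right n).eq, smul_mul_assoc]

lemma comp_neg_X_comp_neg_X (g : K[X]) : (g.comp (-X)).comp (-X) = g := by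
  rw [comp_assoc, neg_comp, X_comp, neg_neg, comp_X]

lemma form_eq_zero_of_pow_apply_eq_zero [FiniteDimensional K V] (hc : AdjPair f c c) {g t : K[X]}
    (hgt : IsUnit (aeval c (g + t))) {n : ℕ} {x y : V} (hx : (aeval c g ^ n) x = 0)
    (hy : (aeval c t ^ n) y = 0) : f x y = 0 := by
  obtain ⟨h, hh⟩ := exists_aeval_mul_aeval_eq_one hgt
  rw [← map_mul] at hh
  obtain ⟨a, b, hab⟩ : IsCoprime (g ^ n) ((1 - g * h) ^ n) :=
    IsCoprime.pow ⟨h, 1, by ring⟩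
  have ht : aeval c (1 - g * h) = aeval c (h * t) := by
    rw [map_sub, map_one, ← hh, ← map_sub]
    congr 1
    ring
  have hy1 : y = (aeval c g ^ n) (aeval c a y) := by
    have hsum : aeval c (g ^ n * a) + aeval c (b * h ^ n * t ^ n) = 1 := by
      rw [← map_one (aeval (R := K) c), ← hab, map_add, mul_comm a, map_mul _ b (_ ^ n), map_pow,
        ht, ← map_pow, ← map_mul, mul_pow, mul_assoc]
    have hsumy := LinearMap.congr_fun hsum y
    rwa [LinearMap.add_apply, map_mul _ _ (t ^ n), End.mul_apply, map_pow _ t, hy, map_zero,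
      add_zero, End.one_apply, map_mul, map_pow, End.mul_apply, eq_comm] at hsumy
  rw [hy1, ← (hc.aeval g).pow n, hx, LinearMap.map_zero₂]

lemma IsIndecomposable.isNilpotent_or_isUnit_aeval_of_even [FiniteDimensional K V]
    (hI : IsIndecomposable f c N s) (S : RevSystem f c N s (-1) 1 1) {g : K[X]}
    (hg : g.comp (-X) = g) : IsNilpotent (aeval c g) ∨ IsUnit (aeval c g) := by
  refine hI.isNilpotent_or_isUnit S.quad (δ := 1) (a₁ := 1) (a₂ := 1) (a₃ := 1) ?_ ?_ ?_ ?_ <;>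
    rw [one_smul]
  · exact S.adj_c.aeval g
  · exact (commute_aeval (Commute.refl c) g).symm.eq
  · exact (commute_aeval (Commute.symm S.comm) g).symm.eq
  · rw [mul_aeval_of_mul_eq_neg (by simpa using S.s_mul_c), hg]

lemma RevSystem.hasOmegaReverser_of_isUnit_add [FiniteDimensional K V] (h2 : (2 : K) ≠ 0)
    (S : RevSystem f c N s (-1) 1 1) (hI : IsIndecomposable f c N s) {g : K[X]}
    (hg : ¬ IsUnit (aeval c g)) (htrace : IsUnit (aeval c (g + g.comp (-X)))) :
    HasOmegaReverser f c N := by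
  have hadj : AdjPair f (aeval c g) ((1 : K) • aeval c g) := (one_smul K (aeval c g)).symm ▸
    S.adj_c.aeval g
  obtain ⟨n, hn, hnd, -⟩ := exists_nondegOn_ker_pow S.quad hadj
  refine S.hasOmegaReverser_of_orthogonal_image h2 (by ring) (by ring) (by ring) hI ?_ hnd
    (fun _ => map_mem_ker_pow (a := 1) ?_ n) (fun _ => map_mem_ker_pow (a := 1) ?_ n)
    fun u hu w hw => ?_
  · exact fun hbot => hg ((isUnit_pow_iff hn).mp ((LinearMap.isUnit_iff_ker_eq_bot _).mpr hbot))
  · rw [one_smul]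
    exact (commute_aeval (Commute.refl c) g).symm.eq
  · rw [one_smul]
    exact (commute_aeval (Commute.symm S.comm) g).symm.eq
  · refine form_eq_zero_of_pow_apply_eq_zero S.adj_c htrace hu (n := n) ?_
    have hsg : s * aeval c g = aeval c (g.comp (-X)) * s :=
      mul_aeval_of_mul_eq_neg (by simpa using S.s_mul_c) g
    rw [← End.mul_apply, ← (SemiconjBy.pow_right hsg n).eq, End.mul_apply, hw, map_zero]

theorem RevSystem.hasOmegaReverser_or_local [FiniteDimensional K V] (h2 : (2 : K) ≠ 0)
    (S : RevSystem f c N s (-1) 1 1) (hI : IsIndecomposable f c N s) :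
    HasOmegaReverser f c N ∨ ∀ g : K[X], IsNilpotent (aeval c g) ∨ IsUnit (aeval c g) := by
  rw [or_iff_not_imp_left]
  intro hno g
  have hnorm := hI.isNilpotent_or_isUnit_aeval_of_even S (g := g * g.comp (-X))
    (by rw [mul_comp, comp_neg_X_comp_neg_X, mul_comm])
  have htrace := hI.isNilpotent_or_isUnit_aeval_of_even S (g := g + g.comp (-X))
    (by rw [add_comp, comp_neg_X_comp_neg_X, add_comm])
  have hcomm (a b : K[X]) : Commute (aeval c a) (aeval c b) := (Commute.all a b).map (aeval c)
  by_cases hg : IsUnit (aeval c g)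
  · exact Or.inr hg
  left
  have hnorm := hnorm.resolve_right fun h =>
    hg ((hcomm _ _).isUnit_mul_iff.mp (map_mul (aeval c) g _ ▸ h)).1
  have htrace := htrace.resolve_right fun h => hno (S.hasOmegaReverser_of_isUnit_add h2 hI hg h)
  have hsq : aeval c g ^ 2 = aeval c g * aeval c (g + g.comp (-X)) - aeval c (g * g.comp (-X)) := by
    rw [← map_mul, ← map_sub, ← map_pow]
    congr 1
    ring
  refine (IsNilpotent.pow_iff_pos two_ne_zero).mp (hsq ▸ Commute.isNilpotent_sub ?_ ?_ hnorm)
  · exact map_mul (aeval c) g _ ▸ hcomm _ _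
  · exact (hcomm _ _).isNilpotent_mul_left htrace

lemma exists_eigenvector_form_ne_zero (h2 : (2 : K) ≠ 0) (hf : IsQuadSpace f)
    (hs : AdjPair f s s) (hss : s * s = 1) {Z : End K V} (hZ : AdjPair f Z Z) (hZ0 : Z ≠ 0)
    (hZs : Commute Z s) : ∃ (x : V) (ε : K), ε * ε = 1 ∧ s x = ε • x ∧ f (Z x) x ≠ 0 := by
  obtain ⟨ε, hε, hZε⟩ : ∃ ε : K, ε * ε = 1 ∧ Z * (1 + ε • s) ≠ 0 := by
    by_contra! h
    have hsum : (2 : K) • Z = Z * (1 + (1 : K) • s) + Z * (1 + (-1 : K) • s) := by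
      rw [← mul_add, mul_add, mul_add, mul_add, mul_smul_comm, mul_smul_comm, mul_one]
      module
    rw [h 1 (by ring), h (-1) (by ring), add_zero] at hsum
    exact hZ0 ((smul_eq_zero.mp hsum).resolve_left h2)
  set P := 1 + ε • s
  have hP : AdjPair f P P := LinearMap.IsAdjointPair.add (fun _ _ => rfl) (hs.smul ε)
  have hZP : Commute Z P := (Commute.one_right Z).add_right (hZs.smul_right ε)
  have hPP : P * P = (2 : K) • P := by
    simp only [P, add_mul, mul_add, smul_mul_smul_comm, hε, hss, one_mul, mul_one]
    module
  have hsP : s * P = ε • P := by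
    simp only [P, mul_add, mul_smul_comm, hss, smul_add, smul_smul, hε, mul_one, one_smul, add_comm]
  have hadj : AdjPair f (Z * P) (Z * P) := hZP.eq ▸ hP.mul hZ
  obtain ⟨y, hy⟩ := exists_form_apply_self_ne_zero h2 hf hadj hZε
  refine ⟨P y, ε, hε, LinearMap.congr_fun hsP y, ?_⟩
  rw [← hP, ← End.mul_apply, ← End.mul_apply, ← hZP.eq, mul_assoc, hPP, mul_smul_comm,
    LinearMap.smul_apply, map_smul, LinearMap.smul_apply, smul_eq_mul]
  exact mul_ne_zero h2 hy

end EvenPart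

/-! ### Twisting the form by an automorphism of the `(c, N)`-module -/

/-- `u` is an automorphism of the `(c, N)`-module `V` which carries the form `f(G·, ·)` to `f`.
Conjugation by `u` turns operators that are self-adjoint or skew for `f(G·, ·)` into operators that
are so for `f`. -/
structure IsTwist (f : LinearMap.BilinForm K V) (c N G : End K V) (u : V ≃ₗ[K] V) : Prop where
  conj_c : u.conjAlgEquiv K c = c
  conj_N : u.conjAlgEquiv K N = N
  form_map : ∀ x y, f (u x) (u y) = f (G x) y

section Twist

variable {f : LinearMap.BilinForm K V} {c N : End K V}

lemma IsTwist.adjPair_conj {G T Y : End K V} {u : V ≃ₗ[K] V} {δ : K} (hf : IsQuadSpace f)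
    (hu : IsTwist f c N G u) (hT : AdjPair f T Y) (hG : G * T = δ • (Y * G)) :
    AdjPair f (u.conjAlgEquiv K T) (δ • u.conjAlgEquiv K T) := by
  intro a b
  obtain ⟨a, rfl⟩ := u.surjective a
  obtain ⟨b, rfl⟩ := u.surjective b
  have hTa : (G * T) a = δ • Y (G a) := by rw [hG]; rfl
  rw [LinearMap.smul_apply, LinearEquiv.conjAlgEquiv_apply_apply,
    LinearEquiv.conjAlgEquiv_apply_apply, u.symm_apply_apply, u.symm_apply_apply, hu.form_map,
    map_smul, hu.form_map, ← hT.symm hf, ← End.mul_apply, hTa, map_smul, LinearMap.smul_apply]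

lemma IsTwist.isReverser_conj {g : K[X]} {b : End K V} {u : V ≃ₗ[K] V} (hf : IsQuadSpace f)
    (hu : IsTwist f c N (aeval c g) u) (hb : IsReverser f c N b) :
    IsReverser f c N (u.conjAlgEquiv K b) where
  adj := by
    simpa using hu.adjPair_conj (δ := 1) hf hb.adj
      ((one_smul K (b * aeval c g)).symm ▸ (commute_aeval hb.mul_c g).symm.eq)
  mul_self := by rw [← map_mul, hb.mul_self, map_one]
  mul_c := by
    conv_lhs => rw [← hu.conj_c, ← map_mul, hb.mul_c, map_mul, hu.conj_c]
  mul_N := by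
    conv_lhs => rw [← hu.conj_N, ← map_mul, hb.mul_N, map_neg, map_mul, hu.conj_N]

lemma conjAlgEquiv_eq_self_of_commute {u : V ≃ₗ[K] V} {T : End K V} (h : ∀ x, u (T x) = T (u x)) :
    u.conjAlgEquiv K T = T := by
  ext x
  rw [LinearEquiv.conjAlgEquiv_apply_apply, h, u.apply_symm_apply]

-- The twist is `P(c) + Q(c) N`, whose adjoint is `P(c) - Q(c) N`; their product is the norm `g(c)`.
theorem exists_isTwist [Finite K] [FiniteDimensional K V] [Nontrivial V] (h2 : (2 : K) ≠ 0)
    (hc : AdjPair f c c) (hN : AdjPair f N (-N)) (hcN : Commute c N)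
    (hNN : N * N = c * c - (4 : K) • 1) (hNu : IsUnit N)
    (hloc : ∀ g : K[X], IsNilpotent (aeval c g) ∨ IsUnit (aeval c g)) {g : K[X]}
    (hg : IsUnit (aeval c g)) : ∃ u, IsTwist f c N (aeval c g) u := by
  have hNNg := mul_self_eq_aeval hNN
  obtain ⟨P, Q, hPQ⟩ := exists_aeval_mul_self_sub_eq h2 hloc (d := X * X - C 4)
    (hNNg ▸ hNu.mul hNu) hg
  have hNc (p : K[X]) : Commute (aeval c p) N := (commute_aeval hcN.symm p).symm
  set t := aeval c P + aeval c Q * N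
  set w := aeval c P - aeval c Q * N
  have hcomm : Commute (aeval c P) (aeval c Q * N) :=
    ((Commute.all P Q).map (aeval c)).mul_right (hNc P)
  have hwt : w * t = aeval c g := by
    rw [← hPQ, ← hcomm.mul_self_sub_mul_self_eq', map_sub, map_mul, map_mul, map_mul, ← hNNg,
      (hNc Q).symm.mul_mul_mul_comm, (((hNc Q).mul_left (hNc Q)).mul_right
        ((hNc Q).mul_left (hNc Q))).eq]
  have hadj : AdjPair f w t := fun x y => by
    have hQN := (hc.aeval Q).mul hN x y
    rw [neg_mul, ← (hNc Q).eq, LinearMap.neg_apply, map_neg] at hQN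
    rw [LinearMap.sub_apply, LinearMap.map_sub₂, hQN, hc.aeval P, sub_neg_eq_add, ← map_add]
    rfl
  have hinj : Function.Injective t := by
    refine Function.Injective.of_comp (f := w) ?_
    rw [← End.coe_mul, hwt]
    exact ((End.isUnit_iff _).mp hg).injective
  have hcommute {T : End K V} (hTc : Commute T c) (hTN : Commute T N) (x : V) :
      t (T x) = T (t x) :=
    LinearMap.congr_fun ((commute_aeval hTc P).add_right
      ((commute_aeval hTc Q).mul_right hTN)).symm.eq x
  exact ⟨.ofInjectiveEndo t hinj, conjAlgEquiv_eq_self_of_commute (hcommute (.refl c) hcN),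
    conjAlgEquiv_eq_self_of_commute (hcommute hcN.symm (.refl N)),
    fun x y => by rw [← hwt, End.mul_apply, hadj]; rfl⟩

end Twist

/-! ### Systems with `N` invertible and `c` anticommuting with `s` -/

section UnitN

variable {f : LinearMap.BilinForm K V} {c N s : End K V}

lemma RevSystem.exists_eigenvector_moduleSpan_eq_top (h2 : (2 : K) ≠ 0)
    (S : RevSystem f c N s (-1) 1 1) (hI : IsIndecomposable f c N s) (hNu : IsUnit N) {Z : K[X]}
    (hZ0 : aeval c Z ≠ 0) (hZs : Commute (aeval c Z) s)
    (hZ : ∀ g : K[X], aeval c g ≠ 0 → ∃ h : K[X], aeval c (h * g) = aeval c Z) :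
    ∃ (x : V) (ε : K), s x = ε • x ∧ f (aeval c Z x) x ≠ 0 ∧
      NondegOn f (moduleSpan c N fun _ : Unit => x) ∧ moduleSpan c N (fun _ : Unit => x) = ⊤ := by
  obtain ⟨x, ε, -, hsx, hx⟩ := exists_eigenvector_form_ne_zero h2 S.quad (by simpa using S.adj_s)
    (by simpa using S.s_mul_s) (S.adj_c.aeval Z) hZ0 hZs
  have hnd := nondegOn_moduleSpan_of_isUnit h2 S.quad S.adj_c S.adj_N S.comm S.N_mul_N hNu hZ hx
  refine ⟨x, ε, hsx, hx, hnd, (hI _ c_mem_moduleSpan (N_mem_moduleSpan S.comm)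
    (map_mem_of_mem_moduleSpan S.s_mul_c S.s_mul_N fun l m _ => ?_) hnd).resolve_left fun h => ?_⟩
  · rw [hsx, map_smul]
    exact Submodule.smul_mem _ _ (Submodule.subset_span ⟨(l, m, ()), rfl⟩)
  · have hx0 : x ∈ moduleSpan c N fun _ : Unit => x := mem_moduleSpan c N _ ()
    rw [h, Submodule.mem_bot] at hx0
    exact hx (by rw [hx0, map_zero])

lemma exists_commute_socle_generator [FiniteDimensional K V] [Nontrivial V]
    (hsc : s * c = -(c * s)) (hss : s * s = 1) (hcu : IsUnit c)
    (hloc : ∀ g : K[X], IsNilpotent (aeval c g) ∨ IsUnit (aeval c g)) :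
    ∃ Z : K[X], aeval c Z ≠ 0 ∧ Commute (aeval c Z) s ∧
      ∀ g : K[X], aeval c g ≠ 0 → ∃ h : K[X], aeval c (h * g) = aeval c Z := by
  obtain ⟨Z, hZ0, hZ⟩ := exists_socle_generator hloc
  have hconj (g : K[X]) : aeval c (g.comp (-X)) = s * aeval c g * s := by
    rw [mul_aeval_of_mul_eq_neg hsc, mul_assoc, hss, mul_one]
  by_cases htrace : aeval c (Z + Z.comp (-X)) = 0
  · have hZneg : aeval c (Z.comp (-X)) = -aeval c Z :=
      eq_neg_of_add_eq_zero_right (map_add (aeval c) Z _ ▸ htrace)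
    refine ⟨X * Z, ?_, ?_, fun g hg => ?_⟩
    · rwa [map_mul, aeval_X, Ne, hcu.mul_right_eq_zero]
    · refine Commute.symm ((mul_aeval_of_mul_eq_neg hsc _).trans ?_)
      rw [mul_comp, X_comp, map_mul, hZneg, map_neg, aeval_X, neg_mul_neg, map_mul, aeval_X]
    · obtain ⟨h, hh⟩ := hZ g hg
      exact ⟨X * h, by rw [mul_assoc, map_mul, hh, map_mul]⟩
  · refine ⟨Z + Z.comp (-X), htrace, ?_, fun g hg => ?_⟩
    · refine Commute.symm ((mul_aeval_of_mul_eq_neg hsc _).trans ?_)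
      rw [add_comp, comp_neg_X_comp_neg_X, add_comm]
    · obtain ⟨h, hh⟩ := hZ g hg
      obtain ⟨h', hh'⟩ := hZ (g.comp (-X)) fun h0 => hg <| by
        rw [← comp_neg_X_comp_neg_X g, hconj, h0, mul_zero, zero_mul]
      refine ⟨h + h'.comp (-X), ?_⟩
      rw [add_mul, map_add, hh, map_add, hconj Z, ← hh', ← hconj, mul_comp, comp_neg_X_comp_neg_X]

lemma RevSystem.exists_isReverser_commute [FiniteDimensional K V] [Nontrivial V]
    (h2 : (2 : K) ≠ 0) (S : RevSystem f c N s (-1) 1 1) (hI : IsIndecomposable f c N s)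
    (hNu : IsUnit N) (hcu : IsUnit c)
    (hloc : ∀ g : K[X], IsNilpotent (aeval c g) ∨ IsUnit (aeval c g)) :
    ∃ b, IsReverser f c N b ∧ Commute s b := by
  obtain ⟨Z, hZ0, hZs, hZ⟩ := exists_commute_socle_generator (by simpa using S.s_mul_c)
    (by simpa using S.s_mul_s) hcu hloc
  obtain ⟨x, ε, hsx, -, hnd, htop⟩ := S.exists_eigenvector_moduleSpan_eq_top h2 hI hNu hZ0 hZs hZ
  obtain ⟨b, hb, hbx⟩ := (isReversingFrame_single h2 S.quad S.adj_c S.adj_N S.comm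
    hnd).exists_isReverser htop S.quad S.adj_c S.adj_N S.comm
  have hbx : b x = x := by simpa using hbx ()
  refine ⟨b, hb, ext_of_moduleSpan_eq_top htop (a₁ := -1) (a₂ := -1) ?_ ?_ ?_ ?_ fun _ => ?_⟩
  · rw [mul_assoc, hb.mul_c, ← mul_assoc, S.s_mul_c, smul_mul_assoc, mul_assoc]
  · rw [mul_assoc, hb.mul_N, mul_neg, ← mul_assoc, S.s_mul_N, one_smul, neg_one_smul, mul_assoc]
  · rw [mul_assoc, S.s_mul_c, mul_smul_comm, ← mul_assoc, hb.mul_c, mul_assoc]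
  · rw [mul_assoc, S.s_mul_N, one_smul, ← mul_assoc, hb.mul_N, neg_mul, neg_one_smul, mul_assoc]
  · rw [End.mul_apply, End.mul_apply, hbx, hsx, map_smul, hbx]

lemma exists_aeval_mul_comp_neg_X_eq_neg_one [Finite K] [FiniteDimensional K V] [Nontrivial V]
    (h2 : (2 : K) ≠ 0) (hcu : IsUnit c)
    (hloc : ∀ g : K[X], IsNilpotent (aeval c g) ∨ IsUnit (aeval c g)) :
    ∃ h : K[X], aeval c h * aeval c (h.comp (-X)) = -1 := by
  have hsq (g : K[X]) : aeval (c * c) g = aeval c (g.comp (X * X)) := by simp [aeval_comp]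
  obtain ⟨a, b, hab⟩ := exists_aeval_mul_self_sub_eq h2 (c := c * c) (d := X) (g := -1)
    (fun g => hsq g ▸ hloc _) (by simpa using hcu.mul hcu) (by simp)
  have heven (g : K[X]) : (g.comp (X * X)).comp (-X) = g.comp (X * X) := by simp [comp_assoc]
  refine ⟨a.comp (X * X) + b.comp (X * X) * X, ?_⟩
  rw [add_comp, mul_comp, heven, heven, X_comp, ← map_mul]
  calc aeval c ((a.comp (X * X) + b.comp (X * X) * X) * (a.comp (X * X) + b.comp (X * X) * -X))
      = aeval c ((a * a - X * (b * b)).comp (X * X)) := by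
        congr 1
        simp only [sub_comp, mul_comp, X_comp]
        ring
    _ = -1 := by rw [← hsq, hab, map_neg, map_one]

-- If `h(c) h(-c) = -1` then `h(c) s` squares to `-1`; twisting by `c h(-c)` makes it skew.
theorem RevSystem.hasOmegaReverser_of_isUnit_c [Finite K] [FiniteDimensional K V] [Nontrivial V]
    (h2 : (2 : K) ≠ 0) (S : RevSystem f c N s (-1) 1 1) (hI : IsIndecomposable f c N s)
    (hNu : IsUnit N) (hcu : IsUnit c)
    (hloc : ∀ g : K[X], IsNilpotent (aeval c g) ∨ IsUnit (aeval c g)) :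
    HasOmegaReverser f c N := by
  obtain ⟨b, hb, hsb⟩ := S.exists_isReverser_commute h2 hI hNu hcu hloc
  obtain ⟨h, hh⟩ := exists_aeval_mul_comp_neg_X_eq_neg_one h2 hcu hloc
  have hsc : s * c = -(c * s) := by simpa using S.s_mul_c
  have hss : s * s = 1 := by simpa using S.s_mul_s
  have hsh : s * aeval c h = aeval c (h.comp (-X)) * s := mul_aeval_of_mul_eq_neg hsc h
  set H := aeval c h
  set H' := aeval c (h.comp (-X))
  have hH'H : Commute H' H := (Commute.all _ _).map (aeval c)
  have hcH : Commute c H := commute_aeval (.refl c) h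
  have hH'u : IsUnit H' := .of_mul_eq_one (-H) (by rw [mul_neg, hH'H.eq, hh, neg_neg])
  obtain ⟨u, hu⟩ := exists_isTwist h2 S.adj_c S.adj_N S.comm S.N_mul_N hNu hloc
    (g := X * h.comp (-X)) (by simpa using hcu.mul hH'u)
  have hbu := hu.isReverser_conj S.quad hb
  refine ⟨_, hbu, inOmega_of_commute_skew h2 S.quad (J := u.conjAlgEquiv K (H * s)) ?_ ?_ hbu.adj
    hbu.mul_self ?_⟩
  · have hadj : AdjPair f (H * s) (s * H) := (S.adj_c.aeval h).mul (by simpa using S.adj_s)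
    rw [← neg_one_smul K]
    refine hu.adjPair_conj S.quad hadj ?_
    calc aeval c (X * h.comp (-X)) * (H * s) = c * (H' * H) * s := by
          rw [map_mul, aeval_X, mul_assoc c, mul_assoc, mul_assoc]
      _ = (-1 : K) • (s * c * (H * H')) := by
          rw [hH'H.eq, hh, hsc, mul_neg_one, mul_neg_one, neg_mul, neg_neg, neg_one_smul]
      _ = (-1 : K) • (s * H * aeval c (X * h.comp (-X))) := by
          rw [map_mul, aeval_X, mul_assoc s c, ← mul_assoc c, hcH.eq, mul_assoc H, ← mul_assoc s]
  · rw [← map_mul, mul_assoc, ← mul_assoc s, hsh, mul_assoc, hss, mul_one, hh, map_neg, map_one]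
  · exact ((commute_aeval hb.mul_c h).symm.mul_left hsb).map _

end UnitN

/-! ### Systems with `N` invertible and `c` nilpotent -/

/-- Both the coset of reflections in vectors of norm `1` and that of reflections in vectors of
norm `-1` contain a reverser. -/
def HasReflectionReversers (f : LinearMap.BilinForm K V) (c N : End K V) : Prop :=
  ∀ ε : K, ε = 1 ∨ ε = -1 → ∃ b, IsReverser f c N b ∧ InReflectionCoset f ε b

section EvenExponent

variable {f : LinearMap.BilinForm K V} {c N s : End K V} {x : V} {n : ℕ}

lemma isometryPair_conj_of_form_neg {u : V ≃ₗ[K] V} (hu : ∀ x y, f (u x) (u y) = -f x y)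
    {g g' : End K V} (hg : IsometryPair f g g') :
    IsometryPair f (u.conjAlgEquiv K g) (u.conjAlgEquiv K g') where
  adj := u.surjective.forall₂.mpr fun a b => by
    rw [LinearEquiv.conjAlgEquiv_apply_apply, LinearEquiv.conjAlgEquiv_apply_apply,
      u.symm_apply_apply, u.symm_apply_apply, hu, hu, hg.adj]
  mul_inv := by rw [← map_mul, hg.mul_inv, map_one]
  inv_mul := by rw [← map_mul, hg.inv_mul, map_one]

lemma conj_hyperplaneReflection_of_form_neg {u : V ≃ₗ[K] V}
    (hu : ∀ x y, f (u x) (u y) = -f x y) (x : V) :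
    u.conjAlgEquiv K (hyperplaneReflection f x) = hyperplaneReflection f (u x) :=
  LinearMap.ext <| u.surjective.forall.mpr fun v => by
    rw [LinearEquiv.conjAlgEquiv_apply_apply, u.symm_apply_apply, hyperplaneReflection_apply,
      hyperplaneReflection_apply, map_sub, map_smul, hu, hu, div_neg, neg_mul_neg]

lemma InReflectionCoset.conj_of_form_neg {u : V ≃ₗ[K] V} (hu : ∀ x y, f (u x) (u y) = -f x y)
    {d : K} {g : End K V} (hg : InReflectionCoset f d g) :
    InReflectionCoset f (-d) (u.conjAlgEquiv K g) := by
  obtain ⟨x, rfl, hx⟩ := hg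
  refine ⟨u x, hu x x, ?_⟩
  rw [← conj_hyperplaneReflection_of_form_neg hu, ← map_mul]
  exact hx.map (u.conjAlgEquiv K : End K V →* End K V) fun _ _ => isometryPair_conj_of_form_neg hu

lemma linearIndependent_top_powers (h2 : (2 : K) ≠ 0) (hf : IsQuadSpace f) (hc : AdjPair f c c)
    (hN : AdjPair f N (-N)) (hcN : Commute c N) (hNu : IsUnit N) (hx : f ((c ^ n) x) x ≠ 0) :
    LinearIndependent K fun i => (c ^ n) (![x, N x] i) := by
  have hfun : (fun i => (c ^ n) (![x, N x] i)) = ![(c ^ n) x, (c ^ n) (N x)] := by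
    ext i
    fin_cases i <;> rfl
  rw [hfun, LinearIndependent.pair_iff]
  intro a b hab
  have hskew : f ((c ^ n) (N x)) x = 0 := by
    simpa using form_monomial_self_of_odd h2 hf hc hN hcN n odd_one x
  have ha : a = 0 := by
    have hfx := congrArg (f · x) hab
    simpa [hskew, hx] using hfx
  refine ⟨ha, ?_⟩
  rw [ha, zero_smul, zero_add, smul_eq_zero] at hab
  refine hab.resolve_right fun h0 => hx ?_
  rw [← End.mul_apply, (hcN.pow_left n).eq, End.mul_apply,
    ((End.isUnit_iff N).mp hNu).injective.eq_iff' (map_zero N)] at h0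
  rw [h0, LinearMap.map_zero₂]

lemma span_powers_eq_top (hcN : Commute c N) (hNN : N * N = c * c - (4 : K) • 1)
    (hn : c ^ (n + 1) = 0) (htop : moduleSpan c N (fun _ : Unit => x) = ⊤) :
    Submodule.span K (Set.range fun i : Fin (n + 1) × Fin 2 => (c ^ (i.1 : ℕ)) (![x, N x] i.2)) =
      ⊤ := by
  refine top_le_iff.mp (htop.ge.trans ((moduleSpan_le_genSpan hcN hNN x).trans
    (Submodule.span_le.mpr ?_)))
  rintro _ ⟨⟨l, i⟩, rfl⟩
  rcases lt_or_ge l (n + 1) with hl | hl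
  · exact Submodule.subset_span ⟨(⟨l, hl⟩, i), rfl⟩
  · simp [pow_eq_zero_of_le hl hn]

lemma IsReverser.det_eq (h2 : (2 : K) ≠ 0) (hf : IsQuadSpace f) (hc : AdjPair f c c)
    (hN : AdjPair f N (-N)) (hcN : Commute c N) (hNN : N * N = c * c - (4 : K) • 1)
    (hNu : IsUnit N) (hn : c ^ (n + 1) = 0) (hx : f ((c ^ n) x) x ≠ 0)
    (htop : moduleSpan c N (fun _ : Unit => x) = ⊤) {b : End K V} (hb : IsReverser f c N b)
    (hbx : b x = x) : LinearMap.det b = (-1) ^ (n + 1) := by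
  have hli := linearIndependent_pow_apply hn
    (linearIndependent_top_powers h2 hf hc hN hcN hNu hx)
  set e := Basis.mk hli (span_powers_eq_top hcN hNN hn htop).ge
  have hbe (i) : b (e i) = ![(1 : K), -1] i.2 • e i := by
    obtain ⟨l, i⟩ := i
    have hbc := LinearMap.congr_fun (Commute.pow_right hb.mul_c l).eq
    have hbN := LinearMap.congr_fun hb.mul_N x
    simp only [End.mul_apply, LinearMap.neg_apply, hbx] at hbc hbN
    rw [Basis.mk_apply, hbc]
    fin_cases i <;> simp [hbx, hbN]
  have hdiag : LinearMap.toMatrix e e b = Matrix.diagonal fun i => ![(1 : K), -1] i.2 := by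
    ext i j
    rw [LinearMap.toMatrix_apply, hbe, map_smul, Basis.repr_self, Finsupp.smul_single,
      smul_eq_mul, mul_one, Matrix.diagonal_apply, Finsupp.single_apply]
    grind
  rw [← LinearMap.det_toMatrix e, hdiag, Matrix.det_diagonal, Fintype.prod_prod_type]
  simp

theorem RevSystem.hasReflectionReversers_of_even [Finite K] [FiniteDimensional K V] [Nontrivial V]
    (h2 : (2 : K) ≠ 0) (hsq : ∀ d : K, ∃ a, d = a * a ∨ d = -(a * a))
    (S : RevSystem f c N s (-1) 1 1) (hI : IsIndecomposable f c N s)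
    (hloc : ∀ g : K[X], IsNilpotent (aeval c g) ∨ IsUnit (aeval c g)) (hNu : IsUnit N)
    (hn : c ^ (n + 1) = 0) (hn0 : c ^ n ≠ 0) (heven : Even n) : HasReflectionReversers f c N := by
  have hZs : Commute (c ^ n) s := by
    have hsc := mul_pow_of_mul_eq_smul S.s_mul_c n
    rw [heven.neg_one_pow, one_smul] at hsc
    exact hsc.symm
  obtain ⟨x, _, -, hx, hnd, htop⟩ := S.exists_eigenvector_moduleSpan_eq_top h2 hI hNu
    (Z := X ^ n) (by simpa using hn0) (by simpa using hZs)
    fun _ => exists_aeval_mul_eq_aeval_pow irreducible_X (by simpa using hn)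
  obtain ⟨b, hb, hbx⟩ := (isReversingFrame_single h2 S.quad S.adj_c S.adj_N S.comm
    hnd).exists_isReverser htop S.quad S.adj_c S.adj_N S.comm
  have hdet : LinearMap.det b = -1 := by
    rw [hb.det_eq h2 S.quad S.adj_c S.adj_N S.comm S.N_mul_N hNu hn (by simpa using hx) htop
      (by simpa using hbx ()), heven.add_one.neg_one_pow]
  obtain ⟨u, hu⟩ := exists_isTwist h2 S.adj_c S.adj_N S.comm S.N_mul_N hNu hloc (g := -1) (by simp)
  have hneg {d : K} (hd : InReflectionCoset f d b) :
      ∃ b, IsReverser f c N b ∧ InReflectionCoset f (-d) b :=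
    ⟨_, hu.isReverser_conj S.quad hb, hd.conj_of_form_neg fun x y => by simp [hu.form_map]⟩
  obtain ⟨δ, hδ, hbδ⟩ := inReflectionCoset_of_involution h2 hsq S.quad hb.adj hb.mul_self hdet
  intro ε hε
  obtain rfl | rfl : ε = δ ∨ ε = -δ := by grind
  · exact ⟨b, hb, hbδ⟩
  · exact hneg hbδ

end EvenExponent

section OddExponent

variable {f : LinearMap.BilinForm K V} {c N s : End K V} {n : ℕ}

lemma form_pow_apply_map_map (S : RevSystem f c N s (-1) 1 1) (hodd : Odd n) (x y : V) :
    f ((c ^ n) (s x)) (s y) = -f ((c ^ n) x) y := by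
  have hsc := LinearMap.congr_fun (mul_pow_of_mul_eq_smul S.s_mul_c n) x
  have hss := LinearMap.congr_fun S.s_mul_s y
  have hadj := S.adj_s ((c ^ n) x) (s y)
  simp only [End.mul_apply, hodd.neg_one_pow, neg_smul, one_smul, LinearMap.neg_apply,
    End.one_apply] at hsc hss hadj
  rw [hss, hsc, map_neg, LinearMap.neg_apply] at hadj
  rw [← hadj, neg_neg]

lemma form_pow_self_eq_zero_of_eigenvector (h2 : (2 : K) ≠ 0) (S : RevSystem f c N s (-1) 1 1)
    (hodd : Odd n) {x : V} {ε : K} (hε : ε * ε = 1) (hx : s x = ε • x) :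
    f ((c ^ n) x) x = 0 := by
  have hxx := form_pow_apply_map_map S hodd x x
  simp only [hx, map_smul, LinearMap.smul_apply, smul_eq_mul, ← mul_assoc, hε] at hxx
  have h2x : 2 * f ((c ^ n) x) x = 0 := by linear_combination hxx
  exact (mul_eq_zero.mp h2x).resolve_left h2

lemma form_pow_apply_N_N (hN : AdjPair f N (-N)) (hcN : Commute c N)
    (hNN : N * N = c * c - (4 : K) • 1) (hn : c ^ (n + 1) = 0) (x y : V) :
    f ((c ^ n) (N x)) (N y) = 4 * f ((c ^ n) x) y := by
  have hcc : c ^ n * (N * N) = -((4 : K) • c ^ n) := by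
    rw [hNN, mul_sub, ← mul_assoc, ← pow_succ, hn, zero_mul, zero_sub, mul_smul_comm, mul_one]
  have hNc : N * c ^ n * N = c ^ n * (N * N) := by rw [← (hcN.pow_left n).eq, mul_assoc]
  have hadj := hN ((c ^ n) (N x)) y
  rw [← End.mul_apply, ← End.mul_apply, hNc, hcc] at hadj
  simp only [LinearMap.neg_apply, LinearMap.smul_apply, map_neg, map_smul, smul_eq_mul] at hadj
  linear_combination hadj

lemma exists_eigenvectors_form_pow_ne_zero (h2 : (2 : K) ≠ 0)
    (hm1 : ∀ a b : K, a * a + b * b = 0 → a = 0) (S : RevSystem f c N s (-1) 1 1)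
    (hn : c ^ (n + 1) = 0) (hn0 : c ^ n ≠ 0) (hodd : Odd n) :
    ∃ x y, s x = x ∧ s y = -y ∧ f ((c ^ n) x) y ≠ 0 ∧ f ((c ^ n) (N x)) y = 0 := by
  obtain ⟨v, hv⟩ := exists_form_apply_self_ne_zero h2 S.quad (S.adj_c.pow n) hn0
  have hss (w : V) : s (s w) = w := by simpa using LinearMap.congr_fun S.s_mul_s w
  have hsN (w : V) : s (N w) = N (s w) := by simpa using LinearMap.congr_fun S.s_mul_N w
  have hNx (w w' : V) : f ((c ^ n) w) (N w') = -f ((c ^ n) (N w)) w' := by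
    have hadj := S.adj_N ((c ^ n) w) w'
    have hcN := LinearMap.congr_fun (Commute.pow_left S.comm n).eq w
    simp only [End.mul_apply] at hcN
    rw [LinearMap.neg_apply, map_neg, ← hcN] at hadj
    rw [hadj, neg_neg]
  set x := v + s v with hx
  set y := v - s v with hy
  set β := f ((c ^ n) x) y with hβ
  set γ := f ((c ^ n) (N x)) y with hγ
  have hβ0 : β ≠ 0 := by
    have hsymm : f ((c ^ n) (s v)) v = f ((c ^ n) v) (s v) := by rw [S.adj_c.pow n, S.quad.symm]
    have hβv : β = 2 * f ((c ^ n) v) v := by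
      rw [hβ, hx, hy]
      simp only [map_add, map_sub, LinearMap.add_apply, form_pow_apply_map_map S hodd, hsymm]
      ring
    rw [hβv]
    exact mul_ne_zero h2 hv
  refine ⟨x, (4 * β) • y - γ • N y, by rw [hx, map_add, hss, add_comm], ?_, ?_, ?_⟩
  · rw [map_sub, map_smul, map_smul, hsN, show s y = -y by rw [hy, map_sub, hss, neg_sub], map_neg]
    module
  · intro h0
    refine mul_ne_zero h2 hβ0 (hm1 (2 * β) γ ?_)
    rw [map_sub, map_smul, map_smul, hNx, ← hβ, ← hγ, smul_eq_mul, smul_eq_mul] at h0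
    linear_combination h0
  · rw [map_sub, map_smul, map_smul, form_pow_apply_N_N S.adj_N S.comm S.N_mul_N hn, ← hβ, ← hγ,
      smul_eq_mul, smul_eq_mul]
    ring

lemma exists_form_pow_self_ne_zero_and_orthogonal (h2 : (2 : K) ≠ 0)
    (hm1 : ∀ a b : K, a * a + b * b = 0 → a = 0) (S : RevSystem f c N s (-1) 1 1)
    (hn : c ^ (n + 1) = 0) (hn0 : c ^ n ≠ 0) (hodd : Odd n) :
    ∃ u, f ((c ^ n) u) u ≠ 0 ∧ f ((c ^ n * N ^ 1 * s) u) u = 0 := by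
  obtain ⟨x, y, hx, hy, hxy, hNxy⟩ :=
    exists_eigenvectors_form_pow_ne_zero h2 hm1 S hn hn0 hodd
  have hxx := form_pow_self_eq_zero_of_eigenvector h2 S hodd (mul_one 1) (x := x)
    (by simpa using hx)
  have hyy := form_pow_self_eq_zero_of_eigenvector h2 S hodd (ε := -1) (by ring) (x := y)
    (by simpa using hy)
  have hyx : f ((c ^ n) y) x = f ((c ^ n) x) y := by rw [S.adj_c.pow n, S.quad.symm]
  have hNself (w : V) : f ((c ^ n) (N w)) w = 0 := by
    simpa using form_monomial_self_of_odd h2 S.quad S.adj_c S.adj_N S.comm n odd_one w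
  have hNyx : f ((c ^ n) (N y)) x = 0 := by
    have hsum := hNself (x + y)
    simpa [hNself, hNxy] using hsum
  refine ⟨x + y, ?_, ?_⟩
  · simp only [map_add, LinearMap.add_apply, hxx, hyy, hyx, zero_add, add_zero, ← two_mul]
    exact mul_ne_zero h2 hxy
  · simp [hx, hy, hNself, hNxy, hNyx]

/-- For `c ^ (n + 1) = 0`: the vector `u` generates a nondegenerate `K[c, N]`-module, on account of
`f (c ^ n u) u ≠ 0`, and is orthogonal to `s u` in all degrees at least `l`. The factor
`N ^ (j % 2)` makes `c ^ j * N ^ (j % 2) * s` self-adjoint. -/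
def IsOrthogonalFrom (f : LinearMap.BilinForm K V) (c N s : End K V) (n l : ℕ) (u : V) : Prop :=
  f ((c ^ n) u) u ≠ 0 ∧ ∀ j ≥ l, f ((c ^ j * N ^ (j % 2) * s) u) u = 0

lemma RevSystem.adjPair_of_even_add (S : RevSystem f c N s (-1) 1 1) {l m : ℕ} (h : Even (l + m)) :
    AdjPair f (c ^ l * N ^ m * s) (c ^ l * N ^ m * s) := by
  simpa [← pow_add, h.neg_one_pow] using S.adjPair_monomial_mul_s l m

lemma even_add_mod_two (j : ℕ) : Even (j + j % 2) := by
  rw [Nat.even_iff]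
  omega

lemma RevSystem.exists_correction (S : RevSystem f c N s (-1) 1 1) (hNu : IsUnit N)
    (hn : c ^ (n + 1) = 0) {l : ℕ} (hl : l < n) (u : V) :
    ∃ d, (c ^ n) d = 0 ∧ (c ^ l * N ^ (l % 2) * s) d = (-1 : K) ^ (n - l) • (c ^ n) u ∧
      ∀ j > l, (c ^ j * N ^ (j % 2) * s) d = 0 := by
  obtain ⟨w, hw⟩ : ∃ w, (N ^ (l % 2)) w = s u :=
    ((End.isUnit_iff _).mp (hNu.pow (l % 2))).surjective (s u)
  have hss : s (s u) = u := by simpa using LinearMap.congr_fun S.s_mul_s u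
  have hsN (i : ℕ) : Commute s (N ^ i) :=
    Commute.pow_right (by rw [Commute, SemiconjBy, S.s_mul_N, one_smul]) i
  have hcpow {k : ℕ} (hk : n < k) : c ^ k = 0 := pow_eq_zero_of_le hk hn
  have hmap (j : ℕ) : (c ^ j * N ^ (j % 2) * s) ((c ^ (n - l)) w)
      = (-1 : K) ^ (n - l) • (c ^ (j + (n - l))) (s ((N ^ (j % 2)) w)) := by
    have hop : c ^ j * N ^ (j % 2) * s * c ^ (n - l)
        = (-1 : K) ^ (n - l) • (c ^ (j + (n - l)) * (s * N ^ (j % 2))) := by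
      rw [mul_assoc, mul_pow_of_mul_eq_smul S.s_mul_c, mul_smul_comm, ← mul_assoc,
        mul_assoc (c ^ j), ← (Commute.pow_pow S.comm _ _).eq, ← mul_assoc, ← pow_add, mul_assoc,
        ← (hsN _).eq]
    exact LinearMap.congr_fun hop w
  refine ⟨(c ^ (n - l)) w, ?_, ?_, fun j hj => ?_⟩
  · rw [← End.mul_apply, ← pow_add, hcpow (by omega), LinearMap.zero_apply]
  · rw [hmap, hw, hss, Nat.add_sub_cancel' hl.le]
  · rw [hmap, hcpow (by omega), LinearMap.zero_apply, smul_zero]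

lemma IsOrthogonalFrom.exists_of_succ (h2 : (2 : K) ≠ 0) (S : RevSystem f c N s (-1) 1 1)
    (hNu : IsUnit N) (hn : c ^ (n + 1) = 0) {l : ℕ} (hl : l < n) {u : V}
    (hu : IsOrthogonalFrom f c N s n (l + 1) u) : ∃ u, IsOrthogonalFrom f c N s n l u := by
  obtain ⟨d, hd, hld, hjd⟩ := S.exists_correction hNu hn hl u
  have hud : f ((c ^ n) u) d = 0 := by rw [S.adj_c.pow, hd, map_zero]
  set κ := (-1 : K) ^ (n - l) * f ((c ^ n) u) u with hκ
  set t := f ((c ^ l * N ^ (l % 2) * s) u) u with ht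
  have hκ0 : κ ≠ 0 := mul_ne_zero (pow_ne_zero _ (neg_ne_zero.mpr one_ne_zero)) hu.1
  refine ⟨u + (-t / (2 * κ)) • d, by simpa [hd, hud] using hu.1, fun j hj => ?_⟩
  have hsymm : f ((c ^ j * N ^ (j % 2) * s) u) d = f ((c ^ j * N ^ (j % 2) * s) d) u := by
    rw [S.adjPair_of_even_add (even_add_mod_two j), S.quad.symm]
  obtain rfl | hlj := hj.eq_or_lt
  · simp only [map_add, map_smul, LinearMap.add_apply, LinearMap.smul_apply, hsymm, hld, hud,
      smul_eq_mul, ← ht, ← hκ, mul_zero, add_zero]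
    field_simp
    ring
  · simp only [map_add, map_smul, hsymm, hjd j hlj, hu.2 j hlj, map_zero, LinearMap.zero_apply,
      smul_zero, add_zero]

lemma exists_isOrthogonalFrom_zero (h2 : (2 : K) ≠ 0)
    (hm1 : ∀ a b : K, a * a + b * b = 0 → a = 0) (S : RevSystem f c N s (-1) 1 1)
    (hNu : IsUnit N) (hn : c ^ (n + 1) = 0) (hn0 : c ^ n ≠ 0) (hodd : Odd n) :
    ∃ u, IsOrthogonalFrom f c N s n 0 u := by
  refine Nat.decreasingInduction (motive := fun l _ => ∃ u, IsOrthogonalFrom f c N s n l u)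
    (fun l hl ⟨u, hu⟩ => hu.exists_of_succ h2 S hNu hn hl) ?_ n.zero_le
  obtain ⟨u, hu, hNsu⟩ := exists_form_pow_self_ne_zero_and_orthogonal h2 hm1 S hn hn0 hodd
  refine ⟨u, hu, fun j hj => ?_⟩
  obtain rfl | hnj := hj.eq_or_lt
  · rwa [Nat.odd_iff.mp hodd]
  · simp [pow_eq_zero_of_le hnj hn]

lemma IsOrthogonalFrom.form_monomial_eq_zero (h2 : (2 : K) ≠ 0) (S : RevSystem f c N s (-1) 1 1)
    {u : V} (hu : IsOrthogonalFrom f c N s n 0 u) (l m : ℕ) :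
    f ((c ^ l * N ^ m * s) u) u = 0 := by
  have hodd {l m : ℕ} (h : Odd (l + m)) : f ((c ^ l * N ^ m * s) u) u = 0 :=
    form_apply_self_of_skew h2 S.quad
      (by simpa [← pow_add, h.neg_one_pow] using S.adjPair_monomial_mul_s l m) u
  induction m using Nat.twoStepInduction generalizing l with
  | zero =>
    obtain hl | hl := l.even_or_odd
    · simpa [Nat.even_iff.mp hl] using hu.2 l l.zero_le
    · exact hodd hl
  | one =>
    obtain hl | hl := l.even_or_odd
    · exact hodd hl.add_one
    · simpa [Nat.odd_iff.mp hl] using hu.2 l l.zero_le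
  | more m ih _ =>
    have hop : c ^ l * N ^ (m + 2) * s
        = c ^ (l + 2) * N ^ m * s - (4 : K) • (c ^ l * N ^ m * s) := by
      rw [pow_succ' N, pow_succ' N, ← mul_assoc N, S.N_mul_N, sub_mul, mul_sub, sub_mul, pow_add,
        sq, mul_assoc (c ^ l)]
      simp [mul_assoc]
    rw [hop, LinearMap.sub_apply, LinearMap.smul_apply, map_sub, map_smul, LinearMap.sub_apply,
      LinearMap.smul_apply, ih, ih, smul_zero, sub_zero]

theorem RevSystem.hasOmegaReverser_of_odd [FiniteDimensional K V] (h2 : (2 : K) ≠ 0)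
    (hm1 : ∀ a b : K, a * a + b * b = 0 → a = 0) (S : RevSystem f c N s (-1) 1 1)
    (hI : IsIndecomposable f c N s) (hNu : IsUnit N) (hn : c ^ (n + 1) = 0) (hn0 : c ^ n ≠ 0)
    (hodd : Odd n) : HasOmegaReverser f c N := by
  obtain ⟨u, hu⟩ := exists_isOrthogonalFrom_zero h2 hm1 S hNu hn hn0 hodd
  have hu0 : u ≠ 0 := fun h0 => hu.1 (by rw [h0, map_zero])
  have hnd := nondegOn_moduleSpan_of_isUnit h2 S.quad S.adj_c S.adj_N S.comm S.N_mul_N hNu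
    (Z := X ^ n) (fun _ => exists_aeval_mul_eq_aeval_pow irreducible_X (by simpa using hn))
    (by simpa using hu.1)
  exact S.hasOmegaReverser_of_orthogonal_generators h2 (by ring) (by ring) (by ring) hI (i₀ := ())
    hu0 hnd fun l m _ _ => hu.form_monomial_eq_zero h2 S l m

end OddExponent

theorem RevSystem.hasOmegaReverser_or_hasReflectionReversers_of_isUnit [Finite K]
    [FiniteDimensional K V] (h2 : (2 : K) ≠ 0) (hm1 : ∀ a b : K, a * a + b * b = 0 → a = 0)
    (hsq : ∀ d : K, ∃ a, d = a * a ∨ d = -(a * a)) {f : LinearMap.BilinForm K V}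
    {c N s : End K V} (S : RevSystem f c N s (-1) 1 1) (hI : IsIndecomposable f c N s)
    (hNu : IsUnit N) : HasOmegaReverser f c N ∨ HasReflectionReversers f c N := by
  obtain _ | _ := subsingleton_or_nontrivial V
  · exact .inl ⟨1, isReverser_of_subsingleton f c N, .one⟩
  obtain hΩ | hloc := S.hasOmegaReverser_or_local h2 hI
  · exact .inl hΩ
  obtain hnil | hcu := hloc X
  · rw [aeval_X] at hnil
    obtain ⟨n, hn⟩ := Nat.exists_eq_succ_of_ne_zero (pos_nilpotencyClass_iff.mpr hnil).ne'
    obtain ⟨hn1, hn0⟩ := nilpotencyClass_eq_succ_iff.mp hn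
    obtain heven | hodd := n.even_or_odd
    · exact .inr (S.hasReflectionReversers_of_even h2 hsq hI hloc hNu hn1 hn0 heven)
    · exact .inl (S.hasOmegaReverser_of_odd h2 hm1 hI hNu hn1 hn0 hodd)
  · exact .inl (S.hasOmegaReverser_of_isUnit_c h2 hI hNu (by rwa [aeval_X] at hcu) hloc)

/-! ### Determinants of reversing isometries -/

section Determinant

variable {f : LinearMap.BilinForm K V} {fA : LinearMap.BilinForm K A}
  {fB : LinearMap.BilinForm K B} {s t t' g g' c N : End K V}

lemma AdjPair.det_eq [FiniteDimensional K V] (hf : IsQuadSpace f) (hst : AdjPair f s t) :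
    LinearMap.det s = LinearMap.det t := by
  have hinj : Function.Injective (f : V →ₗ[K] Dual K V) := fun x y hxy =>
    hf.ext fun z => congrArg (· z) hxy
  let e : V ≃ₗ[K] Dual K V :=
    LinearEquiv.ofInjectiveOfFinrankEq _ hinj Subspace.dual_finrank_eq.symm
  rw [← LinearMap.det_dualMap t, ← LinearMap.det_conj s e]
  congr 1
  refine LinearMap.ext (e.surjective.forall.mpr fun x => LinearMap.ext fun y => ?_)
  simp only [LinearMap.comp_apply, LinearEquiv.coe_coe, e.symm_apply_apply, LinearMap.dualMap_apply]
  exact hst x y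

lemma even_finrank_of_skew [FiniteDimensional K V] (h2 : (2 : K) ≠ 0) (hf : IsQuadSpace f)
    (hN : AdjPair f N (-N)) (hNu : IsUnit N) : Even (finrank K V) := by
  by_contra hodd
  have hdet := hN.det_eq hf
  rw [← neg_one_smul K N, LinearMap.det_smul, (Nat.not_even_iff_odd.mp hodd).neg_one_pow,
    neg_one_mul, eq_neg_iff_add_eq_zero, ← two_mul] at hdet
  exact mul_ne_zero h2 (hNu.map LinearMap.det).ne_zero hdet

lemma IsometryPair.adj_add_one (hg : IsometryPair f g g') : AdjPair f (g + 1) (g' + 1) :=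
  hg.adj.add LinearMap.isAdjointPair_one

lemma IsometryPair.inv_add_one (hg : IsometryPair f g g') : g' + 1 = g' * (g + 1) := by
  rw [mul_add, hg.inv_mul, mul_one, add_comm]

lemma IsometryPair.det_eq_one_of_isUnit_add_one [FiniteDimensional K V] (hf : IsQuadSpace f)
    (hg : IsometryPair f g g') (hu : IsUnit (g + 1)) : LinearMap.det g = 1 := by
  have hdet := hg.adj_add_one.det_eq hf
  rw [hg.inv_add_one, map_mul, eq_comm, mul_eq_right₀ (hu.map LinearMap.det).ne_zero] at hdet
  simpa [hdet] using hg.det_mul_det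

lemma det_eq_of_isNilpotent_add_one [FiniteDimensional K V] (h : IsNilpotent (g + 1)) :
    LinearMap.det g = (-1) ^ finrank K V := by
  have hcharpoly := LinearMap.eval_charpoly (g + 1) 1
  rw [h.charpoly_eq_X_pow_finrank, map_one, ← sub_sub, sub_right_comm, sub_self, zero_sub,
    ← neg_one_smul K g, LinearMap.det_smul, eval_pow, eval_X, one_pow] at hcharpoly
  rw [← inv_neg_one, inv_pow]
  exact eq_inv_of_mul_eq_one_right hcharpoly.symm

lemma exists_orthSum_fitting [FiniteDimensional K V] (hf : IsQuadSpace f) (ht : AdjPair f t t')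
    (hker : ∀ n x, (t ^ n) x = 0 → (t' ^ n) x = 0) :
    ∃ (U W : Submodule K V) (D : OrthSum f (f.restrict U) (f.restrict W)),
      (∀ X, Commute X t → ∃ x, D.glue x = X) ∧
        ∀ y, D.glue y = t → IsNilpotent y.1 ∧ IsUnit y.2 := by
  obtain ⟨k, hk⟩ := Filter.eventually_atTop.mp (LinearMap.eventually_isCompl_ker_pow_range_pow t)
  have hcompl := hk (k + 1) k.le_succ
  have horth : ∀ u ∈ LinearMap.ker (t ^ (k + 1)), ∀ w ∈ LinearMap.range (t ^ (k + 1)),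
      f u w = 0 := by
    rintro u hu _ ⟨w, rfl⟩
    rw [hf.symm, ht.pow, hker _ _ hu, map_zero]
  let D := OrthSum.ofIsCompl hf hcompl horth
  refine ⟨_, _, D, fun X hX => ?_, fun y hy => ⟨⟨k + 1, LinearMap.ext fun u => ?_⟩, ?_⟩⟩
  · have hXt (x : V) : X ((t ^ (k + 1)) x) = (t ^ (k + 1)) (X x) :=
      LinearMap.congr_fun (hX.pow_right (k + 1)) x
    refine OrthSum.exists_glue_ofIsCompl hf hcompl horth (fun x hx => ?_) ?_
    · rw [LinearMap.mem_ker] at hx ⊢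
      rw [← hXt, hx, map_zero]
    · rintro _ ⟨x, rfl⟩
      exact ⟨X x, (hXt x).symm⟩
  · have hu : D.glue (y ^ (k + 1)) (D.equiv (u, 0)) = 0 := by
      rw [map_pow, hy]
      simp [D, OrthSum.ofIsCompl]
    rw [OrthSum.glue_apply, LinearEquiv.map_eq_zero_iff] at hu
    exact congrArg Prod.fst hu
  · rw [← isUnit_pow_iff k.succ_ne_zero, LinearMap.isUnit_iff_ker_eq_bot, LinearMap.ker_eq_bot']
    intro w hw
    have hwker : (t ^ (k + 1)) w = 0 := by
      have h0 := D.glue_apply (y ^ (k + 1)) (0, w)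
      rw [map_pow, hy, map_zero, Prod.pow_snd, hw, ← Prod.zero_eq_mk, map_zero] at h0
      simpa [D, OrthSum.ofIsCompl] using h0
    exact Subtype.ext (Submodule.disjoint_def.mp hcompl.disjoint _ hwker w.2)

lemma OrthSum.exists_isometryPair_left [FiniteDimensional K A] (D : OrthSum f fA fB)
    (hf : IsQuadSpace f) {x : End K A × End K B} (hx : IsometryPair f (D.glue x) g') :
    ∃ y, IsometryPair fA x.1 y :=
  IsometryPair.of_map_map (D.isQuadSpace_left hf) fun a a' => by
    simpa [D.glue_apply, D.form_apply] using hx.map_map (D.equiv (a, 0)) (D.equiv (a', 0))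

lemma OrthSum.exists_isometryPair_right [FiniteDimensional K B] (D : OrthSum f fA fB)
    (hf : IsQuadSpace f) {x : End K A × End K B} (hx : IsometryPair f (D.glue x) g') :
    ∃ y, IsometryPair fB x.2 y := by
  rw [← D.swap_glue] at hx
  exact D.swap.exists_isometryPair_left hf hx

lemma IsometryPair.exists_orthSum_det_eq [FiniteDimensional K V] (hf : IsQuadSpace f)
    (hg : IsometryPair f g g') :
    ∃ (U W : Submodule K V) (D : OrthSum f (f.restrict U) (f.restrict W)),
      (∀ X, Commute X g → ∃ x, D.glue x = X) ∧ LinearMap.det g = (-1) ^ finrank K U := by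
  have hcomm : Commute g' (g + 1) := .add_right (hg.inv_mul.trans hg.mul_inv.symm) (.one_right g')
  obtain ⟨U, W, D, hglue, hsplit⟩ :=
    exists_orthSum_fitting hf hg.adj_add_one fun n x hx => by
      rw [hg.inv_add_one, hcomm.mul_pow, End.mul_apply, hx, map_zero]
  have hglue' (X : End K V) (hX : Commute X g) : ∃ x, D.glue x = X :=
    hglue X (hX.add_right (.one_right X))
  obtain ⟨y, rfl⟩ := hglue' g (.refl g)
  obtain ⟨hnil, hunit⟩ := hsplit (y + 1) (by rw [map_add, map_one])
  obtain ⟨_, hy⟩ := D.exists_isometryPair_right hf hg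
  refine ⟨U, W, D, hglue', ?_⟩
  rw [D.det_glue, det_eq_of_isNilpotent_add_one hnil,
    hy.det_eq_one_of_isUnit_add_one (D.isQuadSpace_right hf) hunit, mul_one]

variable {b α α' : End K V}

lemma IsReverser.exists_odd_summand [FiniteDimensional K V] (hf : IsQuadSpace f)
    (hb : IsReverser f c N b) (hα : IsometryPair f α α') (hαc : α * c = c * α)
    (hαN : α * N = -(N * α)) (hdet : LinearMap.det α ≠ LinearMap.det b) :
    ∃ (U W : Submodule K V) (D : OrthSum f (f.restrict U) (f.restrict W))
      (c' N' : End K U × End K W), D.glue c' = c ∧ D.glue N' = N ∧ Odd (finrank K U) := by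
  obtain ⟨U, W, D, hglue, hdetU⟩ := (hα.mul hb.isometryPair).exists_orthSum_det_eq hf
  have hcαb : c * (α * b) = α * b * c := by
    rw [← mul_assoc, ← hαc, mul_assoc, ← hb.mul_c, mul_assoc]
  have hNαb : N * (α * b) = α * b * N := by
    rw [mul_assoc, hb.mul_N, mul_neg, ← mul_assoc, ← mul_assoc, hαN, neg_mul, neg_neg]
  obtain ⟨c', hc'⟩ := hglue c hcαb
  obtain ⟨N', hN'⟩ := hglue N hNαb
  refine ⟨U, W, D, c', N', hc', hN', Nat.not_even_iff_odd.mp fun heven => hdet ?_⟩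
  rw [map_mul, heven.neg_one_pow] at hdetU
  exact mul_right_cancel₀ (left_ne_zero_of_mul_eq_one hb.isometryPair.det_mul_det)
    (hdetU.trans hb.isometryPair.det_mul_det.symm)

lemma IsReverser.det_eq_of_isUnit [FiniteDimensional K V] (h2 : (2 : K) ≠ 0)
    (hf : IsQuadSpace f) (hN : AdjPair f N (-N)) (hNu : IsUnit N) (hb : IsReverser f c N b)
    (hα : IsometryPair f α α') (hαc : α * c = c * α) (hαN : α * N = -(N * α)) :
    LinearMap.det α = LinearMap.det b := by
  by_contra hdet
  obtain ⟨U, W, D, _, N', -, rfl, hodd⟩ := hb.exists_odd_summand hf hα hαc hαN hdet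
  rw [← map_neg] at hN
  have hNu' : IsUnit N'.1 := by
    rw [LinearMap.isUnit_iff_isUnit_det]
    exact isUnit_of_mul_isUnit_left (D.det_glue N' ▸ hNu.map LinearMap.det)
  exact Nat.not_even_iff_odd.mpr hodd <| even_finrank_of_skew h2 (D.isQuadSpace_left hf)
    (D.adjPair_glue_iff.mp hN).1 hNu'

lemma IsReverser.neg (hb : IsReverser f c N b) : IsReverser f c N (-b) :=
  ⟨hb.adj.neg, by rw [neg_mul_neg, hb.mul_self], by rw [neg_mul, mul_neg, hb.mul_c],
    by rw [neg_mul, mul_neg, hb.mul_N]⟩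

lemma RevSystem.exists_isReverser_det_eq_neg_one [FiniteDimensional K A] [FiniteDimensional K B]
    (h2 : (2 : K) ≠ 0) {D : OrthSum f fA fB}
    {c N : End K A × End K B} (S : RevSystem f (D.glue c) (D.glue N) 1 1 1 1)
    (hodd : Odd (finrank K A)) :
    ∃ b, IsReverser f (D.glue c) (D.glue N) b ∧ LinearMap.det b = -1 := by
  rw [← map_one D.glue] at S
  obtain ⟨bA, hbA⟩ := RevSystem.exists_isReverser h2 S.left
  obtain ⟨bB, hbB⟩ := RevSystem.exists_isReverser h2 S.right
  have hb := IsReverser.glue D (b := (bA, bB)) hbA hbB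
  have hdet := hb.isometryPair.det_mul_det
  obtain hdet | hdet := mul_self_eq_one_iff.mp hdet
  · refine ⟨_, IsReverser.glue D (b := (-bA, bB)) hbA.neg hbB, ?_⟩
    rw [D.det_glue] at hdet ⊢
    rw [← neg_one_smul K bA, LinearMap.det_smul, hodd.neg_one_pow, mul_assoc, hdet, mul_one]
  · exact ⟨_, hb, hdet⟩

end Determinant

/-! ### Systems with an additional reversing isometry -/

section Combination

variable {f : LinearMap.BilinForm K V} {fA : LinearMap.BilinForm K A}
  {fB : LinearMap.BilinForm K B} {c N s : End K V}

lemma InReflectionCoset.det_eq_neg_one [FiniteDimensional K V] {d : K} {g : End K V}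
    (hd : d ≠ 0) (hg : InReflectionCoset f d g) : LinearMap.det g = -1 := by
  obtain ⟨x, rfl, hxg⟩ := hg
  have hdet := hxg.det
  rw [map_mul, det_hyperplaneReflection hd, neg_one_mul] at hdet
  exact neg_eq_iff_eq_neg.mp hdet

lemma OrthSum.isNilpotent_of_glue (D : OrthSum f fA fB) {x : End K A × End K B}
    (hx : IsNilpotent (D.glue x)) : IsNilpotent x.1 ∧ IsNilpotent x.2 := by
  have hx := (IsNilpotent.map_iff D.glue_injective).mp hx
  exact ⟨hx.map (RingHom.fst _ _), hx.map (RingHom.snd _ _)⟩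

lemma RevSystem.hasOmegaReverser_of_isNilpotent_of_isIndecomposable [FiniteDimensional K V]
    [Nontrivial V] (h2 : (2 : K) ≠ 0) (S : RevSystem f c N s (-1) 1 1)
    (hI : IsIndecomposable f c N s) (hN : IsNilpotent N) : HasOmegaReverser f c N := by
  have hΩ (a : K) (ha : a ≠ 0) (hca : ¬ IsUnit (aeval c (X + C a))) : HasOmegaReverser f c N := by
    refine S.hasOmegaReverser_of_isUnit_add h2 hI hca ?_
    have htrace : X + C a + (X + C a).comp (-X) = C (2 * a) := by
      rw [add_comp, X_comp, C_comp, two_mul, C_add]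
      ring
    rw [htrace, aeval_C]
    exact (mul_ne_zero h2 ha).isUnit.map _
  have hfactor : aeval c (X + C (2 : K)) * aeval c (X + C (-2 : K)) = N * N := by
    rw [S.N_mul_N, ← map_mul, C_neg, ← sub_eq_add_neg, ← sq_sub_sq, ← C_pow, map_sub, map_pow,
      aeval_X, aeval_C, Algebra.algebraMap_eq_smul_one, sq]
    norm_num
  by_cases hplus : IsUnit (aeval c (X + C (2 : K)))
  · refine hΩ (-2) (neg_ne_zero.mpr h2) fun hminus => ?_
    exact hN.not_isUnit ((Commute.refl N).isUnit_mul_iff.mp (hfactor ▸ hplus.mul hminus)).1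
  · exact hΩ 2 h2 hplus

lemma RevSystem.hasOmegaReverser_of_isNilpotent [FiniteDimensional K V] (h2 : (2 : K) ≠ 0)
    (S : RevSystem f c N s (-1) 1 1) (hN : IsNilpotent N) : HasOmegaReverser f c N := by
  refine RevSystem.induction (P := fun _ _ _ f c N _ => IsNilpotent N → HasOmegaReverser f c N)
    ?_ ?_ ?_ V f c N s S hN
  · intro V A B _ _ _ _ _ _ _ _ f fA fB D c N _ _ hA hB hN
    obtain ⟨hNA, hNB⟩ := D.isNilpotent_of_glue hN
    exact (hA hNA).glue D (hB hNB)
  · exact fun V _ _ _ f c N _ _ => ⟨1, isReverser_of_subsingleton f c N, .one⟩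
  · exact fun V _ _ _ _ f c N s S hI hN =>
      S.hasOmegaReverser_of_isNilpotent_of_isIndecomposable h2 hI hN

lemma hasOmegaReverser_or_hasReflectionReversers_glue (h2 : (2 : K) ≠ 0) (hf : IsQuadSpace f)
    (D : OrthSum f fA fB) {c N : End K A × End K B}
    (hA : HasOmegaReverser fA c.1 N.1 ∨ HasReflectionReversers fA c.1 N.1)
    (hB : HasOmegaReverser fB c.2 N.2 ∨ HasReflectionReversers fB c.2 N.2) :
    HasOmegaReverser f (D.glue c) (D.glue N) ∨ HasReflectionReversers f (D.glue c) (D.glue N) := by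
  obtain hA | hA := hA <;> obtain hB | hB := hB
  · exact .inl (hA.glue D hB)
  · obtain ⟨bA, hbA, hΩA⟩ := hA
    refine .inr fun ε hε => ?_
    obtain ⟨bB, hbB, hrefl⟩ := hB ε hε
    exact ⟨_, IsReverser.glue D (b := (bA, bB)) hbA hbB, hrefl.glue_right D hΩA⟩
  · obtain ⟨bB, hbB, hΩB⟩ := hB
    refine .inr fun ε hε => ?_
    obtain ⟨bA, hbA, hrefl⟩ := hA ε hε
    exact ⟨_, IsReverser.glue D (b := (bA, bB)) hbA hbB, hrefl.glue_left D hΩB⟩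
  · obtain ⟨bA, hbA, hreflA⟩ := hA 1 (.inl rfl)
    obtain ⟨bB, hbB, hreflB⟩ := hB 1 (.inl rfl)
    exact .inl ⟨_, IsReverser.glue D (b := (bA, bB)) hbA hbB,
      hreflA.inOmega_glue h2 hf D one_ne_zero hreflB⟩

lemma HasOmegaReverser.exists_reflectionReverser [FiniteDimensional K V] (h2 : (2 : K) ≠ 0)
    (hsq : ∀ d : K, ∃ a, d = a * a ∨ d = -(a * a)) (S : RevSystem f c N 1 1 1 1)
    (hΩ : HasOmegaReverser f c N) {α α' : End K V} (hα : IsometryPair f α α')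
    (hdet : LinearMap.det α ≠ 1) (hαc : α * c = c * α) (hαN : α * N = -(N * α)) :
    ∃ ε : K, (ε = 1 ∨ ε = -1) ∧ ∃ b, IsReverser f c N b ∧ InReflectionCoset f ε b := by
  obtain ⟨b, hb, hbΩ⟩ := hΩ
  rw [← hbΩ.det] at hdet
  obtain ⟨U, W, D, c, N, rfl, rfl, hodd⟩ := hb.exists_odd_summand S.quad hα hαc hαN hdet
  obtain ⟨b', hb', hdet'⟩ := S.exists_isReverser_det_eq_neg_one h2 hodd
  obtain ⟨ε, hε, hrefl⟩ := inReflectionCoset_of_involution h2 hsq S.quad hb'.adj hb'.mul_self hdet'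
  exact ⟨ε, hε, b', hb', hrefl⟩

theorem RevSystem.hasOmegaReverser_or_hasReflectionReversers [Finite K] [FiniteDimensional K V]
    (h2 : (2 : K) ≠ 0) (hm1 : ∀ a b : K, a * a + b * b = 0 → a = 0)
    (hsq : ∀ d : K, ∃ a, d = a * a ∨ d = -(a * a))
    (S : RevSystem f c N s (-1) 1 1) : HasOmegaReverser f c N ∨ HasReflectionReversers f c N := by
  refine RevSystem.induction
    (P := fun _ _ _ f c N _ => HasOmegaReverser f c N ∨ HasReflectionReversers f c N)
    ?_ ?_ ?_ V f c N s S
  · exact fun V A B _ _ _ _ _ _ _ _ f fA fB D c N _ hf hA hB =>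
      hasOmegaReverser_or_hasReflectionReversers_glue h2 hf D hA hB
  · exact fun V _ _ _ f c N _ => .inl ⟨1, isReverser_of_subsingleton f c N, .one⟩
  · intro V _ _ _ _ f c N s S hI
    obtain hN | hN := hI.isNilpotent_or_isUnit S.quad (t := N) (δ := -1) (a₁ := 1) (a₂ := 1)
      (a₃ := 1) (by rw [neg_one_smul]; exact S.adj_N) (by rw [one_smul, S.comm])
      (by rw [one_smul]) (by rw [S.s_mul_N, one_smul, one_smul])
    · exact .inl (S.hasOmegaReverser_of_isNilpotent_of_isIndecomposable h2 hI hN)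
    · exact S.hasOmegaReverser_or_hasReflectionReversers_of_isUnit h2 hm1 hsq hI hN

variable {α α' : End K V}

lemma RevSystem.hasOmegaReverser_glue_of_reversing_isometry [Finite K] [FiniteDimensional K A]
    [FiniteDimensional K B] (h2 : (2 : K) ≠ 0) (hm1 : ∀ a b : K, a * a + b * b = 0 → a = 0)
    (hsq : ∀ d : K, ∃ a, d = a * a ∨ d = -(a * a))
    {D : OrthSum f fA fB} {c N s α : End K A × End K B}
    (S : RevSystem f (D.glue c) (D.glue N) (D.glue s) (-1) 1 1) (hNA : IsNilpotent N.1)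
    (hNB : IsUnit N.2) (hα : IsometryPair f (D.glue α) α') (hdet : LinearMap.det (D.glue α) = 1)
    (hαc : α * c = c * α) (hαN : α * N = -(N * α)) :
    HasOmegaReverser f (D.glue c) (D.glue N) := by
  have hΩA := S.left.hasOmegaReverser_of_isNilpotent h2 hNA
  obtain hΩB | hreflB := S.right.hasOmegaReverser_or_hasReflectionReversers h2 hm1 hsq
  · exact hΩA.glue D hΩB
  obtain ⟨αA', hαA⟩ := D.exists_isometryPair_left S.quad hα
  obtain ⟨αB', hαB⟩ := D.exists_isometryPair_right S.quad hα
  have hdetB : LinearMap.det α.2 = -1 := by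
    obtain ⟨b, hb, hrefl⟩ := hreflB 1 (.inl rfl)
    rw [hb.det_eq_of_isUnit h2 S.right.quad S.right.adj_N hNB hαB (congrArg Prod.snd hαc)
      (congrArg Prod.snd hαN), hrefl.det_eq_neg_one one_ne_zero]
  have hdetA : LinearMap.det α.1 ≠ 1 := fun hdetA => by
    rw [D.det_glue, hdetA, hdetB, one_mul, neg_eq_iff_add_eq_zero, one_add_one_eq_two] at hdet
    exact h2 hdet
  obtain ⟨ε, hε, bA, hbA, hreflA⟩ := hΩA.exists_reflectionReverser h2 hsq S.left.forget_s hαA hdetA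
    (congrArg Prod.fst hαc) (congrArg Prod.fst hαN)
  obtain ⟨bB, hbB, hreflB⟩ := hreflB ε hε
  have hε0 : ε ≠ 0 := by rintro rfl; simp at hε
  exact ⟨_, IsReverser.glue D (b := (bA, bB)) hbA hbB, hreflA.inOmega_glue h2 S.quad D hε0 hreflB⟩

theorem RevSystem.hasOmegaReverser_of_reversing_isometry [Finite K] [FiniteDimensional K V]
    (h2 : (2 : K) ≠ 0) (hm1 : ∀ a b : K, a * a + b * b = 0 → a = 0)
    (hsq : ∀ d : K, ∃ a, d = a * a ∨ d = -(a * a))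
    (S : RevSystem f c N s (-1) 1 1) (hα : IsometryPair f α α') (hdet : LinearMap.det α = 1)
    (hαc : α * c = c * α) (hαN : α * N = -(N * α)) : HasOmegaReverser f c N := by
  obtain ⟨U, W, D, hglue, hsplit⟩ := exists_orthSum_fitting S.quad
    (by simpa using S.adj_N.mul S.adj_N : AdjPair f (N * N) (N * N)) fun _ _ => id
  have hcNN : Commute c (N * N) := .mul_right S.comm S.comm
  have hsN : Commute s N := by rw [commute_iff_eq, S.s_mul_N, one_smul]
  have hαNN : Commute α (N * N) := by
    rw [commute_iff_eq, ← mul_assoc, hαN, neg_mul, mul_assoc, hαN, mul_neg, neg_neg, mul_assoc]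
  obtain ⟨c, rfl⟩ := hglue c hcNN
  obtain ⟨s, rfl⟩ := hglue s (hsN.mul_right hsN)
  obtain ⟨α, rfl⟩ := hglue α hαNN
  obtain ⟨N, rfl⟩ := hglue N (.mul_right (.refl N) (.refl N))
  obtain ⟨hNA, hNB⟩ := hsplit (N * N) (map_mul ..)
  rw [← map_mul, ← map_mul] at hαc
  rw [← map_mul, ← map_mul, ← map_neg] at hαN
  refine S.hasOmegaReverser_glue_of_reversing_isometry h2 hm1 hsq ?_ ?_ hα hdet
    (D.glue_injective hαc) (D.glue_injective hαN)
  · exact (IsNilpotent.pow_iff_pos two_ne_zero).mp ((sq N.1).symm ▸ hNA)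
  · exact ((Commute.refl N.2).isUnit_mul_iff.mp hNB).1

end Combination

/-! ### Squares in a field without a square root of `-1` -/

section Squares

lemma two_ne_zero_of_not_isSquare_neg_one (hm1 : ¬ IsSquare (-1 : K)) : (2 : K) ≠ 0 := fun h2 =>
  hm1 ⟨1, by linear_combination -h2⟩

lemma eq_zero_of_mul_self_add_mul_self_eq_zero (hm1 : ¬ IsSquare (-1 : K)) (a b : K)
    (hab : a * a + b * b = 0) : a = 0 := by
  by_contra ha
  exact hm1 ⟨b / a, by field_simp; linear_combination -hab⟩

lemma exists_eq_mul_self_or_eq_neg_mul_self [Finite K] (hm1 : ¬ IsSquare (-1 : K)) (d : K) :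
    ∃ a, d = a * a ∨ d = -(a * a) := by
  classical
  have := Fintype.ofFinite K
  by_cases hd : IsSquare d
  · exact hd.imp fun _ => .inl
  have hchar : quadraticChar K (-d) = 1 := by
    rw [← neg_one_mul, map_mul, quadraticChar_neg_one_iff_not_isSquare.mpr hm1,
      quadraticChar_neg_one_iff_not_isSquare.mpr hd, neg_mul_neg, one_mul]
  have hd0 : -d ≠ 0 := neg_ne_zero.mpr fun h0 => hd (h0 ▸ .zero)
  obtain ⟨a, ha⟩ := (quadraticChar_one_iff_isSquare hd0).mp hchar
  exact ⟨a, .inr (neg_eq_iff_eq_neg.mp ha)⟩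

end Squares

/-! ### Products of two involutions up to sign -/

section Products

variable {f : LinearMap.BilinForm K V} {P P' s s' t : End K V} {e e₁ e₂ e₃ r : K}

lemma IsometryPair.adj_of_mul_self_eq_smul (hs : IsometryPair f s s') (he : e * e = 1)
    (hss : s * s = e • 1) : AdjPair f s (e • s) := by
  have hs' : s' = e • s := calc
    s' = s' * (s * (e • s)) := by rw [mul_smul_comm, hss, smul_smul, he, one_smul, mul_one]
    _ = e • s := by rw [← mul_assoc, hs.inv_mul, one_mul]
  exact hs' ▸ hs.adj

lemma IsometryPair.mul_inv_eq_smul (hP : IsometryPair f P P') (hr : r * r = 1)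
    (hsP : s * P = r • (P' * s)) : s * P' = r • (P * s) := calc
  s * P' = r • (P * (r • (P' * s)) * P') := by
    rw [mul_smul_comm, smul_mul_assoc, smul_smul, hr, one_smul, ← mul_assoc P, hP.mul_inv, one_mul]
  _ = r • (P * s) := by rw [← hsP, mul_assoc, mul_assoc s, hP.mul_inv, mul_one]

lemma RevSystem.of_isometryPair (hf : IsQuadSpace f) (hP : IsometryPair f P P')
    (hs : AdjPair f s (e • s)) (hss : s * s = e • 1) (hr : r * r = 1)
    (hsP : s * P = r • (P' * s)) : RevSystem f (P + P') (P - P') s r (-r) e := by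
  have hsP' := hP.mul_inv_eq_smul hr hsP
  refine ⟨hf, ?_, ?_, hs, ?_, ?_, ?_, ?_, hss⟩
  · have hadd : AdjPair f (P + P') (P' + P) := hP.adj.add hP.symm.adj
    rwa [add_comm P'] at hadd
  · rw [neg_sub]
    exact hP.adj.sub hP.symm.adj
  · simp only [mul_add, mul_sub, add_mul, sub_mul, hP.mul_inv, hP.inv_mul]
    abel
  · simp only [mul_add, mul_sub, add_mul, sub_mul, hP.mul_inv, hP.inv_mul]
    module
  · rw [mul_add, hsP, hsP', add_mul, ← smul_add, add_comm]
  · rw [mul_sub, hsP, hsP', sub_mul, neg_smul, ← smul_neg, ← smul_sub, neg_sub]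

lemma RevSystem.isReverser (S : RevSystem f P P' s 1 (-1) 1) : IsReverser f P P' s where
  adj := by simpa using S.adj_s
  mul_self := by simpa using S.s_mul_s
  mul_c := by simpa using S.s_mul_c
  mul_N := by simpa using S.s_mul_N

lemma eq_smul_mul_of_mul_eq_one (he₁ : e₁ * e₁ = 1) (he₂ : e₂ * e₂ = 1) (he₃ : e₃ * e₃ = 1)
    (hss : s * s = e₁ • 1) (htt : t * t = e₂ • 1) (hP : P' * (e₃ • (s * t)) = 1) :
    P' = (e₁ * e₂ * e₃) • (t * s) := by
  have hst : s * t * (t * s) = (e₁ * e₂) • 1 := by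
    rw [mul_assoc, ← mul_assoc t, htt, smul_mul_assoc, one_mul, mul_smul_comm, hss, smul_smul,
      mul_comm]
  have hscal : e₃ * (e₁ * e₂ * e₃) * (e₁ * e₂) = 1 := by
    linear_combination e₁ * e₁ * e₂ * e₂ * he₃ + e₂ * e₂ * he₁ + he₂
  calc P' = P' * (e₃ • (s * t)) * ((e₁ * e₂ * e₃) • (t * s)) := by
        rw [mul_assoc, smul_mul_smul_comm, hst, smul_smul, hscal, one_smul, mul_one]
    _ = _ := by rw [hP, one_mul]

lemma mul_smul_mul_eq_left (he₁ : e₁ * e₁ = 1) (he₂ : e₂ * e₂ = 1) (hss : s * s = e₁ • 1) :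
    s * (e₃ • (s * t)) = (e₁ * e₂) • ((e₁ * e₂ * e₃) • (t * s) * s) := by
  rw [mul_smul_comm, ← mul_assoc, hss, smul_mul_assoc, one_mul, smul_mul_assoc, mul_assoc t, hss,
    mul_smul_comm, mul_one, smul_smul, smul_smul, smul_smul]
  congr 1
  linear_combination -(e₁ * e₃) * (e₁ * e₁ * he₂ + he₁)

lemma mul_smul_mul_eq_right (he₁ : e₁ * e₁ = 1) (he₂ : e₂ * e₂ = 1) :
    t * (e₃ • (s * t)) = (e₁ * e₂) • ((e₁ * e₂ * e₃) • (t * s) * t) := by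
  rw [mul_smul_comm, ← mul_assoc, smul_mul_assoc, smul_smul]
  congr 1
  linear_combination -e₃ * (e₁ * e₁ * he₂ + he₁)

lemma IsReverser.mul_eq_inv_mul (h2 : (2 : K) ≠ 0) (hs : IsReverser f (P + P') (P - P') s) :
    s * P = P' * s := by
  have hsum : (2 : K) • (s * P) = (2 : K) • (P' * s) := calc
    (2 : K) • (s * P) = s * (P + P') + s * (P - P') := by rw [mul_add, mul_sub]; module
    _ = (2 : K) • (P' * s) := by rw [hs.mul_c, hs.mul_N, add_mul, sub_mul]; module
  exact smul_right_injective _ h2 hsum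

theorem hasOmegaReverser_of_smul_involutions [Finite K] [FiniteDimensional K V]
    (hm1 : ¬ IsSquare (-1 : K)) (hf : IsQuadSpace f) (hs : InOmega f s) (ht : InOmega f t)
    (he₁ : e₁ * e₁ = 1) (he₂ : e₂ * e₂ = 1) (he₃ : e₃ * e₃ = 1) (hss : s * s = e₁ • 1)
    (htt : t * t = e₂ • 1) (hst : P = e₃ • (s * t)) (hP : IsometryPair f P P')
    {α α' : End K V} (hα : IsometryPair f α α') (hdet : LinearMap.det α = 1)
    (hαP : α * P = P' * α) : HasOmegaReverser f (P + P') (P - P') := by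
  have h2 := two_ne_zero_of_not_isSquare_neg_one hm1
  have hsum := eq_zero_of_mul_self_add_mul_self_eq_zero hm1
  have hsq := exists_eq_mul_self_or_eq_neg_mul_self hm1
  have hαP' := hP.mul_inv_eq_smul (one_mul (1 : K)) (hαP.trans (one_smul K _).symm)
  have hαc : α * (P + P') = (P + P') * α := by rw [mul_add, hαP, hαP', one_smul, add_mul, add_comm]
  have hαN : α * (P - P') = -((P - P') * α) := by
    rw [mul_sub, hαP, hαP', one_smul, sub_mul, neg_sub]
  have he : e₁ * e₂ * (e₁ * e₂) = 1 := by rw [mul_mul_mul_comm, he₁, he₂, one_mul]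
  have hP' := eq_smul_mul_of_mul_eq_one he₁ he₂ he₃ hss htt (hst ▸ hP.inv_mul)
  have hsP : s * P = (e₁ * e₂) • (P' * s) := by
    rw [hst, hP', mul_smul_mul_eq_left he₁ he₂ hss]
  have htP : t * P = (e₁ * e₂) • (P' * t) := by
    rw [hst, hP', mul_smul_mul_eq_right he₁ he₂]
  obtain ⟨_, hs'⟩ := hs.exists_isometryPair
  obtain ⟨_, ht'⟩ := ht.exists_isometryPair
  have Ss := RevSystem.of_isometryPair hf hP (hs'.adj_of_mul_self_eq_smul he₁ hss) hss he hsP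
  have St := RevSystem.of_isometryPair hf hP (ht'.adj_of_mul_self_eq_smul he₂ htt) htt he htP
  obtain rfl | rfl := mul_self_eq_one_iff.mp he₁ <;> obtain rfl | rfl := mul_self_eq_one_iff.mp he₂
  · rw [one_mul] at Ss
    exact ⟨s, Ss.isReverser, hs⟩
  · rw [one_mul, neg_neg] at Ss
    exact Ss.hasOmegaReverser_of_reversing_isometry h2 hsum hsq hα hdet hαc hαN
  · rw [mul_one, neg_neg] at St
    exact St.hasOmegaReverser_of_reversing_isometry h2 hsum hsq hα hdet hαc hαN
  · rw [neg_mul_neg, one_mul] at Ss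
    exact Ss.hasOmegaReverser_of_skew h2 hsum

end Products

/-! ### Bireflectionality in quotients -/

lemma IsBireflectionalIn.isBireflectional_mk {G : Type*} [Group G] {H : Subgroup G} {g : G}
    (h : IsBireflectionalIn H g) (hg : g ∈ H) (M : Subgroup H) [M.Normal] :
    IsBireflectional (QuotientGroup.mk ⟨g, hg⟩ : H ⧸ M) := by
  obtain ⟨σ, τ, hσ, hτ, hσσ, hττ, rfl⟩ := h
  refine ⟨QuotientGroup.mk ⟨σ, hσ⟩, QuotientGroup.mk ⟨τ, hτ⟩, ?_, ?_, rfl⟩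
  · exact congrArg QuotientGroup.mk (Subtype.ext hσσ : (⟨σ, hσ⟩ : H) ^ 2 = 1)
  · exact congrArg QuotientGroup.mk (Subtype.ext hττ : (⟨τ, hτ⟩ : H) ^ 2 = 1)

lemma isBireflectionalIn_of_mul_eq_inv_mul {G : Type*} [Group G] {H : Subgroup G} {g σ : G}
    (hg : g ∈ H) (hσ : σ ∈ H) (hσσ : σ * σ = 1) (hσg : σ * g = g⁻¹ * σ) :
    IsBireflectionalIn H g := by
  refine ⟨σ, σ * g, hσ, mul_mem hσ hg, by rw [pow_two, hσσ], ?_, ?_⟩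
  · calc (σ * g) ^ 2 = g⁻¹ * (σ * σ) * g := by rw [pow_two]; nth_rw 1 [hσg]; simp only [mul_assoc]
      _ = 1 := by rw [hσσ, mul_one, inv_mul_cancel]
  · rw [← mul_assoc, hσσ, one_mul]

section Omega

variable {f : LinearMap.BilinForm K V} {φ : V ≃ₗ[K] V}

lemma isBireflectionalIn_omegaGroup_of_hasOmegaReverser (h2 : (2 : K) ≠ 0)
    (hφ : φ ∈ omegaGroup f)
    (hΩ : HasOmegaReverser f ((φ : End K V) + (φ⁻¹ : V ≃ₗ[K] V)) (φ - (φ⁻¹ : V ≃ₗ[K] V))) :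
    IsBireflectionalIn (omegaGroup f) φ := by
  obtain ⟨_, hb, e, he, rfl⟩ := hΩ
  exact isBireflectionalIn_of_mul_eq_inv_mul hφ he (LinearEquiv.toLinearMap_injective hb.mul_self)
    (LinearEquiv.toLinearMap_injective (hb.mul_eq_inv_mul h2))

lemma exists_eq_smul_one_of_mem_pmOne {x : omegaGroup f} (hx : x ∈ pmOne f) :
    ∃ e : K, e * e = 1 ∧ ((x : V ≃ₗ[K] V) : End K V) = e • 1 := by
  obtain hx | hx := hx
  · exact ⟨1, one_mul 1, LinearMap.ext fun v => by simp [hx]⟩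
  · exact ⟨-1, by ring, LinearMap.ext fun v => by simp [hx]⟩

lemma exists_eq_smul_mul_of_isBireflectional_mk (hφ : φ ∈ omegaGroup f)
    (h : IsBireflectional (QuotientGroup.mk ⟨φ, hφ⟩ : omegaGroup f ⧸ pmOne f)) :
    ∃ (s t : End K V) (e₁ e₂ e₃ : K), InOmega f s ∧ InOmega f t ∧ e₁ * e₁ = 1 ∧ e₂ * e₂ = 1 ∧
      e₃ * e₃ = 1 ∧ s * s = e₁ • 1 ∧ t * t = e₂ • 1 ∧ (φ : End K V) = e₃ • (s * t) := by
  obtain ⟨σ, τ, hσσ, hττ, hστ⟩ := h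
  obtain ⟨σ, rfl⟩ := QuotientGroup.mk_surjective σ
  obtain ⟨τ, rfl⟩ := QuotientGroup.mk_surjective τ
  rw [← QuotientGroup.mk_pow, QuotientGroup.eq_one_iff, pow_two] at hσσ hττ
  rw [← QuotientGroup.mk_mul, eq_comm, QuotientGroup.eq] at hστ
  obtain ⟨e₁, he₁, hs⟩ := exists_eq_smul_one_of_mem_pmOne hσσ
  obtain ⟨e₂, he₂, ht⟩ := exists_eq_smul_one_of_mem_pmOne hττ
  obtain ⟨e₃, he₃, hst⟩ := exists_eq_smul_one_of_mem_pmOne hστ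
  refine ⟨σ, τ, e₁, e₂, e₃, ⟨σ, σ.2, rfl⟩, ⟨τ, τ.2, rfl⟩, he₁, he₂, he₃, hs, ht, ?_⟩
  calc (φ : End K V) = (σ * τ : V ≃ₗ[K] V) * ((σ * τ)⁻¹ * φ : V ≃ₗ[K] V) :=
        congrArg LinearEquiv.toLinearMap (mul_inv_cancel_left (σ * τ : V ≃ₗ[K] V) φ).symm
    _ = ((σ : V ≃ₗ[K] V) * (τ : V ≃ₗ[K] V) : End K V) * (e₃ • 1) :=
        congrArg (((σ : V ≃ₗ[K] V) : End K V) * ((τ : V ≃ₗ[K] V) : End K V) * ·) hst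
    _ = e₃ • ((σ : V ≃ₗ[K] V) * (τ : V ≃ₗ[K] V) : End K V) := by rw [mul_smul_comm, mul_one]

lemma omegaGroup_le_specialOrthGroup : omegaGroup f ≤ specialOrthGroup f := fun φ hφ =>
  ⟨Subgroup.commutator_le_self _ hφ, InOmega.det ⟨φ, hφ, rfl⟩⟩

theorem stmt8_general [Finite K] [FiniteDimensional K V] (hm1 : ¬ IsSquare (-1 : K))
    (hf : IsQuadSpace f) (hφ : φ ∈ omegaGroup f) (hrev : IsReversibleIn (specialOrthGroup f) φ) :
    IsBireflectionalIn (omegaGroup f) φ ↔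
      IsBireflectional (QuotientGroup.mk ⟨φ, hφ⟩ : omegaGroup f ⧸ pmOne f) := by
  refine ⟨fun h => h.isBireflectional_mk hφ _, fun h => ?_⟩
  obtain ⟨s, t, e₁, e₂, e₃, hs, ht, he₁, he₂, he₃, hss, htt, hst⟩ :=
    exists_eq_smul_mul_of_isBireflectional_mk hφ h
  obtain ⟨α, hα, hαφ⟩ := hrev
  have hφf := IsometryPair.of_mem_orthGroup (Subgroup.commutator_le_self _ hφ)
  have hαf := IsometryPair.of_mem_orthGroup hα.1
  have hαφ' := congrArg LinearEquiv.toLinearMap (mul_inv_eq_iff_eq_mul.mp hαφ)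
  exact isBireflectionalIn_omegaGroup_of_hasOmegaReverser
    (two_ne_zero_of_not_isSquare_neg_one hm1) hφ <|
    hasOmegaReverser_of_smul_involutions hm1 hf hs ht he₁ he₂ he₃ hss htt hst hφf hαf hα.2 hαφ'

end Omega

end Biref

namespace Biref

variable {K V : Type*} [Field K] [AddCommGroup V] [Module K V]

/-- For `K = GF(q)`, `q ≡ 3 (mod 4)`, and `φ ∈ Ω(V)` reversible in `Ω(V)`:
`φ` is bireflectional in `Ω(V)` iff its image in `PΩ(V) = Ω(V)/(Ω(V) ∩ {id, -id})` is
bireflectional. -/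
theorem stmt8 [Fintype K] {q : ℕ} (hq : Fintype.card K = q) (h3 : q % 4 = 3)
    [FiniteDimensional K V]
    (f : LinearMap.BilinForm K V) (hsymm : f.IsSymm) (hnd : f.Nondegenerate)
    (φ : V ≃ₗ[K] V) (hφ : φ ∈ omegaGroup f)
    (hrev : IsReversibleIn (omegaGroup f) φ) :
    IsBireflectionalIn (omegaGroup f) φ ↔
      IsBireflectional
        (QuotientGroup.mk (⟨φ, hφ⟩ : ↥(omegaGroup f)) : ↥(omegaGroup f) ⧸ pmOne f) := by
  refine stmt8_general (FiniteField.isSquare_neg_one_iff.not.mpr ?_) ⟨hsymm, hnd⟩ hφ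
    (hrev.imp fun _ hα => ⟨omegaGroup_le_specialOrthGroup hα.1, hα.2⟩)
  rw [hq, h3, not_not]

end Biref
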